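/- arXiv:1303.1917 — 8 statements merged into one kernel-verified Lean document; each statement's English description precedes it below -/
import Mathlib

section
/- Let m ≥ 2, let 1 ≤ k ≤ l with 2l ≤ m, and let M ∈ GL(m, ℂ) be a matrix satisfying A_i M = M A_i, B_i M = M B_i for all i with k ≤ i ≤ l, and C_j M = M C_j for all j with k ≤ j ≤ l − 1. Then there exists λ ∈ ℂ, λ ≠ 0, such that for all indices p, q ∈ {1, …, m}: if p or q lies in the interval [2k−1, 2l], then the (p,q) entry of M equals λ when p = q and equals 0 when p ≠ q. (Equivalently, M has the block form with middle block λ·I_{2(l−k+1)} occupying rows and columns 2k−1 through 2l, and zero off-diagonal blocks in those rows and columns.) -/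
/-- `Amat m i = diag(I_{2i-2}, V, I_{m-2i})` where `V = [[1,1],[0,1]]`
(indices `1 ≤ i`, `2i ≤ m`; the `V`-block occupies rows/columns `2i-2, 2i-1` in
0-based indexing). -/
def Amat (m i : ℕ) : Matrix (Fin m) (Fin m) ℂ :=
  Matrix.of fun p q =>
    if p = q then 1 else if (p : ℕ) = 2 * i - 2 ∧ (q : ℕ) = 2 * i - 1 then 1 else 0

/-- `Bmat m i = diag(I_{2i-2}, V̂, I_{m-2i})` where `V̂ = [[1,0],[-1,1]]`. -/
def Bmat (m i : ℕ) : Matrix (Fin m) (Fin m) ℂ :=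
  Matrix.of fun p q =>
    if p = q then 1 else if (p : ℕ) = 2 * i - 1 ∧ (q : ℕ) = 2 * i - 2 then -1 else 0

/-- `Cmat m j = diag(I_{2j-2}, W, I_{m-2-2j})` where
`W = [[1,1,0,-1],[0,1,0,0],[0,-1,1,1],[0,0,0,1]]` (the `W`-block occupies
rows/columns `2j-2, …, 2j+1` in 0-based indexing). -/
def Cmat (m j : ℕ) : Matrix (Fin m) (Fin m) ℂ :=
  Matrix.of fun p q =>
    if p = q then 1 else
    if (p : ℕ) = 2 * j - 2 ∧ (q : ℕ) = 2 * j - 1 then 1 else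
    if (p : ℕ) = 2 * j - 2 ∧ (q : ℕ) = 2 * j + 1 then -1 else
    if (p : ℕ) = 2 * j ∧ (q : ℕ) = 2 * j - 1 then -1 else
    if (p : ℕ) = 2 * j ∧ (q : ℕ) = 2 * j + 1 then 1 else 0

/-!
A matrix commuting with opposite transvections in the coordinates `i` and `j` is a scalar on
`{i, j}`: its rows and columns `i`, `j` agree with those of a scalar matrix. Applied to `A i`, `B i`
this yields one scalar for each `2 × 2` block. If `M` is the scalar `c` on `S` and `d` on `T`, and
commutes with `N`, then `c * N p q = (M * N) p q = (N * M) p q = N p q * d` for `p ∈ S`, `q ∈ T`, so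
a single nonzero entry of `N` forces `c = d`. The entry `-1` of `C j` thus identifies the scalars of
the blocks `j` and `j + 1`.
-/

open Matrix

section IsScalarOn

variable {n R : Type*} [DecidableEq n]

/-- `M` is the scalar `c` on the set `S` of coordinates: every row and every column of `M` with
index in `S` is that of the scalar matrix `c`. Entries outside these rows and columns are
arbitrary. -/
def IsScalarOn [Zero R] (M : Matrix n n R) (c : R) (S : Set n) : Prop :=
  ∀ p q, p ∈ S ∨ q ∈ S → M p q = if p = q then c else 0

theorem IsScalarOn.union [Zero R] {M : Matrix n n R} {c : R} {S T : Set n}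
    (hS : IsScalarOn M c S) (hT : IsScalarOn M c T) : IsScalarOn M c (S ∪ T) := by
  rintro p q ((hp | hp) | (hq | hq))
  exacts [hS p q (.inl hp), hT p q (.inl hp), hS p q (.inr hq), hT p q (.inr hq)]

variable [Fintype n]

section Semiring

variable [Semiring R] {M : Matrix n n R} {c : R} {S : Set n}

theorem IsScalarOn.mul_apply_of_mem (hM : IsScalarOn M c S) (N : Matrix n n R) {p : n}
    (hp : p ∈ S) (q : n) : (M * N) p q = c * N p q := by
  simp [mul_apply, hM p _ (.inl hp)]

theorem IsScalarOn.apply_mul_of_mem (hM : IsScalarOn M c S) (N : Matrix n n R) (p : n) {q : n}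
    (hq : q ∈ S) : (N * M) p q = N p q * c := by
  simp [mul_apply, hM _ q (.inr hq)]

theorem IsScalarOn.isUnit (hM : IsScalarOn M c S) (hS : S.Nonempty) (hunit : IsUnit M) :
    IsUnit c := by
  obtain ⟨p, hp⟩ := hS
  obtain ⟨N, hMN, hNM⟩ := isUnit_iff_exists.mp hunit
  refine isUnit_iff_exists.mpr ⟨N p p, ?_, ?_⟩
  · rw [← hM.mul_apply_of_mem N hp, hMN, one_apply_eq]
  · rw [← hM.apply_mul_of_mem N p hp, hNM, one_apply_eq]

theorem isScalarOn_pair_of_commute_single {i j : n} (hij : Commute (single i j 1) M)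
    (hji : Commute (single j i 1) M) : IsScalarOn M (M i i) {i, j} := by
  intro p q hpq
  split_ifs with heq
  · subst heq
    obtain rfl | rfl : p = i ∨ p = j := or_self_iff.mp hpq
    exacts [rfl, (diag_eq_of_commute_single hij).symm]
  · obtain (rfl | rfl) | (rfl | rfl) := hpq
    exacts [row_eq_zero_of_commute_single hji (Ne.symm heq),
      row_eq_zero_of_commute_single hij (Ne.symm heq),
      col_eq_zero_of_commute_single hij heq, col_eq_zero_of_commute_single hji heq]

end Semiring

theorem IsScalarOn.eq_of_commute [CommSemiring R] [IsCancelMulZero R] {M N : Matrix n n R}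
    {c d : R} {S T : Set n} (hS : IsScalarOn M c S) (hT : IsScalarOn M d T) (hMN : Commute N M)
    {p q : n} (hp : p ∈ S) (hq : q ∈ T) (hpq : N p q ≠ 0) : c = d := by
  refine mul_right_cancel₀ hpq ?_
  calc
    c * N p q = (M * N) p q := (hS.mul_apply_of_mem N hp q).symm
    _ = (N * M) p q := by rw [hMN.eq]
    _ = d * N p q := by rw [hT.apply_mul_of_mem N p hq, mul_comm]

theorem commute_single_one_of_commute_transvection [CommRing R] {M : Matrix n n R} {i j : n}
    {c : R} (hc : IsUnit c) (h : Commute (transvection i j c) M) : Commute (single i j 1) M := by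
  obtain ⟨u, rfl⟩ := hc
  have hsingle : Commute (single i j (u : R)) M := by
    simpa [transvection] using h.sub_left (Commute.one_left M)
  simpa [smul_single] using hsingle.smul_left (↑u⁻¹ : R)

theorem isScalarOn_pair_of_commute_transvection [CommRing R] {M : Matrix n n R} {i j : n}
    {a b : R} (ha : IsUnit a) (hb : IsUnit b) (hij : Commute (transvection i j a) M)
    (hji : Commute (transvection j i b) M) : IsScalarOn M (M i i) {i, j} :=
  isScalarOn_pair_of_commute_single (commute_single_one_of_commute_transvection ha hij)
    (commute_single_one_of_commute_transvection hb hji)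

end IsScalarOn

section Blocks

variable {m : ℕ}

/-- The coordinates occupied by the `2 × 2` blocks `k, …, l`: the interval `[2k - 1, 2l]` of the
paper, shifted to the 0-based indices of `Fin m`. -/
def blockIndices (m k l : ℕ) : Set (Fin m) :=
  {p | 2 * k - 2 ≤ (p : ℕ) ∧ (p : ℕ) ≤ 2 * l - 1}

theorem blockIndices_self {i : ℕ} (hi : 1 ≤ i) (him : 2 * i ≤ m) :
    blockIndices m i i = {⟨2 * i - 2, by omega⟩, ⟨2 * i - 1, by omega⟩} := by
  ext p
  simp only [blockIndices, Set.mem_ofPred_eq, Set.mem_insert_iff, Set.mem_singleton_iff,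
    Fin.ext_iff]
  omega

theorem blockIndices_succ {k l : ℕ} (hkl : k ≤ l + 1) :
    blockIndices m k (l + 1) = blockIndices m k l ∪ blockIndices m (l + 1) (l + 1) := by
  ext p
  simp only [blockIndices, Set.mem_ofPred_eq, Set.mem_union]
  omega

theorem Amat_eq_transvection {i : ℕ} (hi : 1 ≤ i) (him : 2 * i ≤ m) :
    Amat m i = transvection ⟨2 * i - 2, by omega⟩ ⟨2 * i - 1, by omega⟩ 1 := by
  ext p q
  simp only [Amat, transvection, of_apply, Matrix.add_apply, one_apply, single_apply, Fin.ext_iff]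
  grind

theorem Bmat_eq_transvection {i : ℕ} (hi : 1 ≤ i) (him : 2 * i ≤ m) :
    Bmat m i = transvection ⟨2 * i - 1, by omega⟩ ⟨2 * i - 2, by omega⟩ (-1) := by
  ext p q
  simp only [Bmat, transvection, of_apply, Matrix.add_apply, one_apply, single_apply, Fin.ext_iff]
  grind

theorem Cmat_apply_corner {j : ℕ} (hjm : 2 * j + 2 ≤ m) :
    Cmat m j ⟨2 * j - 2, by omega⟩ ⟨2 * j + 1, by omega⟩ = -1 := by
  simp only [Cmat, of_apply, Fin.ext_iff]
  grind

variable {M : Matrix (Fin m) (Fin m) ℂ}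

theorem exists_isScalarOn_blockIndices_self {i : ℕ} (hi : 1 ≤ i) (him : 2 * i ≤ m)
    (hA : Commute (Amat m i) M) (hB : Commute (Bmat m i) M) :
    ∃ c, IsScalarOn M c (blockIndices m i i) := by
  rw [Amat_eq_transvection hi him] at hA
  rw [Bmat_eq_transvection hi him] at hB
  rw [blockIndices_self hi him]
  exact ⟨_, isScalarOn_pair_of_commute_transvection isUnit_one isUnit_one.neg hA hB⟩

theorem IsScalarOn.eq_of_commute_Cmat {c d : ℂ} {k j : ℕ} (hkj : k ≤ j) (hjm : 2 * j + 2 ≤ m)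
    (hc : IsScalarOn M c (blockIndices m k j))
    (hd : IsScalarOn M d (blockIndices m (j + 1) (j + 1))) (hC : Commute (Cmat m j) M) :
    c = d := by
  refine hc.eq_of_commute hd hC (p := ⟨2 * j - 2, by omega⟩) (q := ⟨2 * j + 1, by omega⟩) ?_ ?_ ?_
  · constructor <;> dsimp only <;> omega
  · constructor <;> dsimp only <;> omega
  · simp [Cmat_apply_corner hjm]

theorem exists_isScalarOn_blockIndices {k l : ℕ} (hk : 1 ≤ k) (hkl : k ≤ l) (hlm : 2 * l ≤ m)
    (hA : ∀ i, k ≤ i → i ≤ l → Commute (Amat m i) M)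
    (hB : ∀ i, k ≤ i → i ≤ l → Commute (Bmat m i) M)
    (hC : ∀ j, k ≤ j → j < l → Commute (Cmat m j) M) :
    ∃ c, IsScalarOn M c (blockIndices m k l) := by
  induction l, hkl using Nat.le_induction with
  | base =>
    exact exists_isScalarOn_blockIndices_self hk hlm (hA k le_rfl le_rfl) (hB k le_rfl le_rfl)
  | succ j hkj ih =>
    obtain ⟨c, hc⟩ := ih (by omega) (fun i hki hij ↦ hA i hki (by omega))
      (fun i hki hij ↦ hB i hki (by omega)) (fun i hki hij ↦ hC i hki (hij.trans j.lt_succ_self))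
    obtain ⟨d, hd⟩ := exists_isScalarOn_blockIndices_self (by omega) hlm
      (hA (j + 1) (by omega) le_rfl) (hB (j + 1) (by omega) le_rfl)
    obtain rfl : c = d := hc.eq_of_commute_Cmat hkj hlm hd (hC j hkj j.lt_succ_self)
    exact ⟨c, blockIndices_succ (hkj.trans j.le_succ) ▸ hc.union hd⟩

end Blocks

/-- Lemma 2.1: a matrix commuting with `A_i, B_i` (`k ≤ i ≤ l`) and `C_j`
(`k ≤ j ≤ l-1`) has the block form with middle block `λ·I` occupying rows and
columns `2k-1, …, 2l` (1-indexed, i.e. `2k-2, …, 2l-1` in 0-based indexing) and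
zero off-diagonal entries in those rows and columns. -/
theorem stmt_0 (m k l : ℕ) (hm : 2 ≤ m) (hk : 1 ≤ k) (hkl : k ≤ l) (hlm : 2 * l ≤ m)
    (M : Matrix (Fin m) (Fin m) ℂ) (hM : IsUnit M)
    (hA : ∀ i, k ≤ i → i ≤ l → Amat m i * M = M * Amat m i)
    (hB : ∀ i, k ≤ i → i ≤ l → Bmat m i * M = M * Bmat m i)
    (hC : ∀ j, k ≤ j → j ≤ l - 1 → Cmat m j * M = M * Cmat m j) :
    ∃ lam : ℂ, lam ≠ 0 ∧ ∀ p q : Fin m,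
      ((2 * k - 2 ≤ (p : ℕ) ∧ (p : ℕ) ≤ 2 * l - 1) ∨
        (2 * k - 2 ≤ (q : ℕ) ∧ (q : ℕ) ≤ 2 * l - 1)) →
      M p q = if p = q then lam else 0 := by
  obtain ⟨c, hc⟩ : ∃ c, IsScalarOn M c (blockIndices m k l) :=
    exists_isScalarOn_blockIndices hk hkl hlm hA hB fun j hkj hjl ↦ hC j hkj (by omega)
  have hblock : (blockIndices m k l).Nonempty :=
    ⟨⟨2 * k - 2, by omega⟩, by constructor <;> dsimp only <;> omega⟩
  exact ⟨c, (hc.isUnit hblock hM).ne_zero, hc⟩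
end

section
/- Let k ≥ 5 and let m be an integer with 1 < m < k − 1. Then the symmetric group S_k has no irreducible complex representation of dimension m; that is, for every m-dimensional complex vector space V and every group homomorphism ρ : S_k → GL(V), there exists a ρ-invariant subspace of V other than 0 and V. -/
/-! The idea is an induction from `n` to `n - 2`: a representation of the symmetric group on `n`
points of dimension at most `n - 2` cannot tell disjoint transpositions apart.

If both eigenspaces of a transposition `(a b)` have dimension at least `2`, then both have dimension
at most `n - 4`, and they are stable under the permutations fixing `a` and `b`, so the induction
hypothesis applies to each of them. Otherwise, after twisting by the sign character if necessary,
transpositions act as reflections; if disjoint transpositions acted differently, the roots of the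
`n - 1` transpositions `(i q)` would be linearly independent, as the vectors `e i - e q` are.

Once `n ≥ 5`, identifying disjoint transpositions identifies all of them, so that an eigenvector of
one transposition spans an invariant line. -/

open Equiv Module Module.End

section Involution

lemma eq_one_of_pow_eq_one_of_sub_one_mul_self_eq_zero {R : Type*} [Ring R] [IsAddTorsionFree R]
    {u : R} (hu : (u - 1) * (u - 1) = 0) {n : ℕ} (hn : n ≠ 0) (hun : u ^ n = 1) : u = 1 := by
  have hpow (k : ℕ) : u ^ k = 1 + k • (u - 1) := by
    induction k with
    | zero => simp
    | succ k ih =>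
      calc u ^ (k + 1) = (1 + k • (u - 1)) * (1 + (u - 1)) := by
            rw [pow_succ, ih, add_sub_cancel]
        _ = 1 + (k + 1) • (u - 1) + k • ((u - 1) * (u - 1)) := by
            rw [add_mul, one_mul, mul_add, mul_one, smul_mul_assoc, succ_nsmul]; abel
        _ = 1 + (k + 1) • (u - 1) := by rw [hu, smul_zero, add_zero]
  have hmul : n • (u - 1) = 0 := by rw [← add_eq_left (a := 1), ← hpow, hun]
  exact sub_eq_zero.mp ((nsmul_eq_zero_iff_right hn).mp hmul)

variable {K V : Type*} [Field K] [AddCommGroup V] [Module K V]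

lemma mem_eigenspace_neg_one_iff {T : End K V} {x : V} : x ∈ eigenspace T (-1) ↔ T x = -x := by
  rw [mem_eigenspace_iff, neg_one_smul]

lemma apply_apply_of_mul_self_eq_one {T : End K V} (hT : T * T = 1) (x : V) : T (T x) = x :=
  congr($hT x)

lemma sub_apply_mem_eigenspace_neg_one {T : End K V} (hT : T * T = 1) (x : V) :
    x - T x ∈ eigenspace T (-1) := by
  simp [apply_apply_of_mul_self_eq_one hT]

lemma isCompl_eigenspace_one_neg_one [NeZero (2 : K)] {T : End K V} (hT : T * T = 1) :
    IsCompl (eigenspace T 1) (eigenspace T (-1)) := by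
  refine ⟨disjoint_genEigenspace _ (fun h ↦ NeZero.ne (2 : K) ?_) _ _,
    codisjoint_iff_le_sup.mpr fun x _ ↦ ?_⟩
  · linear_combination h
  · have hx : x = (2⁻¹ : K) • (x + T x) + (2⁻¹ : K) • (x - T x) := by
      rw [← smul_add, add_add_sub_cancel, ← two_smul K, inv_smul_smul₀ (NeZero.ne 2)]
    have hfix : x + T x ∈ eigenspace T 1 := by
      simp [apply_apply_of_mul_self_eq_one hT, add_comm]
    rw [hx]
    exact Submodule.add_mem_sup (Submodule.smul_mem _ _ hfix)
      (Submodule.smul_mem _ _ (sub_apply_mem_eigenspace_neg_one hT x))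

lemma exists_ne_zero_mem_eigenspace_neg_one {T : End K V} (hT : T * T = 1) (hT1 : T ≠ 1) :
    ∃ v ≠ 0, v ∈ eigenspace T (-1) := by
  obtain ⟨x, hx⟩ : ∃ x, T x ≠ x := by
    by_contra! h
    exact hT1 (LinearMap.ext h)
  exact ⟨x - T x, sub_ne_zero.mpr hx.symm, sub_apply_mem_eigenspace_neg_one hT x⟩

lemma exists_ne_zero_apply_eq_smul_of_mul_self_eq_one [Nontrivial V] {T : End K V}
    (hT : T * T = 1) : ∃ v ≠ 0, ∃ c : K, T v = c • v := by
  by_cases hT1 : T = 1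
  · obtain ⟨v, hv⟩ := exists_ne (0 : V)
    exact ⟨v, hv, 1, by simp [hT1]⟩
  · obtain ⟨v, hv0, hv⟩ := exists_ne_zero_mem_eigenspace_neg_one hT hT1
    exact ⟨v, hv0, -1, mem_eigenspace_iff.mp hv⟩

lemma mul_eq_one_of_forall_sub_apply_mem_span_singleton [CharZero K] {S T : End K V} {v : V}
    (hSv : S v = -v) (hTv : T v = -v) (hS : ∀ x, x - S x ∈ K ∙ v) (hT : ∀ x, x - T x ∈ K ∙ v)
    (hST : IsOfFinOrder (S * T)) : S * T = 1 := by
  have hmem (x : V) : (S * T - 1) x ∈ K ∙ v := by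
    have hsum : (S * T - 1) x = -(T x - S (T x)) - (x - T x) := by
      simp
    rw [hsum]
    exact sub_mem (neg_mem (hS _)) (hT x)
  have hker : (S * T - 1) v = 0 := by simp [hSv, hTv]
  have hsq : (S * T - 1) * (S * T - 1) = 0 := by
    ext x
    obtain ⟨c, hc⟩ := Submodule.mem_span_singleton.mp (hmem x)
    rw [Module.End.mul_apply, ← hc, map_smul, hker, smul_zero, LinearMap.zero_apply]
  obtain ⟨n, hn, hpow⟩ := isOfFinOrder_iff_pow_eq_one.mp hST
  have : IsAddTorsionFree (End K V) := .of_isTorsionFree K (End K V)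
  exact eq_one_of_pow_eq_one_of_sub_one_mul_self_eq_zero hsq hn.ne' hpow

lemma disjoint_eigenspace_neg_one_of_ne [CharZero K] [FiniteDimensional K V] {S T : End K V}
    (hS : S * S = 1) (hT : T * T = 1) (hS1 : finrank K (eigenspace S (-1)) ≤ 1)
    (hT1 : finrank K (eigenspace T (-1)) ≤ 1) (hST : IsOfFinOrder (S * T)) (hne : S ≠ T) :
    Disjoint (eigenspace S (-1)) (eigenspace T (-1)) := by
  refine Submodule.disjoint_def.mpr fun v hvS hvT ↦ by_contra fun hv ↦ hne ?_
  have hspan {R : End K V} (hR : R * R = 1) (hR1 : finrank K (eigenspace R (-1)) ≤ 1)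
      (hvR : v ∈ eigenspace R (-1)) (x : V) : x - R x ∈ K ∙ v := by
    have heq : K ∙ v = eigenspace R (-1) := Submodule.eq_of_le_of_finrank_le
      ((Submodule.span_singleton_le_iff_mem _ _).mpr hvR) (by rwa [finrank_span_singleton hv])
    exact heq ▸ sub_apply_mem_eigenspace_neg_one hR x
  have hmul : S * T = 1 := mul_eq_one_of_forall_sub_apply_mem_span_singleton
    (mem_eigenspace_neg_one_iff.mp hvS) (mem_eigenspace_neg_one_iff.mp hvT)
    (hspan hS hS1 hvS) (hspan hT hT1 hvT) hST
  exact left_inv_eq_right_inv hmul hT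

lemma finrank_eigenspace_eq_of_isConj {S T : End K V} (h : IsConj S T) (μ : K) :
    finrank K (eigenspace S μ) = finrank K (eigenspace T μ) := by
  obtain ⟨c, hc⟩ := h
  let e : V ≃ₗ[K] V := LinearMap.GeneralLinearGroup.toLinearEquiv c
  have he (x : V) : T (e x) = e (S x) := congr($hc.eq x).symm
  have hmap : eigenspace T μ = (eigenspace S μ).map (e : V →ₗ[K] V) := by
    ext x
    obtain ⟨y, rfl⟩ := e.surjective x
    rw [Submodule.mem_map_equiv, e.symm_apply_apply, mem_eigenspace_iff, mem_eigenspace_iff, he,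
      ← map_smul, e.injective.eq_iff]
  rw [hmap, LinearEquiv.finrank_map_eq]

lemma linearIndependent_of_apply_eq_ite [CharZero K] {ι : Type*} [Finite ι] [DecidableEq ι]
    {w : ι → V} (hw : ∀ i, w i ≠ 0) (φ : ι → End K V)
    (hφ : ∀ i j, φ i (w j) = if j = i then (2 : K) • w i else w i) : LinearIndependent K w := by
  cases nonempty_fintype ι
  rw [Fintype.linearIndependent_iff]
  intro c hc
  have hrow (i : ι) : ∑ j, c j + c i = 0 := by
    have happly : (∑ j, c j + c i) • w i = φ i (∑ j, c j • w j) := by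
      have hterm (j : ι) : φ i (c j • w j) = c j • w i + if j = i then c j • w i else 0 := by
        rw [map_smul, hφ]
        split_ifs <;> module
      simp [hterm, map_sum, Finset.sum_add_distrib, Finset.sum_smul, add_smul]
    rw [hc, map_zero] at happly
    exact (smul_eq_zero.mp happly).resolve_right (hw i)
  have hsum : (Fintype.card ι + 1 : K) * ∑ j, c j = 0 := by
    have := Finset.sum_congr rfl fun i (_ : i ∈ Finset.univ) ↦ hrow i
    rw [Finset.sum_add_distrib] at this
    simpa [add_mul] using this
  intro i
  have hzero := (mul_eq_zero.mp hsum).resolve_left (Nat.cast_add_one_ne_zero _)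
  simpa [hzero] using hrow i

end Involution

lemma exists_perm_map_eq_of_nodup {α : Type*} {l l' : List α} (hl : l.Nodup) (hl' : l'.Nodup)
    (hlen : l.length = l'.length) : ∃ g : Perm α, l.map g = l' := by
  obtain ⟨g, hg⟩ := Perm.exists_extending_pair l.get (l'.get ∘ Fin.cast hlen)
    (List.nodup_iff_injective_get.mp hl)
    ((List.nodup_iff_injective_get.mp hl').comp (Fin.cast_injective hlen))
  exact ⟨g, List.ext_get (by simpa) fun i hi _ ↦ by
    simpa using hg ⟨i, by simpa using hi⟩⟩

lemma exists_nodup_cons_cons {α : Type*} [Fintype α] {l : List α} (hl : l.Nodup)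
    (hcard : l.length + 2 ≤ Fintype.card α) : ∃ a b : α, (a :: b :: l).Nodup := by
  classical
  obtain ⟨a, ha, b, hb, hab⟩ : ∃ a ∈ l.toFinsetᶜ, ∃ b ∈ l.toFinsetᶜ, a ≠ b := by
    rw [← Finset.one_lt_card, Finset.card_compl, List.toFinset_card_of_nodup hl]
    omega
  exact ⟨a, b, by simp_all⟩

lemma map_apply_map_apply_of_mul_eq_mul {K G V : Type*} [CommSemiring K] [Monoid G]
    [AddCommMonoid V] [Module K V] (ρ : Representation K G V) {g h g' h' : G}
    (hmul : g * h = g' * h') (x : V) : ρ g (ρ h x) = ρ g' (ρ h' x) := by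
  rw [← Module.End.mul_apply, ← map_mul, hmul, map_mul, Module.End.mul_apply]

section PermRepresentation

variable {K V α : Type*} [Field K] [AddCommGroup V] [Module K V] [DecidableEq α]
  {ρ : Representation K (Perm α) V}

variable (ρ) in
lemma map_swap_mul_self (a b : α) : ρ (swap a b) * ρ (swap a b) = 1 := by
  rw [← map_mul, swap_mul_self, map_one]

variable (ρ) in
lemma map_swap_apply_apply (a b : α) (x : V) : ρ (swap a b) (ρ (swap a b) x) = x :=
  apply_apply_of_mul_self_eq_one (map_swap_mul_self ρ a b) x

lemma map_swap_congr {a b c d : α} (h : ρ (swap a b) = ρ (swap c d)) (g : Perm α) :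
    ρ (swap (g a) (g b)) = ρ (swap (g c) (g d)) := by
  simp only [swap_apply_apply, map_mul, h]

lemma map_apply_mem_of_forall_map_swap_apply_mem [Finite α] {p : Submodule K V}
    (hp : ∀ a b, a ≠ b → ∀ v ∈ p, ρ (swap a b) v ∈ p) (g : Perm α) {v : V} (hv : v ∈ p) :
    ρ g v ∈ p := by
  induction g using Perm.swap_induction_on with
  | one => simpa using hv
  | swap_mul g a b hab ih =>
    rw [map_mul, Module.End.mul_apply]
    exact hp a b hab _ ih

lemma isConj_map_swap {a b c d : α} (hab : a ≠ b) (hcd : c ≠ d) :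
    IsConj (ρ (swap a b)) (ρ (swap c d)) :=
  ρ.map_isConj (Perm.isConj_swap hab hcd)

/-- Any two disjoint transpositions act by the same endomorphism. Besides the representations that
factor through the sign, this is satisfied by the irreducible two-dimensional representation of the
symmetric group on four points. -/
def IdentifiesDisjointSwaps (ρ : Representation K (Perm α) V) : Prop :=
  ∀ ⦃a b c d : α⦄, [a, b, c, d].Nodup → ρ (swap a b) = ρ (swap c d)

/-- Every transposition acts as a reflection or as the identity: since it is an involution, this is
expressed by bounding the dimension of its `-1`-eigenspace. -/
def SwapsActByReflections (ρ : Representation K (Perm α) V) : Prop :=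
  ∀ ⦃a b : α⦄, a ≠ b → finrank K (eigenspace (ρ (swap a b)) (-1)) ≤ 1

namespace IdentifiesDisjointSwaps

lemma of_map_swap_eq_of_nodup {a b c d : α} (hnd : [a, b, c, d].Nodup)
    (h : ρ (swap a b) = ρ (swap c d)) : IdentifiesDisjointSwaps ρ := by
  intro a' b' c' d' hnd'
  obtain ⟨g, hg⟩ := exists_perm_map_eq_of_nodup hnd hnd' rfl
  simp only [List.map_cons, List.map_nil, List.cons.injEq, and_true] at hg
  obtain ⟨rfl, rfl, rfl, rfl⟩ := hg
  exact map_swap_congr h g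

lemma of_map_swap_eq_map_swap_adjacent {a b c : α} (hnd : [a, b, c].Nodup)
    (h : ρ (swap a b) = ρ (swap b c)) : IdentifiesDisjointSwaps ρ := by
  have hadj ⦃x y z : α⦄ (hnd' : [x, y, z].Nodup) : ρ (swap x y) = ρ (swap y z) := by
    obtain ⟨g, hg⟩ := exists_perm_map_eq_of_nodup hnd hnd' rfl
    simp only [List.map_cons, List.map_nil, List.cons.injEq, and_true] at hg
    obtain ⟨rfl, rfl, rfl⟩ := hg
    exact map_swap_congr h g
  intro x y z u hnd'
  exact (hadj (hnd'.sublist (by simp : [x, y, z].Sublist [x, y, z, u]))).trans (hadj hnd'.of_cons)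

lemma of_map_swap_eq_one {a b : α} (hab : a ≠ b) (h : ρ (swap a b) = 1) :
    IdentifiesDisjointSwaps ρ := by
  have hone ⦃x y : α⦄ (hxy : x ≠ y) : ρ (swap x y) = 1 :=
    isConj_one_right.mp (h ▸ isConj_map_swap hab hxy)
  intro x y z u hnd
  rw [hone (x := x) (y := y) (by grind), hone (x := z) (y := u) (by grind)]

lemma map_swap_eq_map_swap [Fintype α] (h : IdentifiesDisjointSwaps ρ)
    (hcard : 5 ≤ Fintype.card α) {a b c d : α} (hab : a ≠ b) (hcd : c ≠ d) :
    ρ (swap a b) = ρ (swap c d) := by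
  by_cases hnd : [a, b, c, d].Nodup
  · exact h hnd
  have hlen : [a, b, c, d].dedup.length < 4 :=
    (List.dedup_sublist _).length_le.lt_of_ne fun heq ↦
      hnd ((List.dedup_sublist _).eq_of_length heq ▸ List.nodup_dedup _)
  obtain ⟨x, y, hxy⟩ := exists_nodup_cons_cons (List.nodup_dedup [a, b, c, d]) (by omega)
  have hx : x ∉ [a, b, c, d] := by grind [List.mem_dedup]
  have hy : y ∉ [a, b, c, d] := by grind [List.mem_dedup]
  have hne : x ≠ y := by grind
  calc ρ (swap a b) = ρ (swap x y) := h (by grind)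
    _ = ρ (swap c d) := h (by grind)

end IdentifiesDisjointSwaps

lemma SwapsActByReflections.of_finrank_le_one {a b : α} (hab : a ≠ b)
    (h : finrank K (eigenspace (ρ (swap a b)) (-1)) ≤ 1) : SwapsActByReflections ρ := by
  intro c d hcd
  rwa [finrank_eigenspace_eq_of_isConj (isConj_map_swap hcd hab)]

section Reflections

namespace SwapsActByReflections

variable [CharZero K] [FiniteDimensional K V] [Finite α]

lemma disjoint_eigenspace_neg_one (hρ : SwapsActByReflections ρ) {a b c d : α} (hab : a ≠ b)
    (hcd : c ≠ d) (hne : ρ (swap a b) ≠ ρ (swap c d)) :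
    Disjoint (eigenspace (ρ (swap a b)) (-1)) (eigenspace (ρ (swap c d)) (-1)) := by
  refine disjoint_eigenspace_neg_one_of_ne (map_swap_mul_self ρ a b) (map_swap_mul_self ρ c d)
    (hρ hab) (hρ hcd) ?_ hne
  rw [← map_mul]
  exact ρ.isOfFinOrder (isOfFinOrder_of_finite _)

lemma map_swap_apply_eq_self (hρ : SwapsActByReflections ρ) (hne : ¬ IdentifiesDisjointSwaps ρ)
    {a b c d : α} (hnd : [a, b, c, d].Nodup) {v : V} (hv : v ∈ eigenspace (ρ (swap a b)) (-1)) :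
    ρ (swap c d) v = v := by
  have hdisj := hρ.disjoint_eigenspace_neg_one (a := a) (b := b) (c := c) (d := d) (by grind)
    (by grind) fun h ↦ hne (.of_map_swap_eq_of_nodup hnd h)
  have hcomm : Commute (ρ (swap a b)) (ρ (swap c d)) :=
    (Perm.disjoint_swap_swap hnd).commute.map ρ
  have hroot : v - ρ (swap c d) v ∈ eigenspace (ρ (swap a b)) (-1) :=
    sub_mem hv (mapsTo_genEigenspace_of_comm hcomm (-1) 1 hv)
  have hroot' := sub_apply_mem_eigenspace_neg_one (map_swap_mul_self ρ c d) v
  exact (sub_eq_zero.mp (Submodule.disjoint_def.mp hdisj _ hroot hroot')).symm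

end SwapsActByReflections

/-- A choice, for each `i ≠ q`, of a `-1`-eigenvector `w i` of the transposition `(i q)`, made
compatibly with the permutations fixing `q`. The model is `w i = e i - e q` in the permutation
representation. -/
structure IsRootStar (ρ : Representation K (Perm α) V) (q : α) (w : {i // i ≠ q} → V) : Prop where
  ne_zero (i : {i // i ≠ q}) : w i ≠ 0
  map_swap_center (i : {i // i ≠ q}) : ρ (swap ↑i q) (w i) = -w i
  map_swap (i j : {i // i ≠ q}) : ρ (swap ↑i ↑j) (w i) = w j

variable [CharZero K] [FiniteDimensional K V] [Finite α]

lemma SwapsActByReflections.isRootStar (hρ : SwapsActByReflections ρ)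
    (hne : ¬ IdentifiesDisjointSwaps ρ) {p q : α} (hpq : p ≠ q) {v : V} (hv0 : v ≠ 0)
    (hv : v ∈ eigenspace (ρ (swap p q)) (-1)) :
    IsRootStar ρ q fun i ↦ ρ (swap p ↑i) v where
  ne_zero i h := hv0 <| by rw [← map_swap_apply_apply ρ p i v, h, map_zero]
  map_swap_center := by
    rintro ⟨i, hi⟩
    have hmul : swap i q * swap p i = swap p i * swap p q := by
      rw [mul_swap_eq_swap_mul (swap p i), swap_apply_left, swap_apply_of_ne_of_ne hpq.symm hi.symm]
    rw [map_apply_map_apply_of_mul_eq_mul ρ hmul, mem_eigenspace_neg_one_iff.mp hv, map_neg]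
  map_swap := by
    rintro ⟨i, hi⟩ ⟨j, hj⟩
    dsimp only
    rcases eq_or_ne i j with rfl | hij
    · rw [swap_self, ← Perm.one_def, map_one, Module.End.one_apply]
    rcases eq_or_ne i p with rfl | hip
    · rw [swap_self, ← Perm.one_def, map_one, Module.End.one_apply]
    rcases eq_or_ne j p with rfl | hjp
    · rw [swap_comm i, map_swap_apply_apply, swap_self, ← Perm.one_def, map_one,
        Module.End.one_apply]
    have hmul : swap i j * swap p i = swap p j * swap i j := by
      rw [mul_swap_eq_swap_mul, swap_apply_left, swap_apply_of_ne_of_ne hip.symm hjp.symm]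
    rw [map_apply_map_apply_of_mul_eq_mul ρ hmul,
      hρ.map_swap_apply_eq_self hne (by grind : [p, q, i, j].Nodup) hv]

namespace IsRootStar

variable {q : α} {w : {i // i ≠ q} → V}

lemma map_swap_center_of_ne (hw : IsRootStar ρ q w) (hρ : SwapsActByReflections ρ)
    (hne : ¬ IdentifiesDisjointSwaps ρ) {i j : {i // i ≠ q}} (hij : i ≠ j) :
    ρ (swap ↑i q) (w j) = w j - w i := by
  have hij' : (j : α) ≠ i := fun h ↦ hij (Subtype.ext h.symm)
  have hdisj := hρ.disjoint_eigenspace_neg_one hij' i.2 fun h ↦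
    hne (.of_map_swap_eq_map_swap_adjacent (by grind : [(j : α), i, q].Nodup) h)
  have hmul : swap (j : α) i * swap ↑i q = swap ↑i q * swap ↑j q := by
    rw [mul_swap_eq_swap_mul (swap (i : α) q), swap_apply_right, swap_apply_of_ne_of_ne hij' j.2]
  have hroot : w j - w i - ρ (swap ↑i q) (w j) ∈ eigenspace (ρ (swap ↑j ↑i)) (-1) := by
    have hij_root : ρ (swap ↑j ↑i) (w i) = w j := by rw [swap_comm, hw.map_swap]
    rw [mem_eigenspace_neg_one_iff, map_sub, map_sub, hw.map_swap, hij_root,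
      map_apply_map_apply_of_mul_eq_mul ρ hmul, hw.map_swap_center, map_neg]
    abel
  have hroot' : w j - w i - ρ (swap ↑i q) (w j) ∈ eigenspace (ρ (swap ↑i q)) (-1) := by
    rw [sub_right_comm]
    exact sub_mem (sub_apply_mem_eigenspace_neg_one (map_swap_mul_self ρ _ _) _)
      (mem_eigenspace_neg_one_iff.mpr (hw.map_swap_center i))
  exact (sub_eq_zero.mp (Submodule.disjoint_def.mp hdisj _ hroot hroot')).symm

lemma linearIndependent (hw : IsRootStar ρ q w) (hρ : SwapsActByReflections ρ)
    (hne : ¬ IdentifiesDisjointSwaps ρ) : LinearIndependent K w := by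
  refine linearIndependent_of_apply_eq_ite hw.ne_zero (fun i ↦ 1 - ρ (swap ↑i q)) fun i j ↦ ?_
  rw [LinearMap.sub_apply, Module.End.one_apply]
  split_ifs with hji
  · rw [hji, hw.map_swap_center, sub_neg_eq_add, two_smul]
  · rw [hw.map_swap_center_of_ne hρ hne (Ne.symm hji), sub_sub_cancel]

end IsRootStar

end Reflections

theorem SwapsActByReflections.card_le_finrank_add_one [CharZero K] [FiniteDimensional K V]
    [Fintype α] (hρ : SwapsActByReflections ρ)
    (hne : ¬ IdentifiesDisjointSwaps ρ) : Fintype.card α ≤ finrank K V + 1 := by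
  obtain ⟨p, q, hpq⟩ : ∃ p q : α, p ≠ q := by
    by_contra! h
    exact hne fun a b c d hnd ↦ absurd (h a b) (by grind)
  obtain ⟨v, hv0, hv⟩ := exists_ne_zero_mem_eigenspace_neg_one (map_swap_mul_self ρ p q)
    fun h ↦ hne (.of_map_swap_eq_one hpq h)
  have hcard := ((hρ.isRootStar hne hpq hv0 hv).linearIndependent hρ hne).fintype_card_le_finrank
  rw [Fintype.card_subtype_compl, Fintype.card_subtype_eq] at hcard
  omega

section SignTwist

variable [Fintype α]

/-- The tensor product of `ρ` with the sign character. -/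
def signTwist (ρ : Representation K (Perm α) V) : Representation K (Perm α) V where
  toFun g := Perm.sign g • ρ g
  map_one' := by simp
  map_mul' g h := by simp [smul_mul_smul_comm]

lemma signTwist_swap {a b : α} (hab : a ≠ b) : signTwist ρ (swap a b) = -ρ (swap a b) := by
  simp [signTwist, Perm.sign_swap hab]

lemma IdentifiesDisjointSwaps.of_signTwist (h : IdentifiesDisjointSwaps (signTwist ρ)) :
    IdentifiesDisjointSwaps ρ := by
  intro a b c d hnd
  have hneg := h hnd
  rwa [signTwist_swap (by grind), signTwist_swap (by grind), neg_inj] at hneg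

lemma eigenspace_signTwist_swap {a b : α} (hab : a ≠ b) (μ : K) :
    eigenspace (signTwist ρ (swap a b)) (-μ) = eigenspace (ρ (swap a b)) μ := by
  ext x
  simp [signTwist_swap hab]

end SignTwist

/-- An eigenspace of the transposition `(a b)`, as a representation of the group of permutations of
the other points. -/
def swapEigenspace (ρ : Representation K (Perm α) V) (a b : α) (μ : K) :
    Subrepresentation
      (ρ.comp (Perm.ofSubtype : Perm {x : α // x ≠ a ∧ x ≠ b} →* Perm α)) where
  toSubmodule := eigenspace (ρ (swap a b)) μ
  apply_mem_toSubmodule g := by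
    have hcomm : Commute (swap a b) (Perm.ofSubtype g) := by
      rw [commute_iff_eq, mul_swap_eq_swap_mul, Perm.ofSubtype_apply_of_not_mem g (by simp),
        Perm.ofSubtype_apply_of_not_mem g (by simp)]
    exact mapsTo_genEigenspace_of_comm (hcomm.map ρ) μ 1

lemma map_swap_apply_eq_of_mem_eigenspace {a b c d e f : α} (hnd : [a, b, c, d, e, f].Nodup) {μ : K}
    (h : IdentifiesDisjointSwaps (swapEigenspace ρ a b μ).toRepresentation) {x : V}
    (hx : x ∈ eigenspace (ρ (swap a b)) μ) : ρ (swap c d) x = ρ (swap e f) x := by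
  have heq := h (a := ⟨c, by grind⟩) (b := ⟨d, by grind⟩) (c := ⟨e, by grind⟩) (d := ⟨f, by grind⟩)
    (by grind)
  have hval := congr(($heq ⟨x, hx⟩ : V))
  change ρ (Perm.ofSubtype _) x = ρ (Perm.ofSubtype _) x at hval
  simpa only [Perm.ofSubtype_swap_eq] using hval

variable [CharZero K] [FiniteDimensional K V] [Fintype α]

lemma two_le_finrank_eigenspace (hne : ¬ IdentifiesDisjointSwaps ρ)
    (hdim : finrank K V + 2 ≤ Fintype.card α) {a b : α} (hab : a ≠ b) {ε : K}
    (hε : ε = 1 ∨ ε = -1) : 2 ≤ finrank K (eigenspace (ρ (swap a b)) ε) := by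
  by_contra! hlt
  rcases hε with rfl | rfl
  · rw [← eigenspace_signTwist_swap hab] at hlt
    have hρ : SwapsActByReflections (signTwist ρ) := .of_finrank_le_one hab (by omega)
    have := hρ.card_le_finrank_add_one (mt IdentifiesDisjointSwaps.of_signTwist hne)
    omega
  · have hρ : SwapsActByReflections ρ := .of_finrank_le_one hab (by omega)
    have := hρ.card_le_finrank_add_one hne
    omega

theorem identifiesDisjointSwaps_of_finrank_add_two_le (ρ : Representation K (Perm α) V)
    (hdim : finrank K V + 2 ≤ Fintype.card α) : IdentifiesDisjointSwaps ρ := by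
  induction hn : Fintype.card α using Nat.strong_induction_on generalizing α V with
  | _ n ih =>
  by_contra hne
  refine hne fun c d e f hnd ↦ ?_
  have hsum (a b : α) := Submodule.finrank_add_eq_of_isCompl
    (isCompl_eigenspace_one_neg_one (map_swap_mul_self ρ a b))
  have hpos {a b : α} (hab : a ≠ b) := two_le_finrank_eigenspace hne hdim hab (.inl rfl)
  have hneg {a b : α} (hab : a ≠ b) := two_le_finrank_eigenspace hne hdim hab (.inr rfl)
  obtain ⟨a, b, hnd'⟩ := exists_nodup_cons_cons hnd (by
    have hcd : c ≠ d := by grind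
    have := hsum c d
    have := hpos hcd
    have := hneg hcd
    simp only [List.length_cons, List.length_nil]
    omega)
  have hab : a ≠ b := by grind
  have hcard : Fintype.card {x // x ≠ a ∧ x ≠ b} = n - 2 := by
    have : (Finset.univ.filter fun x ↦ x ≠ a ∧ x ≠ b) = {a, b}ᶜ := by ext; simp
    rw [Fintype.card_subtype, this, Finset.card_compl, Finset.card_pair hab, hn]
  have hagree {ε : K} (hε : finrank K (eigenspace (ρ (swap a b)) ε) + 2 ≤ n - 2) {x : V}
      (hx : x ∈ eigenspace (ρ (swap a b)) ε) : ρ (swap c d) x = ρ (swap e f) x :=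
    map_swap_apply_eq_of_mem_eigenspace hnd'
      (ih (n - 2) (by omega) (swapEigenspace ρ a b ε).toRepresentation (hcard ▸ hε) hcard) hx
  have := hsum a b
  have := hpos hab
  have := hneg hab
  exact LinearMap.ext_on_codisjoint
    (isCompl_eigenspace_one_neg_one (map_swap_mul_self ρ a b)).codisjoint
    (fun x hx ↦ hagree (by omega) hx) fun x hx ↦ hagree (by omega) hx

end PermRepresentation

theorem stmt_1_general {K V α : Type*} [Field K] [CharZero K] [AddCommGroup V] [Module K V]
    [Fintype α] (hcard : 5 ≤ Fintype.card α) (hV : 1 < finrank K V)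
    (hdim : finrank K V + 2 ≤ Fintype.card α) (ρ : Representation K (Perm α) V) :
    ∃ p : Submodule K V, p ≠ ⊥ ∧ p ≠ ⊤ ∧ ∀ g, ∀ v ∈ p, ρ g v ∈ p := by
  classical
  have : FiniteDimensional K V := Module.finite_of_finrank_pos (by omega)
  have : Nontrivial V := Module.nontrivial_of_finrank_pos (R := K) (by omega)
  obtain ⟨a, b, hab⟩ := Fintype.exists_pair_of_one_lt_card (α := α) (by omega)
  obtain ⟨v, hv0, c, hv⟩ :=
    exists_ne_zero_apply_eq_smul_of_mul_self_eq_one (map_swap_mul_self ρ a b)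
  have hρ : IdentifiesDisjointSwaps ρ := identifiesDisjointSwaps_of_finrank_add_two_le ρ hdim
  refine ⟨K ∙ v, by simpa using hv0, fun htop ↦ ?_, fun g x hx ↦ ?_⟩
  · have := finrank_span_singleton (K := K) hv0
    rw [htop, finrank_top] at this
    omega
  · refine map_apply_mem_of_forall_map_swap_apply_mem (fun d e hde y hy ↦ ?_) g hx
    obtain ⟨r, rfl⟩ := Submodule.mem_span_singleton.mp hy
    rw [← hρ.map_swap_eq_map_swap hcard hab hde, map_smul, hv]
    exact Submodule.smul_mem _ r (Submodule.smul_mem _ c (Submodule.mem_span_singleton_self v))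

/-- For `k ≥ 5`, the symmetric group `S_k` has no irreducible complex
representation of dimension `m` with `1 < m < k - 1`: every representation of
`S_k` on an `m`-dimensional complex vector space has a nontrivial proper
invariant subspace. -/
theorem stmt_1 (k m : ℕ) (hk : 5 ≤ k) (hm1 : 1 < m) (hm2 : m < k - 1)
    (V : Type*) [AddCommGroup V] [Module ℂ V] (hdim : Module.finrank ℂ V = m)
    (ρ : Equiv.Perm (Fin k) →* LinearMap.GeneralLinearGroup ℂ V) :
    ∃ p : Submodule ℂ V, p ≠ ⊥ ∧ p ≠ ⊤ ∧
      ∀ g : Equiv.Perm (Fin k), ∀ v ∈ p, (ρ g : V →ₗ[ℂ] V) v ∈ p :=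
  stmt_1_general (by simpa) (by omega) (by rw [Fintype.card_fin]; omega)
    ((Units.coeHom (Module.End ℂ V)).comp ρ)
end

section
/- Let k ≥ 7 and let ρ : S_k → GL(V) and σ : S_k → GL(W) be two irreducible complex representations of S_k on complex vector spaces V and W, each of dimension k − 1. Then either ρ is isomorphic to σ, or ρ is isomorphic to the twist of σ by the sign character; that is, there exists a linear isomorphism T : V → W such that either T ∘ ρ(g) = σ(g) ∘ T for all g ∈ S_k, or T ∘ ρ(g) = sgn(g) · σ(g) ∘ T for all g ∈ S_k. -/
/-!
Call a `-1`-eigenvector of a transposition a root. If disjoint transpositions fix each other's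
roots, a nonzero root `x` of `(p q)` behaves like `e_p - e_q`: summing its images under the
transpositions `(q j)` gives a vector fixed by the stabilizer of `p`, hence a map from the
permutation representation, whose kernel lies in the line of the all-ones vector. An irreducible
representation with this property and a nonzero root is therefore the standard one.

To obtain the property when `dim V < 2n - 6`, note that one of the two eigenspaces of a
transposition `(a b)` has dimension at most `n - 4`, and that twisting by the sign exchanges them,
so let it be the `-1`-eigenspace. It is a representation of the permutations of the remaining
`n - 2` points, too small for those to act through anything but the sign: all transpositions there
act alike. A root common to two disjoint transpositions is then negated by every transposition,
which irreducibility forbids.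

That all transpositions of `S_n` act alike in dimension at most `n - 2` is shown by induction from
`S_{n-2}`, applied to both eigenspaces of a transposition. The induction fails only if one of
them, say the `-1`-eigenspace, is at most a line; then either disjoint transpositions fix each
other's roots, and a nonzero root would force dimension `n - 1`, or two disjoint transpositions
share their eigenspaces.
-/

open Equiv Module Representation
open scoped Nat

namespace PermRep

section Combinatorics

variable {α : Type*}

theorem exists_perm_map_eq {l l' : List α} (hl : l.Nodup) (hl' : l'.Nodup)
    (hlen : l.length = l'.length) : ∃ g : Perm α, l.map g = l' := by
  obtain ⟨g, hg⟩ := (Perm.isMultiplyPretransitive α l.length).exists_smul_eq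
    ⟨l.get, hl.injective_get⟩
    ⟨l'.get ∘ Fin.cast hlen, hl'.injective_get.comp (Fin.cast_injective hlen)⟩
  refine ⟨g, List.ext_get (by simpa using hlen) fun i h h' ↦ ?_⟩
  simpa using DFunLike.congr_fun hg ⟨i, by simpa using h⟩

variable [Fintype α]

theorem exists_pair_notMem {s : Finset α} (h : s.card + 2 ≤ Fintype.card α) :
    ∃ e f, e ≠ f ∧ e ∉ s ∧ f ∉ s := by
  classical
  obtain ⟨e, he, f, hf, hne⟩ := Finset.one_lt_card.1
    (show 1 < sᶜ.card by rw [Finset.card_compl]; omega)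
  exact ⟨e, f, hne, Finset.mem_compl.1 he, Finset.mem_compl.1 hf⟩

variable [DecidableEq α]

theorem card_subtype_notMem_pair {a b : α} (h : a ≠ b) :
    Fintype.card {y // y ∉ ({a, b} : Finset α)} + 2 = Fintype.card α := by
  have hcard := Finset.card_pair h
  have hle := Finset.card_le_univ ({a, b} : Finset α)
  rw [Fintype.card_subtype_compl, Fintype.card_coe, hcard]
  omega

end Combinatorics

theorem natCast_ne_zero_of_factorial {K : Type*} [Field K] {m n : ℕ} (hn : (n ! : K) ≠ 0)
    (hm : m ≠ 0) (hmn : m ≤ n) : (m : K) ≠ 0 :=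
  ne_zero_of_dvd_ne_zero hn (Nat.cast_dvd_cast (Nat.dvd_factorial hm.pos hmn))

theorem neZero_two_of_factorial {K : Type*} [Field K] {n : ℕ} (hn : (n ! : K) ≠ 0) (h : 2 ≤ n) :
    NeZero (2 : K) :=
  ⟨mod_cast natCast_ne_zero_of_factorial (m := 2) hn two_ne_zero h⟩

section Involution

theorem eq_zero_of_eq_neg (K : Type*) {V : Type*} [Field K] [NeZero (2 : K)] [AddCommGroup V]
    [Module K V] {v : V} (h : v = -v) : v = 0 := by
  have h2 : (2 : K) • v = 0 := by rw [two_smul]; nth_rw 1 [h]; exact neg_add_cancel v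
  exact (smul_eq_zero.1 h2).resolve_left two_ne_zero

variable {K V : Type*} [Field K] [NeZero (2 : K)] [AddCommGroup V] [Module K V]

theorem isCompl_eigenspace_one_neg_one {f : End K V} (hf : ∀ v, f (f v) = v) :
    IsCompl (f.eigenspace 1) (f.eigenspace (-1)) := by
  refine .of_le (fun v ⟨h₁, h₂⟩ ↦ ?_) fun v _ ↦ ?_
  · rw [SetLike.mem_coe, End.mem_eigenspace_iff] at h₁ h₂
    exact eq_zero_of_eq_neg K (by simpa [h₁] using h₂)
  · have hv : v = (2 : K)⁻¹ • (v + f v) + (2 : K)⁻¹ • (v - f v) := by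
      rw [← smul_add, add_add_sub_cancel, ← two_smul K, inv_smul_smul₀ two_ne_zero]
    rw [hv]
    refine Submodule.add_mem_sup (Submodule.smul_mem _ _ ?_) (Submodule.smul_mem _ _ ?_) <;>
      simp [hf, add_comm]

theorem finrank_eigenspace_one_add_neg_one [FiniteDimensional K V] {f : End K V}
    (hf : ∀ v, f (f v) = v) :
    finrank K (f.eigenspace 1) + finrank K (f.eigenspace (-1)) = finrank K V :=
  Submodule.finrank_add_eq_of_isCompl (isCompl_eigenspace_one_neg_one hf)

theorem eq_of_eigenspace_neg_one_eq {f g : End K V} (hf : ∀ v, f (f v) = v)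
    (hg : ∀ v, g (g v) = v) (hfg : ∀ v, f (g v) = g (f v))
    (h : f.eigenspace (-1) = g.eigenspace (-1)) : f = g := by
  ext v
  have hg_neg : v - f v ∈ g.eigenspace (-1) := by rw [← h]; simp [hf]
  have hf_neg : v - g v ∈ f.eigenspace (-1) := by rw [h]; simp [hg]
  rw [End.mem_eigenspace_iff, map_sub, neg_one_smul] at hf_neg hg_neg
  rw [hfg] at hf_neg
  refine sub_eq_zero.1 (eq_zero_of_eq_neg K ?_)
  calc f v - g v = f v - g (f v) - (g v - g (f v)) := by abel
    _ = -(f v - g v) := by rw [hf_neg, hg_neg]; abel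

end Involution

section Swap

@[simp]
theorem refl_apply {α R V : Type*} [CommRing R] [AddCommGroup V] [Module R V]
    (ρ : Representation R (Perm α) V) (v : V) : ρ (Equiv.refl α) v = v :=
  congr($(map_one ρ) v)

variable {α R V : Type*} [DecidableEq α] [CommRing R] [AddCommGroup V] [Module R V]
  {ρ : Representation R (Perm α) V}

@[simp]
theorem swap_apply_swap_apply (a b : α) (v : V) : ρ (swap a b) (ρ (swap a b) v) = v := by
  rw [← Module.End.mul_apply, ← map_mul, swap_mul_self, map_one, Module.End.one_apply]

theorem apply_swap_apply (g : Perm α) (a b : α) (v : V) :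
    ρ g (ρ (swap a b) v) = ρ (swap (g a) (g b)) (ρ g v) := by
  simp only [← Module.End.mul_apply, ← map_mul, mul_swap_eq_swap_mul]

theorem swap_apply_comm_of_nodup {a b c d : α} (hd : [a, b, c, d].Nodup) (v : V) :
    ρ (swap a b) (ρ (swap c d) v) = ρ (swap c d) (ρ (swap a b) v) := by
  rw [apply_swap_apply, swap_apply_of_ne_of_ne (by grind) (by grind),
    swap_apply_of_ne_of_ne (by grind) (by grind)]

variable [Finite α]

theorem apply_mem_of_forall_swap {p : Submodule R V}
    (h : ∀ a b, a ≠ b → ∀ v ∈ p, ρ (swap a b) v ∈ p) (g : Perm α) {v : V} (hv : v ∈ p) :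
    ρ g v ∈ p := by
  induction g using Perm.swap_induction_on with
  | one => simpa
  | swap_mul f a b hab ih => rw [map_mul]; exact h a b hab _ ih

theorem apply_eq_self_of_forall_swap {s : Set α} {v : V}
    (h : ∀ a ∈ s, ∀ b ∈ s, ρ (swap a b) v = v) {g : Perm α} (hg : ∀ a ∉ s, g a = a) :
    ρ g v = v := by
  classical
  have hmem : ∀ a, g a ∈ s ↔ a ∈ s := fun a ↦ by
    refine ⟨fun ha ↦ by_contra fun hs ↦ hs (hg a hs ▸ ha), fun ha ↦ by_contra fun hs ↦ hs ?_⟩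
    rwa [g.injective (hg _ hs)]
  rw [← Perm.ofSubtype_subtypePerm hmem fun a ha ↦ by_contra fun hs ↦ ha (hg a hs)]
  induction g.subtypePerm hmem using Perm.swap_induction_on with
  | one => simp
  | swap_mul f a b _ ih =>
    rw [map_mul, map_mul, Module.End.mul_apply, ih, Perm.ofSubtype_swap_eq, h a a.2 b b.2]

end Swap

theorem finrank_le_one_of_forall_swap {α K V : Type*} [DecidableEq α] [Finite α] [Field K]
    [AddCommGroup V] [Module K V] {ρ : Representation K (Perm α) V} [ρ.IsIrreducible] {v : V}
    (hv : v ≠ 0) (ε : K) (h : ∀ a b, a ≠ b → ρ (swap a b) v = ε • v) : finrank K V ≤ 1 := by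
  have hstable : ∀ a b, a ≠ b → ∀ w ∈ K ∙ v, ρ (swap a b) w ∈ K ∙ v := fun a b hab w hw ↦ by
    obtain ⟨c, rfl⟩ := Submodule.mem_span_singleton.1 hw
    rw [map_smul, h a b hab]
    exact Submodule.smul_mem _ _ (Submodule.smul_mem _ _ (Submodule.mem_span_singleton_self v))
  obtain hbot | htop := eq_bot_or_eq_top
    (⟨K ∙ v, fun g _ ↦ apply_mem_of_forall_swap hstable g⟩ : Subrepresentation ρ)
  · exact absurd (Submodule.span_singleton_eq_bot.1 congr(($hbot).toSubmodule)) hv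
  · have hspan : K ∙ v = ⊤ := congr(($htop).toSubmodule)
    rw [← finrank_top, ← hspan, finrank_span_singleton hv]

section PermutationLift

variable {α R V : Type*} [CommRing R] [AddCommGroup V] [Module R V]
  {ρ : Representation R (Perm α) V}

/-- The map of representations out of the permutation representation `R[α]` given by an
equivariant family of vectors. -/
noncomputable def permutationLift (v : α → V) (hv : ∀ g i, ρ g (v i) = v (g i)) :
    IntertwiningMap (ofMulAction R (Perm α) α) ρ :=
  ⟨(MonoidAlgebra.basis α R).constr R v, fun g ↦ (MonoidAlgebra.basis α R).ext fun i ↦ by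
    have hconstr (j : α) : (MonoidAlgebra.basis α R).constr R v (.single j 1) = v j :=
      (MonoidAlgebra.basis α R).constr_basis R v j
    simp [hconstr, hv]⟩

@[simp]
theorem permutationLift_single (v : α → V) (hv : ∀ g i, ρ g (v i) = v (g i)) (i : α) :
    permutationLift v hv (.single i 1) = v i :=
  (MonoidAlgebra.basis α R).constr_basis R v i

end PermutationLift

section DisjointRoots

variable {α R V : Type*} [DecidableEq α] [CommRing R] [AddCommGroup V] [Module R V]
  {ρ : Representation R (Perm α) V}

/-- Every root of a transposition, that is every `-1`-eigenvector, is fixed by the transpositions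
disjoint from it. Together with the existence of a nonzero root, this is the property by which the
standard representation is recognised. -/
def FixesDisjointRoots (ρ : Representation R (Perm α) V) : Prop :=
  ∀ ⦃a b c d⦄, [a, b, c, d].Nodup → ∀ v, ρ (swap a b) v = -v → ρ (swap c d) v = v

namespace FixesDisjointRoots

variable [Finite α] (h : FixesDisjointRoots ρ) {p q : α} (hpq : p ≠ q) {x : V}
  (hx : ρ (swap p q) x = -x)
include h hpq hx

theorem apply_eq_self {g : Perm α} (hp : g p = p) (hq : g q = q) : ρ g x = x := by
  refine apply_eq_self_of_forall_swap (s := {p, q}ᶜ) (fun a ha b hb ↦ ?_) fun a ha ↦ ?_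
  · obtain rfl | hab := eq_or_ne a b
    · simp
    · exact h (by grind [List.nodup_cons]) x hx
  · obtain rfl | rfl : a = p ∨ a = q := by simpa [or_iff_not_imp_left] using ha
    exacts [hp, hq]

theorem apply_swap_apply_eq {g : Perm α} (hp : g p = p) {j : α} (hj : j ≠ p) :
    ρ g (ρ (swap q j) x) = ρ (swap q (g j)) x := by
  have hgj : g j ≠ p := fun h ↦ hj (g.injective (h.trans hp.symm))
  have hfix : ρ (swap q (g j) * g * swap q j) x = x := h.apply_eq_self hpq hx
    (by simp [swap_apply_of_ne_of_ne hpq hj.symm, hp, swap_apply_of_ne_of_ne hpq hgj.symm])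
    (by simp)
  simpa using congr(ρ (swap q (g j)) $hfix)

end FixesDisjointRoots

end DisjointRoots

namespace FixesDisjointRoots

variable {α K V : Type*} [DecidableEq α] [Fintype α] [Field K] [NeZero (2 : K)] [AddCommGroup V]
  [Module K V] {ρ : Representation K (Perm α) V}

theorem eq_zero_of_adjacent_roots (hcard : 4 ≤ Fintype.card α)
    (h : FixesDisjointRoots ρ) {p q j : α} (hd : [p, q, j].Nodup) {z : V}
    (hpq : ρ (swap p q) z = -z) (hqj : ρ (swap q j) z = -z) : z = 0 := by
  obtain ⟨l, -, hl⟩ := Finset.exists_mem_notMem_of_card_lt_card (s := {p, q, j})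
    (t := Finset.univ) (Finset.card_le_three.trans_lt hcard)
  simp only [List.nodup_cons, List.mem_cons, Finset.mem_insert, Finset.mem_singleton, not_or]
    at hd hl
  have hjl : ρ (swap j l) z = z := h (by grind) z hpq
  have hpl : ρ (swap p l) z = z := h (by grind) z hqj
  have hpj_fix : ρ (swap p j) z = z := by
    have := apply_swap_apply (ρ := ρ) (swap j l) p l z
    rwa [swap_apply_right, swap_apply_of_ne_of_ne (by grind) (by grind), hpl, hjl, eq_comm] at this
  have hpj_neg := apply_swap_apply (ρ := ρ) (swap p q) q j z
  rw [swap_apply_right, swap_apply_of_ne_of_ne (by grind) (by grind), hqj] at hpj_neg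
  exact eq_zero_of_eq_neg K (by simpa [hpq, hpj_fix] using hpj_neg)

variable (h : FixesDisjointRoots ρ) {p q : α} (hpq : p ≠ q) {x : V} (hx : ρ (swap p q) x = -x)
include h hpq hx

theorem swap_apply_root_sub (hcard : 4 ≤ Fintype.card α) {j : α} (hjp : j ≠ p)
    (hjq : j ≠ q) :
    ρ (swap q j) x - ρ (swap p q) (ρ (swap q j) x) = x := by
  have hbraid : ρ (swap q j) (ρ (swap p q) (ρ (swap q j) x)) = -ρ (swap p q) (ρ (swap q j) x) := by
    rw [apply_swap_apply (swap q j), swap_apply_swap_apply, swap_apply_left,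
      swap_apply_of_ne_of_ne hpq hjp.symm, apply_swap_apply (swap p q), hx, swap_apply_right,
      swap_apply_of_ne_of_ne hjp hjq, map_neg, neg_neg]
  refine sub_eq_zero.1
    (h.eq_zero_of_adjacent_roots hcard (p := p) (q := q) (j := j) (by grind) ?_ ?_)
  · simp only [map_sub, swap_apply_swap_apply, hx]
    abel
  · simp only [map_sub, swap_apply_swap_apply, hbraid]
    abel

theorem sum_sub_swap_sum (hcard : 4 ≤ Fintype.card α) :
    ∑ j ∈ Finset.univ.erase p, ρ (swap q j) x -
      ρ (swap p q) (∑ j ∈ Finset.univ.erase p, ρ (swap q j) x) = (Fintype.card α : K) • x := by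
  have hsum : ∑ j ∈ (Finset.univ.erase p).erase q,
      (ρ (swap q j) x - ρ (swap p q) (ρ (swap q j) x)) =
        ((Fintype.card α - 1 - 1 : ℕ) : K) • x := by
    rw [Finset.sum_congr rfl fun j hj ↦
      h.swap_apply_root_sub hpq hx hcard (by simp_all) (by simp_all)]
    simp [Finset.card_erase_of_mem, hpq.symm, Nat.cast_smul_eq_nsmul]
  rw [map_sum, ← Finset.sum_sub_distrib, ← Finset.add_sum_erase _ _ (a := q) (by simp [hpq.symm]),
    hsum]
  obtain ⟨n, hn⟩ := Nat.exists_eq_add_of_le hcard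
  rw [hn]
  simp only [swap_self, refl_apply, hx]
  rw [show 4 + n - 1 - 1 = 2 + n by omega]
  push_cast
  module

theorem exists_intertwiningMap_single_ne (hK : (Fintype.card α : K) ≠ 0)
    (hcard : 4 ≤ Fintype.card α) (hx0 : x ≠ 0) :
    ∃ f : IntertwiningMap (ofMulAction K (Perm α) α) ρ, f (.single p 1) ≠ f (.single q 1) := by
  -- In `K[α]`, with `x = e_p - e_q`, the vector `y` is `n e_p - ∑ i, e_i`: it is fixed by the
  -- stabilizer of `p`, so its translates form a family indexed by `α`.
  let y := ∑ j ∈ Finset.univ.erase p, ρ (swap q j) x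
  have hyfix {g : Perm α} (hg : g p = p) : ρ g y = y := by
    rw [map_sum]
    refine Finset.sum_equiv g (fun j ↦ by simp [g.injective.ne_iff' hg]) fun j hj ↦
      h.apply_swap_apply_eq hpq hx hg (by simp_all)
  have hequiv (g : Perm α) (i : α) : ρ g (ρ (swap p i) y) = ρ (swap p (g i)) y := by
    simpa using congr(ρ (swap p (g i)) $(hyfix (g := swap p (g i) * g * swap p i) (by simp)))
  refine ⟨permutationLift _ hequiv, fun heq ↦ smul_ne_zero hK hx0 ?_⟩
  rw [← h.sum_sub_swap_sum hpq hx hcard, sub_eq_zero]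
  simpa only [permutationLift_single, swap_self, refl_apply] using heq

end FixesDisjointRoots

section PermutationModule

variable {α R : Type*} [CommRing R]

theorem sub_ofMulAction_swap [DecidableEq α] (c : MonoidAlgebra R α) (i j : α) :
    c - ofMulAction R (Perm α) α (swap i j) c =
      (c.coeff i - c.coeff j) • (.single i 1 - .single j 1) := by
  ext k
  simp only [MonoidAlgebra.coeff_sub, Finsupp.coe_sub, Pi.sub_apply, coeff_ofMulAction, swap_inv,
    Perm.smul_def, swap_apply_def, MonoidAlgebra.coeff_smul, MonoidAlgebra.coeff_single,
    Finsupp.coe_smul, Pi.smul_apply, Finsupp.single_apply, smul_eq_mul]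
  grind

variable [Fintype α]

theorem ofMulAction_sum_single (g : Perm α) :
    ofMulAction R (Perm α) α g (∑ i, .single i 1) = ∑ i, .single i 1 := by
  simpa [ofMulAction_single] using Equiv.sum_comp g fun i ↦ MonoidAlgebra.single i (1 : R)

variable (R α) in
/-- The standard representation of `Perm α`, as the quotient of the permutation representation
`R[α]` by the line spanned by the all-ones vector. -/
noncomputable def standard :
    Representation R (Perm α) (MonoidAlgebra R α ⧸ R ∙ (∑ i, .single i 1 : MonoidAlgebra R α)) :=
  (ofMulAction R (Perm α) α).quotient _ fun g ↦ by
    rw [Submodule.span_singleton_le_iff_mem, Submodule.mem_comap, ofMulAction_sum_single]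
    exact Submodule.mem_span_singleton_self _

end PermutationModule

section Standard

variable {α K V : Type*} [Field K] [AddCommGroup V] [Module K V] {ρ : Representation K (Perm α) V}
  {f : IntertwiningMap (ofMulAction K (Perm α) α) ρ}

theorem apply_single_ne_of_ne {p q : α} (hf : f (.single p 1) ≠ f (.single q 1)) {i j : α}
    (hij : i ≠ j) : f (.single i 1) ≠ f (.single j 1) := by
  obtain ⟨g, hg⟩ := exists_perm_map_eq (l := [i, j]) (l' := [p, q])
    (by simpa) (by simpa using ne_of_apply_ne (fun i ↦ f (.single i 1)) hf) rfl
  obtain ⟨rfl, rfl⟩ : g i = p ∧ g j = q := by simpa using hg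
  refine fun h ↦ hf ?_
  simpa [ofMulAction_single, ← IntertwiningMap.isIntertwining] using congr(ρ g $h)

variable [Fintype α]

theorem ker_le_span_sum_single {p q : α} (hf : f (.single p 1) ≠ f (.single q 1)) :
    f.toLinearMap.ker ≤ K ∙ (∑ i, .single i 1 : MonoidAlgebra K α) := by
  classical
  intro c (hc : f c = 0)
  have hcoeff (i : α) : c.coeff i = c.coeff p := by
    by_contra h
    have hne : f (.single i 1) ≠ f (.single p 1) :=
      apply_single_ne_of_ne hf (by rintro rfl; exact h rfl)
    refine sub_ne_zero.2 hne ((smul_eq_zero.1 ?_).resolve_left (sub_ne_zero.2 h))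
    rw [← map_sub f, ← map_smul, ← sub_ofMulAction_swap, map_sub,
      IntertwiningMap.isIntertwining, hc, map_zero, sub_zero]
  refine Submodule.mem_span_singleton.2 ⟨c.coeff p, ?_⟩
  ext k
  simp [hcoeff k, Finsupp.single_apply]

theorem card_le_finrank_range_add_one {p q : α} (hf : f (.single p 1) ≠ f (.single q 1)) :
    Fintype.card α ≤ finrank K f.toLinearMap.range + 1 := by
  have hsum := f.toLinearMap.finrank_range_add_finrank_ker
  have hker := (Submodule.finrank_mono (ker_le_span_sum_single hf)).trans
    (finrank_span_le_card _)
  rw [(MonoidAlgebra.coeffLinearEquiv K).finrank_eq, finrank_finsupp_self] at hsum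
  rw [Set.toFinset_card, Fintype.card_unique] at hker
  omega

theorem nonempty_standard_equiv_of_single_ne [ρ.IsIrreducible] (hcard : 3 ≤ Fintype.card α)
    {p q : α} (hf : f (.single p 1) ≠ f (.single q 1)) : Nonempty ((standard α K).Equiv ρ) := by
  classical
  have hsurj : Function.Surjective f :=
    (IsIrreducible.surjective_or_eq_zero f).resolve_right fun h ↦ hf (by simp [h])
  have hsum : f (∑ i, .single i 1) = 0 := by
    by_contra hne
    have hle := finrank_le_one_of_forall_swap hne (1 : K) fun a b _ ↦ by
      rw [one_smul, ← IntertwiningMap.isIntertwining, ofMulAction_sum_single]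
    have := card_le_finrank_range_add_one hf
    rw [LinearMap.range_eq_top.2 hsurj, finrank_top] at this
    omega
  have hker : K ∙ (∑ i, .single i 1 : MonoidAlgebra K α) = f.toLinearMap.ker :=
    ((Submodule.span_singleton_le_iff_mem _ _).2 hsum).antisymm (ker_le_span_sum_single hf)
  refine ⟨.mk ((Submodule.quotEquivOfEq _ _ hker).trans
    (f.toLinearMap.quotKerEquivOfSurjective hsurj)) fun g ↦ Submodule.linearMap_qext _ ?_⟩
  ext i
  exact f.isIntertwining _ _ g _

end Standard

section SignTwist

variable {α R V W : Type*} [DecidableEq α] [Fintype α] [CommRing R] [AddCommGroup V] [Module R V]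
  [AddCommGroup W] [Module R W] {ρ : Representation R (Perm α) V} {σ : Representation R (Perm α) W}

/-- The tensor product of `ρ` with the sign character, realised on the space of `ρ`. -/
def signTwist (ρ : Representation R (Perm α) V) : Representation R (Perm α) V where
  toFun g := Perm.sign g • ρ g
  map_one' := by simp
  map_mul' g h := by simp [smul_mul_smul_comm]

theorem signTwist_apply (g : Perm α) (v : V) : signTwist ρ g v = Perm.sign g • ρ g v := rfl

@[simp]
theorem signTwist_signTwist : signTwist (signTwist ρ) = ρ := by
  ext g v
  simp [signTwist_apply, smul_smul]

theorem signTwist_swap {a b : α} (hab : a ≠ b) : signTwist ρ (swap a b) = -ρ (swap a b) := by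
  ext v
  simp [signTwist_apply, hab]

theorem signTwist_apply_mem_iff {p : Submodule R V} (g : Perm α) (v : V) :
    signTwist ρ g v ∈ p ↔ ρ g v ∈ p := by
  obtain h | h := Int.units_eq_one_or (Perm.sign g) <;> simp [signTwist_apply, h]

theorem eigenspace_signTwist_swap {a b : α} (hab : a ≠ b) (μ : R) :
    End.eigenspace (signTwist ρ (swap a b)) μ = End.eigenspace (ρ (swap a b)) (-μ) := by
  ext v
  simp [signTwist_swap hab, neg_eq_iff_eq_neg]

/-- An isomorphism of representations is also one between their sign twists. -/
def signTwistEquiv (e : ρ.Equiv σ) : (signTwist ρ).Equiv (signTwist σ) :=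
  .mk e.toLinearEquiv fun g ↦ by
    ext v
    simp only [signTwist_apply, LinearMap.coe_comp, Function.comp_apply, Units.smul_def, map_zsmul]
    exact congr(_ • $(e.toIntertwiningMap.isIntertwining _ _ g v))

end SignTwist

instance {α K V : Type*} [DecidableEq α] [Fintype α] [Field K] [AddCommGroup V] [Module K V]
    {ρ : Representation K (Perm α) V} [ρ.IsIrreducible] : (signTwist ρ).IsIrreducible :=
  let e : Subrepresentation (signTwist ρ) ≃o Subrepresentation ρ :=
    { toFun := fun p ↦ ⟨p.toSubmodule, fun g v hv ↦
        (signTwist_apply_mem_iff g v).1 (p.apply_mem_toSubmodule g hv)⟩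
      invFun := fun p ↦ ⟨p.toSubmodule, fun g v hv ↦
        (signTwist_apply_mem_iff g v).2 (p.apply_mem_toSubmodule g hv)⟩
      left_inv := fun _ ↦ rfl
      right_inv := fun _ ↦ rfl
      map_rel_iff' := Iff.rfl }
  e.isSimpleOrder

section Conjugation

variable {α R V : Type*} [DecidableEq α] [CommRing R] [AddCommGroup V] [Module R V]
  {ρ : Representation R (Perm α) V}

theorem swap_eq_swap_of_nodup {a b c d : α} (hd : [a, b, c, d].Nodup)
    (h : ρ (swap a b) = ρ (swap c d)) {a' b' c' d' : α} (hd' : [a', b', c', d'].Nodup) :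
    ρ (swap a' b') = ρ (swap c' d') := by
  obtain ⟨g, hg⟩ := exists_perm_map_eq hd hd' rfl
  obtain ⟨rfl, rfl, rfl, rfl⟩ : g a = a' ∧ g b = b' ∧ g c = c' ∧ g d = d' := by simpa using hg
  simp only [swap_apply_apply, map_mul, h]

theorem finrank_eigenspace_swap_eq (ρ : Representation R (Perm α) V)
    {a b c d : α} (hab : a ≠ b) (hcd : c ≠ d) (μ : R) :
    finrank R (End.eigenspace (ρ (swap a b)) μ) = finrank R (End.eigenspace (ρ (swap c d)) μ) := by
  obtain ⟨g, hg⟩ := exists_perm_map_eq (l := [a, b]) (l' := [c, d]) (by simpa) (by simpa) rfl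
  obtain ⟨rfl, rfl⟩ : g a = c ∧ g b = d := by simpa using hg
  have hinj := (apply_bijective ρ g).injective
  have hmap : (End.eigenspace (ρ (swap a b)) μ).map (ρ g) =
      End.eigenspace (ρ (swap (g a) (g b))) μ := by
    ext v
    obtain ⟨w, rfl⟩ := (apply_bijective ρ g).surjective v
    rw [← SetLike.mem_coe, Submodule.map_coe, hinj.mem_set_image, SetLike.mem_coe,
      End.mem_eigenspace_iff, End.mem_eigenspace_iff, ← apply_swap_apply, ← map_smul, hinj.eq_iff]
  rw [← hmap]
  exact (Submodule.equivMapOfInjective (ρ g) hinj _).finrank_eq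

theorem apply_mem_eigenspace_swap {g : Perm α} {a b : α} (ha : g a = a) (hb : g b = b) {μ : R}
    {v : V} (hv : v ∈ End.eigenspace (ρ (swap a b)) μ) :
    ρ g v ∈ End.eigenspace (ρ (swap a b)) μ := by
  rw [End.mem_eigenspace_iff] at hv ⊢
  rw [← map_smul, ← hv, apply_swap_apply, ha, hb]

/-- An eigenspace of the transposition `(a b)`, as a representation of the permutations of the
remaining points. -/
def swapEigenspace (ρ : Representation R (Perm α) V) (a b : α) (μ : R) :
    Subrepresentation (ρ.comp (Perm.ofSubtype (p := (· ∉ ({a, b} : Finset α))))) where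
  toSubmodule := End.eigenspace (ρ (swap a b)) μ
  apply_mem_toSubmodule g _ := apply_mem_eigenspace_swap
    (Perm.ofSubtype_apply_of_not_mem _ (by simp)) (Perm.ofSubtype_apply_of_not_mem _ (by simp))

theorem coe_swapEigenspace_swap {a b : α} {μ : R} (c d : {y // y ∉ ({a, b} : Finset α)})
    (v : (swapEigenspace ρ a b μ).toSubmodule) :
    ((swapEigenspace ρ a b μ).toRepresentation (swap c d) v : V) = ρ (swap c d) v :=
  congr(ρ $(Perm.ofSubtype_swap_eq c d) v)

end Conjugation

section SmallDimension

variable {α K V : Type*} [DecidableEq α] [Fintype α] [Field K] [AddCommGroup V] [Module K V]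
  [FiniteDimensional K V] {ρ : Representation K (Perm α) V}

theorem FixesDisjointRoots.swap_eq_one [NeZero (2 : K)] (h : FixesDisjointRoots ρ)
    (hcard : 4 ≤ Fintype.card α) (hK : (Fintype.card α : K) ≠ 0)
    (hV : finrank K V + 2 ≤ Fintype.card α) {a b : α} (hab : a ≠ b) : ρ (swap a b) = 1 := by
  have hroot : End.eigenspace (ρ (swap a b)) (-1) = ⊥ := by
    by_contra hne
    obtain ⟨x, hx, hx0⟩ := Submodule.exists_mem_ne_zero_of_ne_bot hne
    obtain ⟨f, hf⟩ := h.exists_intertwiningMap_single_ne hab (by simpa using hx) hK hcard hx0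
    have := card_le_finrank_range_add_one hf
    have := f.toLinearMap.range.finrank_le
    omega
  ext v
  have hmem : ρ (swap a b) v - v ∈ End.eigenspace (ρ (swap a b)) (-1) := by simp
  rw [hroot, Submodule.mem_bot, sub_eq_zero] at hmem
  exact hmem

theorem swap_eq_swap_of_finrank_eigenspace_le_one [NeZero (2 : K)]
    (hK : (Fintype.card α : K) ≠ 0) (hV : finrank K V + 2 ≤ Fintype.card α) {a b c d : α}
    (hd : [a, b, c, d].Nodup) (h : finrank K (End.eigenspace (ρ (swap a b)) (-1)) ≤ 1) :
    ρ (swap a b) = ρ (swap c d) := by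
  by_cases hfix : FixesDisjointRoots ρ
  · have hcard : 4 ≤ Fintype.card α := hd.length_le_card
    rw [hfix.swap_eq_one hcard hK hV (by grind), hfix.swap_eq_one hcard hK hV (by grind)]
  simp only [FixesDisjointRoots, not_forall] at hfix
  obtain ⟨a', b', c', d', hd', v, hv, hne⟩ := hfix
  refine swap_eq_swap_of_nodup hd' ?_ hd
  have hcomm := swap_apply_comm_of_nodup (ρ := ρ) hd'
  have hw : v - ρ (swap c' d') v ≠ 0 := sub_ne_zero.2 (Ne.symm hne)
  have heigenspace {e f : α} (hef : e ≠ f)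
      (hmem : v - ρ (swap c' d') v ∈ End.eigenspace (ρ (swap e f)) (-1)) :
      K ∙ (v - ρ (swap c' d') v) = End.eigenspace (ρ (swap e f)) (-1) :=
    Submodule.eq_of_le_of_finrank_le ((Submodule.span_singleton_le_iff_mem _ _).2 hmem)
      (by
        rw [finrank_span_singleton hw]
        exact (finrank_eigenspace_swap_eq ρ hef (by grind) _).trans_le h)
  refine eq_of_eigenspace_neg_one_eq (swap_apply_swap_apply _ _) (swap_apply_swap_apply _ _) hcomm
    ((heigenspace (by grind) ?_).symm.trans (heigenspace (by grind) ?_))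
  · simp [hcomm, hv, neg_add_eq_sub]
  · simp

end SmallDimension

theorem swap_eq_swap_of_nodup_of_finrank_add_two_le {α K V : Type*} [DecidableEq α] [Fintype α]
    [Field K] [AddCommGroup V] [Module K V] [FiniteDimensional K V]
    (ρ : Representation K (Perm α) V)
    (hK : ((Fintype.card α)! : K) ≠ 0) (hV : finrank K V + 2 ≤ Fintype.card α) {a b c d : α}
    (hd : [a, b, c, d].Nodup) : ρ (swap a b) = ρ (swap c d) := by
  have hcard : 4 ≤ Fintype.card α := hd.length_le_card
  have hK_card : (Fintype.card α : K) ≠ 0 := natCast_ne_zero_of_factorial hK (by omega) le_rfl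
  have : NeZero (2 : K) := neZero_two_of_factorial hK (by omega)
  by_cases hneg : finrank K (End.eigenspace (ρ (swap a b)) (-1)) ≤ 1
  · exact swap_eq_swap_of_finrank_eigenspace_le_one hK_card hV hd hneg
  by_cases hpos : finrank K (End.eigenspace (ρ (swap a b)) 1) ≤ 1
  · rw [← neg_inj, ← signTwist_swap (by grind), ← signTwist_swap (by grind)]
    refine swap_eq_swap_of_finrank_eigenspace_le_one hK_card hV hd ?_
    rwa [eigenspace_signTwist_swap (by grind), neg_neg]
  have hsum := finrank_eigenspace_one_add_neg_one (swap_apply_swap_apply (ρ := ρ) a b)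
  have hsub := card_subtype_notMem_pair (α := α) (a := a) (b := b) (by grind)
  obtain ⟨e, f, hef, he, hf⟩ := exists_pair_notMem (s := {a, b, c, d})
    (by have := Finset.card_le_four (a := a) (b := b) (c := c) (d := d); omega)
  have heq (μ : K) (hμ : finrank K (End.eigenspace (ρ (swap a b)) μ) + 4 ≤ Fintype.card α) :
      Set.EqOn (ρ (swap c d)) (ρ (swap e f)) (End.eigenspace (ρ (swap a b)) μ) := fun v hv ↦ by
    have hrestrict := swap_eq_swap_of_nodup_of_finrank_add_two_le
      (swapEigenspace ρ a b μ).toRepresentation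
      (ne_zero_of_dvd_ne_zero hK (Nat.cast_dvd_cast (Nat.factorial_dvd_factorial (by omega))))
      (show finrank K (End.eigenspace (ρ (swap a b)) μ) + 2 ≤ _ by omega)
      (a := ⟨c, by grind⟩) (b := ⟨d, by grind⟩) (c := ⟨e, by grind⟩) (d := ⟨f, by grind⟩)
      (by grind)
    simpa only [coe_swapEigenspace_swap] using congr(($hrestrict ⟨v, hv⟩ : V))
  refine swap_eq_swap_of_nodup (a := c) (b := d) (c := e) (d := f) (by grind) ?_ hd
  exact LinearMap.ext_on_codisjoint
    (isCompl_eigenspace_one_neg_one (swap_apply_swap_apply (ρ := ρ) a b)).codisjoint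
    (heq 1 (by omega)) (heq (-1) (by omega))
termination_by Fintype.card α
decreasing_by omega

section Classification

variable {α K V : Type*} [DecidableEq α] [Fintype α] [Field K] [AddCommGroup V] [Module K V]
  [FiniteDimensional K V] {ρ : Representation K (Perm α) V}

theorem swap_eq_swap_of_finrank_add_two_le (hcard : 5 ≤ Fintype.card α)
    (hK : ((Fintype.card α)! : K) ≠ 0) (hV : finrank K V + 2 ≤ Fintype.card α) {a b c d : α}
    (hab : a ≠ b) (hcd : c ≠ d) : ρ (swap a b) = ρ (swap c d) := by
  by_cases hd : [a, b, c, d].Nodup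
  · exact swap_eq_swap_of_nodup_of_finrank_add_two_le ρ hK hV hd
  have hle : ({a, b, c, d} : Finset α).card ≤ 3 := by
    have hne : ({a, b, c, d} : Finset α).card ≠ 4 := fun h ↦ hd <|
      (Multiset.toFinset_card_eq_card_iff_nodup (m := (↑[a, b, c, d] : Multiset α))).1
        (by simpa using h)
    exact Nat.le_of_lt_succ (Finset.card_le_four.lt_of_ne hne)
  obtain ⟨e, f, hef, he, hf⟩ := exists_pair_notMem (s := {a, b, c, d}) (by omega)
  calc ρ (swap a b) = ρ (swap e f) :=
      swap_eq_swap_of_nodup_of_finrank_add_two_le ρ hK hV (by grind)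
    _ = ρ (swap c d) := swap_eq_swap_of_nodup_of_finrank_add_two_le ρ hK hV (by grind)

section

variable (hcard : 7 ≤ Fintype.card α) (hK : ((Fintype.card α)! : K) ≠ 0)
  (hroot : ∀ a b, a ≠ b → finrank K (End.eigenspace (ρ (swap a b)) (-1)) + 4 ≤ Fintype.card α)
include hcard hK hroot

theorem swap_apply_eq_swap_apply_of_root {a b c d x y : α} (hcd : [a, b, c, d].Nodup)
    (hxy : [a, b, x, y].Nodup) {z : V} (hz : ρ (swap a b) z = -z) :
    ρ (swap c d) z = ρ (swap x y) z := by
  have hab : a ≠ b := by grind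
  have hsub := card_subtype_notMem_pair hab
  have hrestrict := swap_eq_swap_of_finrank_add_two_le
    (ρ := (swapEigenspace ρ a b (-1)).toRepresentation) (by omega)
    (ne_zero_of_dvd_ne_zero hK (Nat.cast_dvd_cast (Nat.factorial_dvd_factorial (by omega))))
    (show finrank K (End.eigenspace (ρ (swap a b)) (-1)) + 2 ≤ _ by have := hroot a b hab; omega)
    (a := ⟨c, by grind⟩) (b := ⟨d, by grind⟩) (c := ⟨x, by grind⟩) (d := ⟨y, by grind⟩)
    (by grind) (by grind)
  simpa only [coe_swapEigenspace_swap] using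
    congr(($hrestrict ⟨z, by simpa [swapEigenspace] using hz⟩ : V))

theorem swap_apply_eq_neg_of_disjoint_roots {a b c d : α} (hd : [a, b, c, d].Nodup) {z : V}
    (hab : ρ (swap a b) z = -z) (hcd : ρ (swap c d) z = -z) {x y : α} (hxy : x ≠ y) :
    ρ (swap x y) z = -z := by
  obtain ⟨e, f, hef, he, hf⟩ := exists_pair_notMem (s := {a, b, x, y})
    (by have := Finset.card_le_four (a := a) (b := b) (c := x) (d := y); omega)
  have hz : ρ (swap e f) z = -z :=
    (swap_apply_eq_swap_apply_of_root hcard hK hroot (by grind) hd hab).trans hcd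
  exact (swap_apply_eq_swap_apply_of_root hcard hK hroot (by grind) (by grind) hz).trans hab

theorem fixesDisjointRoots_of_finrank_eigenspace_le [ρ.IsIrreducible]
    (hV : 2 ≤ finrank K V) : FixesDisjointRoots ρ := by
  intro a b c d hd v hv
  by_contra hne
  have hcomm := swap_apply_comm_of_nodup (ρ := ρ) hd v
  have hle := finrank_le_one_of_forall_swap (ρ := ρ) (sub_ne_zero.2 (Ne.symm hne)) (-1 : K)
    fun x y hxy ↦ by
      rw [neg_one_smul]
      exact swap_apply_eq_neg_of_disjoint_roots hcard hK hroot hd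
        (by simp [hcomm, hv, neg_add_eq_sub]) (by simp) hxy
  omega

theorem nonempty_standard_equiv_of_finrank_eigenspace_le [ρ.IsIrreducible]
    (hV : 2 ≤ finrank K V) : Nonempty ((standard α K).Equiv ρ) := by
  have : NeZero (2 : K) := neZero_two_of_factorial hK (by omega)
  obtain ⟨p, q, hpq, x, hx0, hx⟩ : ∃ p q, p ≠ q ∧ ∃ x : V, x ≠ 0 ∧ ρ (swap p q) x = -x := by
    by_contra! hno
    have : Nontrivial V := Module.nontrivial_of_finrank_pos (R := K) (by omega)
    obtain ⟨v, hv⟩ := exists_ne (0 : V)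
    have hle := finrank_le_one_of_forall_swap (ρ := ρ) hv (1 : K) fun a b hab ↦ by
      rw [one_smul, ← sub_eq_zero]
      by_contra hne
      exact hno a b hab _ hne (by simp)
    omega
  have hfix := fixesDisjointRoots_of_finrank_eigenspace_le hcard hK hroot hV
  obtain ⟨f, hf⟩ := hfix.exists_intertwiningMap_single_ne hpq hx
    (natCast_ne_zero_of_factorial hK (by omega) le_rfl) (by omega) hx0
  exact nonempty_standard_equiv_of_single_ne (by omega) hf

end

theorem nonempty_standard_equiv_or_signTwist (ρ : Representation K (Perm α) V) [ρ.IsIrreducible]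
    (hcard : 7 ≤ Fintype.card α) (hK : ((Fintype.card α)! : K) ≠ 0) (hV : 2 ≤ finrank K V)
    (hV' : finrank K V + 6 < 2 * Fintype.card α) :
    Nonempty ((standard α K).Equiv ρ) ∨ Nonempty ((standard α K).Equiv (signTwist ρ)) := by
  have : NeZero (2 : K) := neZero_two_of_factorial hK (by omega)
  by_cases hroot : ∀ a b, a ≠ b →
      finrank K (End.eigenspace (ρ (swap a b)) (-1)) + 4 ≤ Fintype.card α
  · exact .inl (nonempty_standard_equiv_of_finrank_eigenspace_le hcard hK hroot hV)
  push Not at hroot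
  obtain ⟨c, d, hcd, hlt⟩ := hroot
  refine .inr (nonempty_standard_equiv_of_finrank_eigenspace_le hcard hK (fun a b hab ↦ ?_) hV)
  have hsum := finrank_eigenspace_one_add_neg_one (swap_apply_swap_apply (ρ := ρ) a b)
  have heq := finrank_eigenspace_swap_eq ρ hcd hab (-1)
  rw [eigenspace_signTwist_swap hab, neg_neg]
  omega

end Classification

theorem nonempty_equiv_or_nonempty_equiv_signTwist {α K V W : Type*} [Fintype α]
    [DecidableEq α] [Field K] [AddCommGroup V] [Module K V] [AddCommGroup W] [Module K W]
    (ρ : Representation K (Perm α) V) (σ : Representation K (Perm α) W)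
    [ρ.IsIrreducible] [σ.IsIrreducible]
    (hcard : 7 ≤ Fintype.card α) (hK : ((Fintype.card α)! : K) ≠ 0)
    (hV : 2 ≤ finrank K V) (hV' : finrank K V + 6 < 2 * Fintype.card α)
    (hW : 2 ≤ finrank K W) (hW' : finrank K W + 6 < 2 * Fintype.card α) :
    Nonempty (ρ.Equiv σ) ∨ Nonempty (ρ.Equiv (signTwist σ)) := by
  have : FiniteDimensional K V := FiniteDimensional.of_finrank_pos (by omega)
  have : FiniteDimensional K W := FiniteDimensional.of_finrank_pos (by omega)
  obtain ⟨⟨eρ⟩⟩ | ⟨⟨eρ⟩⟩ := nonempty_standard_equiv_or_signTwist ρ hcard hK hV hV' <;>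
    obtain ⟨⟨eσ⟩⟩ | ⟨⟨eσ⟩⟩ := nonempty_standard_equiv_or_signTwist σ hcard hK hW hW'
  · exact .inl ⟨eρ.symm.trans eσ⟩
  · exact .inr ⟨eρ.symm.trans eσ⟩
  · have e := signTwistEquiv (eρ.symm.trans eσ)
    rw [signTwist_signTwist] at e
    exact .inr ⟨e⟩
  · have e := signTwistEquiv (eρ.symm.trans eσ)
    rw [signTwist_signTwist, signTwist_signTwist] at e
    exact .inl ⟨e⟩

theorem isIrreducible_of_forall_invariant {K G V : Type*} [Field K] [Monoid G] [AddCommGroup V]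
    [Module K V] [Nontrivial V] {ρ : Representation K G V}
    (h : ∀ p : Submodule K V, (∀ g, ∀ v ∈ p, ρ g v ∈ p) → p = ⊥ ∨ p = ⊤) : ρ.IsIrreducible where
  exists_pair_ne := ⟨⊥, ⊤, fun h ↦ bot_ne_top (α := Submodule K V) congr(($h).toSubmodule)⟩
  eq_bot_or_eq_top p := (h p.toSubmodule p.apply_mem_toSubmodule).imp
    (fun h ↦ Subrepresentation.toSubmodule_injective h)
    (fun h ↦ Subrepresentation.toSubmodule_injective h)

end PermRep

open PermRep

theorem stmt_2_general {α K V W : Type*} [Fintype α] [DecidableEq α] [Field K]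
    [AddCommGroup V] [Module K V] [AddCommGroup W] [Module K W]
    (hcard : 7 ≤ Fintype.card α) (hK : ((Fintype.card α)! : K) ≠ 0)
    (hV : 2 ≤ finrank K V) (hV' : finrank K V + 6 < 2 * Fintype.card α)
    (hW : 2 ≤ finrank K W) (hW' : finrank K W + 6 < 2 * Fintype.card α)
    (ρ : Perm α →* LinearMap.GeneralLinearGroup K V)
    (σ : Perm α →* LinearMap.GeneralLinearGroup K W)
    (hρ : ∀ p : Submodule K V, (∀ g, ∀ v ∈ p, (ρ g : V →ₗ[K] V) v ∈ p) → p = ⊥ ∨ p = ⊤)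
    (hσ : ∀ p : Submodule K W, (∀ g, ∀ w ∈ p, (σ g : W →ₗ[K] W) w ∈ p) → p = ⊥ ∨ p = ⊤) :
    ∃ T : V ≃ₗ[K] W,
      (∀ g v, T ((ρ g : V →ₗ[K] V) v) = (σ g : W →ₗ[K] W) (T v)) ∨
      (∀ g v, T ((ρ g : V →ₗ[K] V) v) = (Perm.sign g : ℤ) • (σ g : W →ₗ[K] W) (T v)) := by
  have : Nontrivial V := Module.nontrivial_of_finrank_pos (R := K) (by omega)
  have : Nontrivial W := Module.nontrivial_of_finrank_pos (R := K) (by omega)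
  let ρ' : Representation K (Perm α) V := (Units.coeHom _).comp ρ
  let σ' : Representation K (Perm α) W := (Units.coeHom _).comp σ
  have : ρ'.IsIrreducible := isIrreducible_of_forall_invariant hρ
  have : σ'.IsIrreducible := isIrreducible_of_forall_invariant hσ
  obtain ⟨⟨e⟩⟩ | ⟨⟨e⟩⟩ :=
    nonempty_equiv_or_nonempty_equiv_signTwist ρ' σ' hcard hK hV hV' hW hW'
  · exact ⟨e.toLinearEquiv, .inl fun g v ↦ e.toIntertwiningMap.isIntertwining _ _ g v⟩
  · exact ⟨e.toLinearEquiv, .inr fun g v ↦ e.toIntertwiningMap.isIntertwining _ _ g v⟩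

/-- For `k ≥ 7`, any two irreducible complex representations of `S_k` of
dimension `k - 1` are isomorphic either directly or after twisting by the sign
character. -/
theorem stmt_2 (k : ℕ) (hk : 7 ≤ k)
    (V W : Type*) [AddCommGroup V] [Module ℂ V] [AddCommGroup W] [Module ℂ W]
    (hV : Module.finrank ℂ V = k - 1) (hW : Module.finrank ℂ W = k - 1)
    (ρ : Equiv.Perm (Fin k) →* LinearMap.GeneralLinearGroup ℂ V)
    (σ : Equiv.Perm (Fin k) →* LinearMap.GeneralLinearGroup ℂ W)
    (hρ : ∀ p : Submodule ℂ V,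
      (∀ g : Equiv.Perm (Fin k), ∀ v ∈ p, (ρ g : V →ₗ[ℂ] V) v ∈ p) → p = ⊥ ∨ p = ⊤)
    (hσ : ∀ p : Submodule ℂ W,
      (∀ g : Equiv.Perm (Fin k), ∀ w ∈ p, (σ g : W →ₗ[ℂ] W) w ∈ p) → p = ⊥ ∨ p = ⊤) :
    ∃ T : V ≃ₗ[ℂ] W,
      (∀ (g : Equiv.Perm (Fin k)) (v : V),
        T ((ρ g : V →ₗ[ℂ] V) v) = (σ g : W →ₗ[ℂ] W) (T v)) ∨
      (∀ (g : Equiv.Perm (Fin k)) (v : V),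
        T ((ρ g : V →ₗ[ℂ] V) v) = (Equiv.Perm.sign g : ℤ) • (σ g : W →ₗ[ℂ] W) (T v)) := by
  have hcard : Fintype.card (Fin k) = k := Fintype.card_fin k
  exact stmt_2_general (by omega) (Nat.cast_ne_zero.2 (Nat.factorial_ne_zero _)) (by omega)
    (by omega) (by omega) (by omega) ρ σ hρ hσ
end

section
/- Let k ≥ 5 and let m be an integer with 1 ≤ m ≤ k − 2. Then the image of every group homomorphism f : S_k → GL(m, ℂ) is an abelian group. -/
/-!
It suffices to show that the products of two disjoint transpositions act trivially, because they
generate the alternating group, which contains all commutators.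

Let `n` be the number of points, so that the representation has dimension at most `n - 2`. If some
transposition acts as a reflection (or as the identity), perhaps after twisting by the sign
character, and disjoint transpositions act differently, then the roots of the reflections can be
normalised to vectors `e i j` which are permuted like `ε i - ε j` and satisfy
`e i j + e j k = e i k`. For a fixed `i` the `n - 1` vectors `e i j` are linearly independent,
which is impossible. Otherwise both eigenspaces of each transposition have dimension at least `2`,
hence at most `n - 4`, and they are representations of the symmetric group on the remaining
`n - 2` points, to which induction applies.
-/

namespace SymmetricRep

open Equiv Module Module.End
open scoped commutatorElement

section Eigenspace

variable {R M : Type*} [CommRing R] [AddCommGroup M] [Module R M] {s : End R M}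

lemma mem_eigenspace_one {x : M} : x ∈ eigenspace s 1 ↔ s x = x := by
  rw [mem_eigenspace_iff, one_smul]

lemma mem_eigenspace_neg_one {x : M} : x ∈ eigenspace s (-1) ↔ s x = -x := by
  rw [mem_eigenspace_iff, neg_one_smul]

lemma apply_apply_of_mul_self (hs : s * s = 1) (x : M) : s (s x) = x :=
  LinearMap.congr_fun hs x

lemma apply_sub_self_mem_eigenspace (hs : s * s = 1) (x : M) :
    s x - x ∈ eigenspace s (-1) := by
  rw [mem_eigenspace_neg_one, map_sub, apply_apply_of_mul_self hs, neg_sub]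

lemma finrank_eigenspace_eq_of_isConj {G : Type*} [Group G] (ρ : Representation R G M) {g h : G}
    (hgh : IsConj g h) (μ : R) :
    finrank R (eigenspace (ρ g) μ) = finrank R (eigenspace (ρ h) μ) := by
  obtain ⟨c, rfl⟩ := isConj_iff.mp hgh
  let e : M ≃ₗ[R] M := LinearEquiv.ofLinearMap (ρ c) (ρ c⁻¹)
    (LinearMap.ext (ρ.self_inv_apply c)) (LinearMap.ext (ρ.inv_self_apply c))
  have hmap : (eigenspace (ρ g) μ).map (e : M →ₗ[R] M) = eigenspace (ρ (c * g * c⁻¹)) μ := by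
    ext x
    rw [Submodule.mem_map_equiv, mem_eigenspace_iff, mem_eigenspace_iff,
      ← (ρ.apply_bijective c).injective.eq_iff]
    simp [e]
  rw [← hmap, LinearEquiv.finrank_map_eq e]

end Eigenspace

section Involution

variable {K V : Type*} [Field K] [AddCommGroup V] [Module K V] {s t : End K V}

lemma exists_smul_eq_of_finrank_le_one [FiniteDimensional K V] {W : Submodule K V}
    (hW : finrank K W ≤ 1) {v w : V} (hv : v ∈ W) (hv0 : v ≠ 0) (hw : w ∈ W) :
    ∃ c : K, c • v = w := by
  have hv0' : (⟨v, hv⟩ : W) ≠ 0 := by simpa using hv0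
  have hW1 : finrank K W = 1 := hW.antisymm (finrank_pos_iff_exists_ne_zero.mpr ⟨_, hv0'⟩)
  obtain ⟨c, hc⟩ := exists_smul_eq_of_finrank_eq_one hW1 hv0' ⟨w, hw⟩
  exact ⟨c, congrArg Subtype.val hc⟩

variable (K) in
lemma eq_zero_of_eq_neg_self [NeZero (2 : K)] {x : V} (h : x = -x) : x = 0 := by
  have h2 : (2 : K) • x = 0 := by rw [two_smul, ← eq_neg_iff_add_eq_zero]; exact h
  exact (smul_eq_zero.mp h2).resolve_left two_ne_zero

variable [NeZero (2 : K)]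

lemma isCompl_eigenspace_one_neg_one (hs : s * s = 1) :
    IsCompl (eigenspace s 1) (eigenspace s (-1)) := by
  refine IsCompl.of_le ?_ fun x _ ↦ ?_
  · rintro x ⟨hpos, hneg⟩
    exact eq_zero_of_eq_neg_self K
      ((mem_eigenspace_one.mp hpos).symm.trans (mem_eigenspace_neg_one.mp hneg))
  · have hx : x = (2⁻¹ : K) • (s x + x) - (2⁻¹ : K) • (s x - x) := by
      rw [← smul_sub, add_sub_sub_cancel, ← two_smul K, inv_smul_smul₀ two_ne_zero]
    have hadd : s x + x ∈ eigenspace s 1 := by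
      rw [mem_eigenspace_one, map_add, apply_apply_of_mul_self hs, add_comm]
    rw [hx]
    exact Submodule.sub_mem_sup (Submodule.smul_mem _ _ hadd)
      (Submodule.smul_mem _ _ (apply_sub_self_mem_eigenspace hs x))

/- If `t v ≠ v`, then `t v - v` is a common root of both reflections, so `s x - t x` is a multiple
of it; applying `s` and `t` to `s x - t x` forces `s = t`. -/
lemma apply_eq_self_of_commute_of_ne [FiniteDimensional K V] (hs : s * s = 1) (ht : t * t = 1)
    (hst : Commute s t) (hs1 : finrank K (eigenspace s (-1)) ≤ 1)
    (ht1 : finrank K (eigenspace t (-1)) ≤ 1) (hne : s ≠ t) {v : V}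
    (hv : v ∈ eigenspace s (-1)) : t v = v := by
  by_contra htv
  have hst' (x : V) : s (t x) = t (s x) := LinearMap.congr_fun hst x
  set w := t v - v with hw
  have hw0 : w ≠ 0 := sub_ne_zero.mpr htv
  have hwt : w ∈ eigenspace t (-1) := apply_sub_self_mem_eigenspace ht v
  have hws : w ∈ eigenspace s (-1) := by
    rw [mem_eigenspace_neg_one] at hv ⊢
    rw [hw, map_sub, hst', hv, map_neg, neg_sub', sub_neg_eq_add]
  refine hne (LinearMap.ext fun x ↦ sub_eq_zero.mp ?_)
  obtain ⟨c, hc⟩ := exists_smul_eq_of_finrank_le_one hs1 hws hw0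
    (apply_sub_self_mem_eigenspace hs x)
  obtain ⟨d, hd⟩ := exists_smul_eq_of_finrank_le_one ht1 hwt hw0
    (apply_sub_self_mem_eigenspace ht x)
  have hdiff : s x - t x = (c - d) • w := by rw [sub_smul, hc, hd, sub_sub_sub_cancel_right]
  have hsdiff : s (s x - t x) = -(s x - t x) := by
    rw [hdiff, map_smul, mem_eigenspace_neg_one.mp hws, smul_neg]
  have htdiff : t (s x - t x) = -(s x - t x) := by
    rw [hdiff, map_smul, mem_eigenspace_neg_one.mp hwt, smul_neg]
  apply eq_zero_of_eq_neg_self K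
  calc s x - t x = -(s (s x - t x)) := by rw [hsdiff, neg_neg]
    _ = t (s x - t x) := by
      rw [map_sub, map_sub, apply_apply_of_mul_self hs, apply_apply_of_mul_self ht, hst', neg_sub]
    _ = -(s x - t x) := htdiff

end Involution

section RootFamily

variable {K α V : Type*} [Field K] [AddCommGroup V] [Module K V]
  {ρ : Representation K (Perm α) V}

/-- A family `e i j` of vectors that the symmetric group permutes like the roots `ε i - ε j` of
type `A`. -/
structure IsRootFamily (ρ : Representation K (Perm α) V) (e : α → α → V) : Prop where
  map_apply (g : Perm α) (i j : α) : ρ g (e i j) = e (g i) (g j)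
  antisymm (i j : α) : e j i = -e i j
  ne_zero {i j : α} : i ≠ j → e i j ≠ 0

lemma IsRootFamily.apply_ne_apply [NeZero (2 : K)] {e : α → α → V} (he : IsRootFamily ρ e)
    {i j k l : α} (hnodup : [i, j, k, l].Nodup) : e i j ≠ e j k := by
  classical
  simp only [List.nodup_cons, List.mem_cons, List.not_mem_nil, or_false, not_or] at hnodup
  obtain ⟨⟨-, hik, hil⟩, ⟨hjk, hjl⟩, hkl, -⟩ := hnodup
  intro hijk
  have hijl : e i j = e j l := by
    simpa only [he.map_apply, swap_apply_left, swap_apply_of_ne_of_ne hik hil,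
      swap_apply_of_ne_of_ne hjk hjl] using congrArg (ρ (swap k l)) hijk
  have hjkl : e j k = e j l := hijk.symm.trans hijl
  have hkjl : e k j = e k l := by
    simpa only [he.map_apply, swap_apply_left, swap_apply_right,
      swap_apply_of_ne_of_ne (Ne.symm hjl) (Ne.symm hkl)] using congrArg (ρ (swap j k)) hjkl
  have hlkj : e l k = e l j := by
    simpa only [he.map_apply, swap_apply_left, swap_apply_right,
      swap_apply_of_ne_of_ne (Ne.symm hjk) hkl] using congrArg (ρ (swap j l)) hjkl
  have hneg : e l j = -e l j := calc
    e l j = e l k := hlkj.symm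
    _ = -e k l := he.antisymm k l
    _ = -e k j := by rw [hkjl]
    _ = e j k := (he.antisymm k j).symm
    _ = e j l := hjkl
    _ = -e l j := he.antisymm l j
  exact he.ne_zero (Ne.symm hjl) (eq_zero_of_eq_neg_self K hneg)

variable [DecidableEq α]

lemma map_swap_mul_self (ρ : Representation K (Perm α) V) (i j : α) :
    ρ (swap i j) * ρ (swap i j) = 1 := by
  rw [← map_mul, swap_mul_self, map_one]

/-- The transpositions act on `ρ` as reflections, or as the identity: outside characteristic `2`,
this is the case if their `-1`-eigenspaces are at most one-dimensional. -/
def IsReflectionRep (ρ : Representation K (Perm α) V) : Prop :=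
  ∀ i j, i ≠ j → finrank K (eigenspace (ρ (swap i j)) (-1)) ≤ 1

namespace IsRootFamily

variable {e : α → α → V}

lemma mem_eigenspace_swap (he : IsRootFamily ρ e) (i j : α) :
    e i j ∈ eigenspace (ρ (swap i j)) (-1) := by
  rw [mem_eigenspace_neg_one, he.map_apply, swap_apply_left, swap_apply_right, he.antisymm]

variable [Fintype α] [FiniteDimensional K V] [NeZero (2 : K)]

/- The reflection `ρ (swap i j)` gives `e i k - e j k = c • e i j`; comparing this with its image
under the cyclic permutation of `i, j, k` forces `c = 1`. -/
lemma add_eq_of_ne (he : IsRootFamily ρ e) (hα : 4 ≤ Fintype.card α)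
    (hρ : IsReflectionRep ρ) {i j k : α} (hij : i ≠ j) (hjk : j ≠ k) (hik : i ≠ k) :
    e i j + e j k = e i k := by
  obtain ⟨l, -, hl⟩ : ∃ l ∈ Finset.univ, l ∉ ({i, j, k} : Finset α) :=
    Finset.exists_mem_notMem_of_card_lt_card (Finset.card_le_three.trans_lt hα)
  have hne : e i j ≠ e j k := he.apply_ne_apply (l := l) (by grind)
  have hmem : e i k - e j k ∈ eigenspace (ρ (swap i j)) (-1) := by
    have := apply_sub_self_mem_eigenspace (map_swap_mul_self ρ i j) (e j k)
    rwa [he.map_apply, swap_apply_right, swap_apply_of_ne_of_ne hik.symm hjk.symm] at this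
  obtain ⟨c, hc⟩ := exists_smul_eq_of_finrank_le_one (hρ i j hij)
    (he.mem_eigenspace_swap i j) (he.ne_zero hij) hmem
  have hcycle : c • e j k = e j i - e k i := by
    have := congrArg (ρ (swap i j * swap j k)) hc
    rw [map_smul, map_sub] at this
    simp only [he.map_apply] at this
    grind [Perm.mul_apply]
  have hc1 : (1 - c) • (e j k - e i j) = 0 := by
    rw [he.antisymm i j, he.antisymm i k] at hcycle
    rw [sub_smul, one_smul, smul_sub, hc, hcycle]
    abel
  obtain rfl : 1 = c :=
    sub_eq_zero.mp ((smul_eq_zero.mp hc1).resolve_right (sub_ne_zero.mpr hne.symm))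
  rwa [one_smul, eq_sub_iff_add_eq] at hc

lemma map_swap_apply (he : IsRootFamily ρ e) (hα : 4 ≤ Fintype.card α)
    (hρ : IsReflectionRep ρ) {a j l : α} (hj : j ≠ a) (hl : l ≠ a) :
    ρ (swap a j) (e a l) = e a l - e a j - if l = j then e a j else 0 := by
  rw [he.map_apply, swap_apply_left]
  split_ifs with hlj
  · rw [hlj, swap_apply_right, he.antisymm, sub_self, zero_sub]
  · rw [swap_apply_of_ne_of_ne hl hlj, sub_zero, eq_sub_iff_add_eq',
      he.add_eq_of_ne hα hρ hj.symm (Ne.symm hlj) hl.symm]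

lemma linearIndependent (he : IsRootFamily ρ e) (hα : 4 ≤ Fintype.card α)
    (hcard : (Fintype.card α : K) ≠ 0) (hρ : IsReflectionRep ρ) (a : α) :
    LinearIndependent K fun j : {x // x ≠ a} ↦ e a j := by
  rw [Fintype.linearIndependent_iff]
  intro w hw
  have hcoeff (j : {x // x ≠ a}) : w j = -∑ l, w l := by
    have hterm (l : {x // x ≠ a}) := he.map_swap_apply hα hρ j.2 l.2
    have hswap : ∑ l, w l • ρ (swap a j) (e a l) = 0 := by
      simpa only [map_sum, map_smul, map_zero] using congrArg (ρ (swap a j)) hw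
    simp only [hterm, smul_sub, Finset.sum_sub_distrib, hw, ← Finset.sum_smul, smul_ite, smul_zero,
      Subtype.coe_inj, Finset.sum_ite_eq', Finset.mem_univ, if_true, zero_sub, ← neg_add',
      neg_eq_zero, ← add_smul] at hswap
    exact eq_neg_of_add_eq_zero_right
      ((smul_eq_zero.mp hswap).resolve_right (he.ne_zero j.2.symm))
  have hsum : (Fintype.card α : K) * ∑ l, w l = 0 := by
    have hS : ∑ l, w l = -((Fintype.card α - 1 : ℕ) : K) * ∑ l, w l := by
      conv_lhs => rw [Finset.sum_congr rfl fun j _ ↦ hcoeff j]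
      simp
    rw [Nat.cast_pred (by omega)] at hS
    linear_combination hS
  intro j
  rw [hcoeff, (mul_eq_zero.mp hsum).resolve_left hcard, neg_zero]

lemma card_le_finrank_add_one (he : IsRootFamily ρ e) (hα : 4 ≤ Fintype.card α)
    (hcard : (Fintype.card α : K) ≠ 0) (hρ : IsReflectionRep ρ) :
    Fintype.card α ≤ finrank K V + 1 := by
  have : Nonempty α := Fintype.card_pos_iff.mp (by omega)
  have h := (he.linearIndependent hα hcard hρ (Classical.arbitrary α)).fintype_card_le_finrank
  rw [Fintype.card_subtype_compl, Fintype.card_subtype_eq] at h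
  omega

end IsRootFamily

end RootFamily

section Reflection

variable {K α V : Type*} [Field K] [AddCommGroup V] [Module K V]
  {ρ : Representation K (Perm α) V}

lemma exists_perm_apply_eq_apply_eq {a b i j : α} (hab : a ≠ b) (hij : i ≠ j) :
    ∃ g : Perm α, g a = i ∧ g b = j := by
  obtain ⟨g, hg⟩ := MulAction.is_two_pretransitive_iff.mp
    (Equiv.Perm.isMultiplyPretransitive α 2) hab hij
  exact ⟨g, hg⟩

lemma exists_equivariant_family {a b : α} (hab : a ≠ b) {v : V}
    (hfix : ∀ g : Perm α, g a = a → g b = b → ρ g v = v) :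
    ∃ e : α → α → V, e a b = v ∧ (∀ i, e i i = 0) ∧
      ∀ (g : Perm α) (i j : α), ρ g (e i j) = e (g i) (g j) := by
  classical
  choose! σ hσa hσb using fun i j ↦ exists_perm_apply_eq_apply_eq (i := i) (j := j) hab
  have hwell {g h : Perm α} (ha : g a = h a) (hb : g b = h b) : ρ g v = ρ h v := by
    have hinv : ρ (h⁻¹ * g) v = v := hfix _ (by simp [ha]) (by simp [hb])
    rwa [map_mul, Module.End.mul_apply, ρ.inv_apply_eq_iff] at hinv
  refine ⟨fun i j ↦ if i = j then 0 else ρ (σ i j) v, ?_, fun i ↦ if_pos rfl, fun g i j ↦ ?_⟩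
  · exact (if_neg hab).trans (hfix _ (hσa a b hab) (hσb a b hab))
  · by_cases hij : i = j
    · simp [hij]
    · have hgij := g.injective.ne hij
      simp only [if_neg hij, if_neg hgij]
      rw [← Module.End.mul_apply, ← map_mul]
      exact hwell (by simp [hσa, hij, hgij]) (by simp [hσb, hij, hgij])

variable [DecidableEq α] [FiniteDimensional K V] [NeZero (2 : K)]

lemma IsReflectionRep.apply_eq_self_of_mem_eigenspace_swap [Finite α] (hρ : IsReflectionRep ρ)
    (hne : ∀ i j k l : α, [i, j, k, l].Nodup → ρ (swap i j) ≠ ρ (swap k l))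
    {a b : α} (hab : a ≠ b) {v : V} (hv : v ∈ eigenspace (ρ (swap a b)) (-1)) {g : Perm α}
    (hga : g a = a) (hgb : g b = b) : ρ g v = v := by
  have := Fintype.ofFinite α
  have hg : g ∈ (Perm.ofSubtype : Perm {x // x ≠ a ∧ x ≠ b} →* Perm α).range := by
    rw [Perm.mem_range_ofSubtype_iff]
    rintro x hx
    simp only [Finset.mem_coe, Perm.mem_support] at hx
    exact ⟨by rintro rfl; exact hx hga, by rintro rfl; exact hx hgb⟩
  obtain ⟨g, rfl⟩ := hg
  clear hga hgb
  induction g using Perm.swap_induction_on with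
  | one => simp
  | swap_mul g x y hxy ih =>
    have hxy' : (x : α) ≠ y := Subtype.coe_injective.ne hxy
    have hnodup : [a, b, (x : α), (y : α)].Nodup := by grind
    rw [map_mul, map_mul, Module.End.mul_apply, ih, Perm.ofSubtype_swap_eq]
    exact apply_eq_self_of_commute_of_ne (map_swap_mul_self ρ a b) (map_swap_mul_self ρ _ _)
      ((Perm.disjoint_swap_swap hnodup).commute.map ρ) (hρ a b hab) (hρ _ _ hxy')
      (hne _ _ _ _ hnodup) hv

lemma IsReflectionRep.exists_isRootFamily [Finite α] (hρ : IsReflectionRep ρ)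
    (hne : ∀ i j k l : α, [i, j, k, l].Nodup → ρ (swap i j) ≠ ρ (swap k l))
    {a b : α} (hab : a ≠ b) (h1 : ρ (swap a b) ≠ 1) : ∃ e, IsRootFamily ρ e := by
  obtain ⟨x, hx⟩ : ∃ x, ρ (swap a b) x ≠ x := by
    by_contra! h
    exact h1 (LinearMap.ext h)
  have hv := apply_sub_self_mem_eigenspace (map_swap_mul_self ρ a b) x
  obtain ⟨e, heab, hediag, hmap⟩ := exists_equivariant_family hab
    fun g ↦ hρ.apply_eq_self_of_mem_eigenspace_swap hne hab hv (g := g)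
  have hba : e b a = -e a b := by
    rw [← heab, mem_eigenspace_neg_one, hmap, swap_apply_left, swap_apply_right] at hv
    exact hv
  refine ⟨e, hmap, fun i j ↦ ?_, fun {i j} hij ↦ ?_⟩
  · by_cases hij : i = j
    · rw [hij, hediag, neg_zero]
    · obtain ⟨g, rfl, rfl⟩ := exists_perm_apply_eq_apply_eq hab hij
      rw [← hmap, hba, map_neg, hmap]
  · obtain ⟨g, rfl, rfl⟩ := exists_perm_apply_eq_apply_eq hab hij
    rw [← hmap, heab]
    exact (map_ne_zero_iff _ (ρ.apply_bijective g).injective).mpr (sub_ne_zero.mpr hx)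

theorem IsReflectionRep.map_eq_one [Fintype α] (hρ : IsReflectionRep ρ)
    (hcard : (Fintype.card α : K) ≠ 0) (hdim : finrank K V + 2 ≤ Fintype.card α) {g : Perm α}
    (hg : g.cycleType = {2, 2}) : ρ g = 1 := by
  by_contra hρg
  have hα : 4 ≤ Fintype.card α := by simpa [hg] using g.sum_cycleType_le
  have hconj {c d : Perm α} (hcd : IsConj c d) (hc : ρ c = 1) : ρ d = 1 := by
    have := ρ.map_isConj hcd
    rwa [hc, isConj_one_right] at this
  have hne (i j k l : α) (hnodup : [i, j, k, l].Nodup) : ρ (swap i j) ≠ ρ (swap k l) := by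
    intro h
    have hprod : ρ (swap i j * swap k l) = 1 := by rw [map_mul, h, map_swap_mul_self]
    refine hρg (hconj (Perm.isConj_of_cycleType_eq ?_) hprod)
    rw [Perm.cycleType_swap_mul_swap_of_nodup hnodup, hg]
  obtain ⟨a, b, hab, h1⟩ : ∃ a b : α, a ≠ b ∧ ρ (swap a b) ≠ 1 := by
    by_contra! h
    have htriv (f : Perm α) : ρ f = 1 := by
      induction f using Perm.swap_induction_on with
      | one => exact map_one ρ
      | swap_mul f x y hxy ih => rw [map_mul, h x y hxy, ih, one_mul]
    exact hρg (htriv g)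
  obtain ⟨e, he⟩ := hρ.exists_isRootFamily hne hab h1
  have hle := he.card_le_finrank_add_one hα hcard hρ
  omega

end Reflection

section SignTwist

variable {K α V : Type*} [Field K] [DecidableEq α] [Fintype α] [AddCommGroup V] [Module K V]
  {ρ : Representation K (Perm α) V}

/-- The tensor product of `ρ` with the sign character, realised on the space of `ρ`. -/
def signTwist (ρ : Representation K (Perm α) V) : Representation K (Perm α) V where
  toFun g := Perm.sign g • ρ g
  map_one' := by rw [map_one, map_one, one_smul]
  map_mul' g h := by rw [map_mul, map_mul, smul_mul_smul_comm]

lemma signTwist_apply (ρ : Representation K (Perm α) V) (g : Perm α) :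
    signTwist ρ g = Perm.sign g • ρ g := rfl

lemma eigenspace_signTwist_swap {i j : α} (hij : i ≠ j) :
    eigenspace (signTwist ρ (swap i j)) (-1) = eigenspace (ρ (swap i j)) 1 := by
  ext x
  rw [mem_eigenspace_neg_one, mem_eigenspace_one, signTwist_apply, Perm.sign_swap hij,
    LinearMap.smul_apply, Units.neg_smul, one_smul, neg_inj]

lemma signTwist_apply_of_mem_alternatingGroup {g : Perm α} (hg : g ∈ alternatingGroup α) :
    signTwist ρ g = ρ g := by
  rw [signTwist_apply, Perm.mem_alternatingGroup.mp hg, one_smul]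

end SignTwist

section Induction

variable {K α V : Type*} [Field K] [DecidableEq α] [AddCommGroup V] [Module K V]

/-- The representation on the `μ`-eigenspace of `ρ τ` of the permutations of the fixed points of
`τ`. -/
def eigenspaceRep (ρ : Representation K (Perm α) V) (τ : Perm α) (μ : K) :
    Representation K (Perm (Function.fixedPoints τ)) (eigenspace (ρ τ) μ) :=
  Representation.subrepresentation (ρ.comp Perm.ofSubtype) _ fun g ↦
    mapsTo_genEigenspace_of_comm
      ((Perm.disjoint_ofSubtype_of_memFixedPoints_self g).commute.symm.map ρ) μ 1

lemma map_ofSubtype_eq_one [NeZero (2 : K)] {ρ : Representation K (Perm α) V} {τ : Perm α}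
    (hτ : τ * τ = 1) {g : Perm (Function.fixedPoints τ)} (hpos : eigenspaceRep ρ τ 1 g = 1)
    (hneg : eigenspaceRep ρ τ (-1) g = 1) : ρ (Perm.ofSubtype g) = 1 := by
  have hcompl := isCompl_eigenspace_one_neg_one (s := ρ τ) (by rw [← map_mul, hτ, map_one])
  refine LinearMap.ext_on_codisjoint hcompl.codisjoint (fun x hx ↦ ?_) fun x hx ↦ ?_
  · exact congrArg Subtype.val (LinearMap.congr_fun hpos ⟨x, hx⟩)
  · exact congrArg Subtype.val (LinearMap.congr_fun hneg ⟨x, hx⟩)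

variable [Fintype α] [FiniteDimensional K V]

lemma map_eq_one_of_finrank_eigenspace_swap_le_one [NeZero (2 : K)]
    {ρ : Representation K (Perm α) V} (hcard : (Fintype.card α : K) ≠ 0)
    (hdim : finrank K V + 2 ≤ Fintype.card α) {p q : α} (hpq : p ≠ q)
    (hswap : finrank K (eigenspace (ρ (swap p q)) 1) ≤ 1 ∨
      finrank K (eigenspace (ρ (swap p q)) (-1)) ≤ 1) {g : Perm α} (hg : g.cycleType = {2, 2}) :
    ρ g = 1 := by
  have hconj (i j : α) (hij : i ≠ j) (μ : K) :=
    finrank_eigenspace_eq_of_isConj ρ (Perm.isConj_swap hij hpq) μ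
  rcases hswap with hpos | hneg
  · have halt := Perm.cycleType_eq_two_two_subset_alternatingGroup hg
    rw [← signTwist_apply_of_mem_alternatingGroup halt]
    refine IsReflectionRep.map_eq_one (fun i j hij ↦ ?_) hcard hdim hg
    rwa [eigenspace_signTwist_swap hij, hconj i j hij]
  · refine IsReflectionRep.map_eq_one (fun i j hij ↦ ?_) hcard hdim hg
    rwa [hconj i j hij]

lemma exists_mem_range_ofSubtype_fixedPoints_swap {g : Perm α}
    (hg : g.support.card + 2 ≤ Fintype.card α) : ∃ p q, p ≠ q ∧
      g ∈ (Perm.ofSubtype : Perm (Function.fixedPoints (swap p q)) →* Perm α).range := by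
  obtain ⟨p, hp, q, hq, hpq⟩ : ∃ p ∈ g.supportᶜ, ∃ q ∈ g.supportᶜ, p ≠ q := by
    rw [← Finset.one_lt_card, Finset.card_compl]
    omega
  rw [Finset.mem_compl] at hp hq
  refine ⟨p, q, hpq, Perm.mem_range_ofSubtype_iff.mpr fun x hx ↦ ?_⟩
  exact swap_apply_of_ne_of_ne (ne_of_mem_of_not_mem hx hp) (ne_of_mem_of_not_mem hx hq)

end Induction

theorem map_eq_one_of_cycleType_eq_two_two {K α V : Type*} [Field K] [DecidableEq α] [Fintype α]
    [AddCommGroup V] [Module K V] [FiniteDimensional K V] {ρ : Representation K (Perm α) V}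
    (hK : ((Fintype.card α).factorial : K) ≠ 0) (hdim : finrank K V + 2 ≤ Fintype.card α)
    {g : Perm α} (hg : g.cycleType = {2, 2}) : ρ g = 1 := by
  have hg4 : g.support.card = 4 := by rw [← Perm.sum_cycleType, hg]; rfl
  have hα : 4 ≤ Fintype.card α := hg4.symm.trans_le (Finset.card_le_univ _)
  have hcast {k : ℕ} (hk : 0 < k) (hkα : k ≤ Fintype.card α) : (k : K) ≠ 0 :=
    ne_zero_of_dvd_ne_zero hK (Nat.cast_dvd_cast (Nat.dvd_factorial hk hkα))
  have : NeZero (2 : K) := ⟨mod_cast hcast (k := 2) (by omega) (by omega)⟩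
  by_cases hswap : ∃ p q, p ≠ q ∧ (finrank K (eigenspace (ρ (swap p q)) 1) ≤ 1 ∨
      finrank K (eigenspace (ρ (swap p q)) (-1)) ≤ 1)
  · obtain ⟨p, q, hpq, hswap⟩ := hswap
    exact map_eq_one_of_finrank_eigenspace_swap_le_one (hcast (by omega) le_rfl) hdim hpq hswap hg
  push Not at hswap
  have hsum (i j : α) := Submodule.finrank_add_eq_of_isCompl
    (isCompl_eigenspace_one_neg_one (map_swap_mul_self ρ i j))
  have hα6 : 6 ≤ Fintype.card α := by
    obtain ⟨a, b, hab⟩ := Fintype.exists_pair_of_one_lt_card (α := α) (by omega)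
    linarith [hswap a b hab, hsum a b]
  obtain ⟨p, q, hpq, g, rfl⟩ := exists_mem_range_ofSubtype_fixedPoints_swap (g := g) (by omega)
  have hfix : Fintype.card (Function.fixedPoints (swap p q)) = Fintype.card α - 2 := by
    rw [Perm.card_fixedPoints, Perm.sum_cycleType, Perm.card_support_swap hpq]
  have hK' : ((Fintype.card (Function.fixedPoints (swap p q))).factorial : K) ≠ 0 :=
    ne_zero_of_dvd_ne_zero hK <| Nat.cast_dvd_cast <|
      Nat.factorial_dvd_factorial (hfix.trans_le (Nat.sub_le _ _))
  rw [Perm.cycleType_ofSubtype] at hg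
  have hsum_pq := hsum p q
  have hswap_pq := hswap p q hpq
  exact map_ofSubtype_eq_one (swap_mul_self p q)
    (map_eq_one_of_cycleType_eq_two_two hK' (by omega) hg)
    (map_eq_one_of_cycleType_eq_two_two hK' (by omega) hg)
termination_by Fintype.card α
decreasing_by all_goals exact hfix.trans_lt (by omega)

lemma commute_map_of_alternatingGroup_le_ker {α M : Type*} [DecidableEq α] [Fintype α] [Monoid M]
    (f : Perm α →* M) (hf : alternatingGroup α ≤ f.ker) (g h : Perm α) : Commute (f g) (f h) := by
  have hcomm : f ⁅g, h⁆ = 1 := hf <| alternatingGroup.commutator_perm_le <|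
    Subgroup.commutator_mem_commutator (Subgroup.mem_top g) (Subgroup.mem_top h)
  calc f g * f h = f (⁅g, h⁆ * (h * g)) := by
        rw [← map_mul, commutatorElement_def]
        group
    _ = f h * f g := by rw [map_mul, hcomm, one_mul, map_mul]

end SymmetricRep

theorem stmt_3_general {K α V : Type*} [Field K] [Fintype α] [AddCommGroup V]
    [Module K V] [FiniteDimensional K V] (hα : 5 ≤ Fintype.card α)
    (hdim : Module.finrank K V + 2 ≤ Fintype.card α)
    (hK : ((Fintype.card α).factorial : K) ≠ 0) (ρ : Representation K (Equiv.Perm α) V)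
    (g h : Equiv.Perm α) : Commute (ρ g) (ρ h) := by
  classical
  refine SymmetricRep.commute_map_of_alternatingGroup_le_ker ρ ?_ g h
  rw [← Equiv.Perm.closure_cycleType_eq_two_two_eq_alternatingGroup (by simpa),
    Subgroup.closure_le]
  exact fun c hc ↦ SymmetricRep.map_eq_one_of_cycleType_eq_two_two hK hdim hc

/-- For `k ≥ 5` and `1 ≤ m ≤ k - 2`, the image of every homomorphism
`S_k → GL(m, ℂ)` is abelian. -/
theorem stmt_3 (k m : ℕ) (hk : 5 ≤ k) (hm1 : 1 ≤ m) (hm2 : m ≤ k - 2)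
    (f : Equiv.Perm (Fin k) →* GL (Fin m) ℂ) :
    ∀ a b : Equiv.Perm (Fin k), f a * f b = f b * f a := by
  have hcomm := stmt_3_general (K := ℂ) (V := Fin m → ℂ) (by simpa)
    (by rw [Module.finrank_fin_fun, Fintype.card_fin]; omega)
    (Nat.cast_ne_zero.mpr (Nat.factorial_ne_zero _))
    ((Units.coeHom _).comp (Matrix.GeneralLinearGroup.toLin.toMonoidHom.comp f))
  intro a b
  apply Matrix.GeneralLinearGroup.toLin.injective
  rw [map_mul, map_mul]
  exact Units.ext (hcomm a b)
end

section
/- Let L₁, L₂, L₃, U ∈ GL(2, ℂ) satisfy: L₁L₂L₁ = L₂L₁L₂, L₂L₃L₂ = L₃L₂L₃, L₁L₃ = L₃L₁, L₁U = UL₁, L₃UL₃ = U, and L₁ is conjugate in GL(2, ℂ) to L₁⁻¹. Then L₁² = I, and moreover there exists P ∈ GL(2, ℂ) such that one of the following holds for the conjugates L'_i = P⁻¹L_iP: (1) L'₁ = L'₂ = L'₃ = λI with λ ∈ {1, −1}; (2) L'₁ = L'₂ = L'₃ = diag(1, −1); (3) L'₁ = L'₃ = [[1,1],[0,−1]] and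 L'₂ = [[−1,0],[1,1]]. -/
/-!
The braid relations make `L₁, L₂, L₃` conjugate. If `L₁` is central, all three are therefore equal;
otherwise the commutant of `L₁` is commutative. Either way `L₃` commutes with `U`, so `L₃UL₃ = U`
gives `L₃² = 1`, and by conjugacy all `Lᵢ` are involutions. The product `L₁L₃` is then an
involution of determinant one, hence `±1`, and the two braid relations with `L₂` exclude
`L₃ = -L₁`.

If `L₁ ≠ L₂`, then `L₁L₂` has order three and determinant one, so Cayley–Hamilton turns into
`L₁L₂ + L₂L₁ + 1 = 0`. For a fixed vector `v` of `L₁`, this identity says precisely that `L₁, L₂`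
act in the basis `v, v + L₂v` by the matrices of the third normal form.
-/

open scoped Matrix

theorem isConj_of_braid {G : Type*} [Group G] {a b : G} (h : a * b * a = b * a * b) :
    IsConj a b :=
  isConj_iff.2 ⟨a * b, by rw [mul_inv_eq_iff_eq_mul, h, mul_assoc]⟩

theorem mul_pow_three_eq_one_of_braid {M : Type*} [Monoid M] {a b : M}
    (ha : a ^ 2 = 1) (hb : b ^ 2 = 1) (h : a * b * a = b * a * b) : (a * b) ^ 3 = 1 := by
  rw [sq] at ha hb
  calc (a * b) ^ 3 = a * b * a * (b * a * b) := by
        simp only [pow_succ, pow_zero, one_mul, mul_assoc]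
    _ = a * b * (a * a) * b * a := by rw [← h]; simp only [mul_assoc]
    _ = a * (b * b) * a := by rw [ha]; simp only [mul_one, mul_assoc]
    _ = 1 := by rw [hb, mul_one, ha]

section ChangeOfBasis

variable {n K : Type*} [Fintype n] [DecidableEq n] [Field K]

theorem exists_conj_eq_of_linearIndependent {v : n → n → K} (hv : LinearIndependent K v) :
    ∃ P : GL n K, ∀ A D : Matrix n n K, (∀ j, A *ᵥ v j = ∑ i, D i j • v i) →
      P⁻¹.val * A * P.val = D := by
  obtain ⟨P, hP⟩ : IsUnit (Matrix.of v)ᵀ := Matrix.linearIndependent_cols_iff_isUnit.1 hv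
  refine ⟨P, fun A D h ↦ ?_⟩
  have hAP : A * P = P * D := by
    rw [hP]
    ext i j
    simpa [Matrix.mul_apply, Matrix.mulVec, dotProduct, mul_comm] using congrFun (h j) i
  rw [mul_assoc, hAP, Units.inv_mul_cancel_left]

theorem exists_linearIndependent_mulVec {R : Type*} [CommRing R] [IsDomain R]
    {A : Matrix n n R} (hA : A ∉ Set.range (Matrix.scalar n)) :
    ∃ u, LinearIndependent R ![u, A *ᵥ u] := by
  by_contra! h
  obtain ⟨a, ha⟩ := LinearMap.exists_eq_smul_id_of_forall_notLinearIndependent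
    (f := Matrix.toLin' A) (by simpa using h)
  refine hA ⟨a, Matrix.toLin'.injective ?_⟩
  simp [ha, Matrix.scalar_apply, ← Matrix.smul_one_eq_diagonal, Module.End.one_eq_id]

end ChangeOfBasis

section Commutant

variable {K : Type*} [Field K] {A X Y : Matrix (Fin 2) (Fin 2) K}

theorem exists_eq_smul_one_add_smul_of_commute (hA : A ∉ Set.range (Matrix.scalar (Fin 2)))
    (hX : Commute A X) : ∃ a b : K, X = a • 1 + b • A := by
  obtain ⟨u, hu⟩ := exists_linearIndependent_mulVec hA
  have hspan := hu.span_eq_top_of_card_eq_finrank' (by simp)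
  obtain ⟨a, b, hab⟩ : ∃ a b : K, a • u + b • A *ᵥ u = X *ᵥ u := by
    rw [← Submodule.mem_span_pair, ← Matrix.range_cons_cons_empty, hspan]
    exact Submodule.mem_top
  refine ⟨a, b, Matrix.toLin'.injective (LinearMap.ext_on_range hspan fun i ↦ ?_)⟩
  have hXu : X *ᵥ u = (a • 1 + b • A) *ᵥ u := by
    rw [Matrix.add_mulVec, Matrix.smul_mulVec, Matrix.smul_mulVec, Matrix.one_mulVec, hab]
  have hcomm : Commute A (a • 1 + b • A) :=
    ((Commute.one_right A).smul_right a).add_right ((Commute.refl A).smul_right b)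
  fin_cases i
  · exact hXu
  · change X *ᵥ A *ᵥ u = (a • 1 + b • A) *ᵥ A *ᵥ u
    rw [Matrix.mulVec_mulVec, ← hX.eq, ← Matrix.mulVec_mulVec, hXu, Matrix.mulVec_mulVec,
      hcomm.eq, Matrix.mulVec_mulVec]

theorem commute_of_commute_of_notMem_range_scalar (hA : A ∉ Set.range (Matrix.scalar (Fin 2)))
    (hX : Commute A X) (hY : Commute A Y) : Commute X Y := by
  obtain ⟨a, b, rfl⟩ := exists_eq_smul_one_add_smul_of_commute hA hX
  exact ((Commute.one_left Y).smul_left a).add_left (hY.smul_left b)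

theorem sq_eq_one_of_isConj_of_commute {A B U : GL (Fin 2) K} (hconj : IsConj A B)
    (hAB : Commute A B) (hAU : Commute A U) (hBU : B * U * B = U) : B ^ 2 = 1 := by
  have hcomm : Commute B U := by
    by_cases hcenter : A ∈ Subgroup.center (GL (Fin 2) K)
    · rwa [← hconj.eq_of_left_mem_center hcenter]
    · rw [Matrix.GeneralLinearGroup.mem_center_iff_val_mem_range_scalar] at hcenter
      exact Units.ext (commute_of_commute_of_notMem_range_scalar hcenter
        (congrArg Units.val hAB) (congrArg Units.val hAU))
  rwa [hcomm.eq, mul_assoc, mul_eq_left, ← sq] at hBU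

end Commutant

section Involution

theorem exists_mulVec_eq_self_of_sq_eq_one {n R : Type*} [Fintype n] [DecidableEq n] [Ring R]
    {A : Matrix n n R} (hA : A ^ 2 = 1) (hne : A ≠ -1) : ∃ v ≠ 0, A *ᵥ v = v := by
  obtain ⟨u, hu⟩ : ∃ u, (A + 1) *ᵥ u ≠ 0 := by
    by_contra! h
    exact hne (eq_neg_of_add_eq_zero_left (Matrix.mulVec_injective (funext fun u ↦ by simp [h])))
  refine ⟨(A + 1) *ᵥ u, hu, ?_⟩
  rw [Matrix.mulVec_mulVec, mul_add, mul_one, ← sq, hA, add_comm]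

variable {K : Type*} [Field K] {A : Matrix (Fin 2) (Fin 2) K}

theorem exists_conj_eq_diagonal_of_sq_eq_one [NeZero (2 : K)] (hA : A ^ 2 = 1)
    (hone : A ≠ 1) (hneg : A ≠ -1) :
    ∃ P : GL (Fin 2) K, P⁻¹.val * A * P.val = !![1, 0; 0, -1] := by
  obtain ⟨v, hv, hAv⟩ := exists_mulVec_eq_self_of_sq_eq_one hA hneg
  obtain ⟨w, hw, hAw⟩ := exists_mulVec_eq_self_of_sq_eq_one (A := -A) (by simpa)
    (by simpa using hone)
  replace hAw : A *ᵥ w = -w := by rwa [Matrix.neg_mulVec, neg_eq_iff_eq_neg] at hAw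
  have hvw : LinearIndependent K ![v, w] := by
    refine (LinearIndependent.pair_iff' hv).2 fun a ha ↦ hw ?_
    have hself : w = -w := by rw [← hAw, ← ha, Matrix.mulVec_smul, hAv]
    have htwo : (2 : K) • w = 0 := by rw [two_smul, ← eq_neg_iff_add_eq_zero, ← hself]
    exact (smul_eq_zero.1 htwo).resolve_left (NeZero.ne 2)
  obtain ⟨P, hP⟩ := exists_conj_eq_of_linearIndependent hvw
  refine ⟨P, hP A _ fun j ↦ ?_⟩
  fin_cases j <;> simp [hAv, hAw]

theorem eq_one_or_eq_neg_one_of_sq_eq_one_of_det_eq_one [NeZero (2 : K)] (hA : A ^ 2 = 1)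
    (hdet : A.det = 1) : A = 1 ∨ A = -1 := by
  by_contra! h
  obtain ⟨P, hP⟩ := exists_conj_eq_diagonal_of_sq_eq_one hA h.1 h.2
  have hone : (1 : K) = -1 := by
    simpa [Matrix.coe_units_inv, Matrix.det_conj' P.isUnit, hdet] using congrArg Matrix.det hP
  exact NeZero.ne (2 : K) (by linear_combination hone)

end Involution

section OrderThree

variable {R : Type*} [CommRing R]

theorem sq_eq_trace_smul_sub_det_smul_one (M : Matrix (Fin 2) (Fin 2) R) :
    M ^ 2 = M.trace • M - M.det • 1 := by
  nontriviality R
  have h : M ^ 2 - M.trace • M + M.det • 1 = 0 := by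
    simpa [Matrix.charpoly_fin_two, Algebra.algebraMap_eq_smul_one] using M.aeval_self_charpoly
  linear_combination (norm := module) h

theorem sq_add_self_add_one_eq_zero_of_pow_three_eq_one [IsDomain R]
    {M : Matrix (Fin 2) (Fin 2) R} (hM : M ^ 3 = 1) (hdet : M.det = 1) (hne : M ≠ 1) :
    M ^ 2 + M + 1 = 0 := by
  have hsq : M ^ 2 = M.trace • M - 1 := by
    simpa [hdet] using sq_eq_trace_smul_sub_det_smul_one M
  have hcube : M ^ 3 = M.trace • M ^ 2 - M := by
    rw [pow_succ, hsq, sub_mul, smul_mul_assoc, ← sq, one_mul, hsq]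
  have hfactor : (M.trace + 1) • ((M.trace - 1) • M - 1) = 0 := by
    linear_combination (norm := module) hM - hcube - M.trace • hsq
  rcases smul_eq_zero.1 hfactor with htrace | hscalar
  · linear_combination (norm := module) hsq + htrace • M
  · have hsM : (M.trace - 1) • M = 1 := sub_eq_zero.1 hscalar
    have hs : (M.trace - 1) ^ 2 = 1 := by simpa [hdet] using congrArg Matrix.det hsM
    have hMs : M = (M.trace - 1) • 1 := by rw [← hsM, smul_smul, ← sq, hs, one_smul]
    have hMM : M ^ 2 = 1 := by rw [hMs, smul_pow, hs, one_pow, one_smul]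
    exact absurd (by rwa [pow_succ, hMM, one_mul] at hM) hne

end OrderThree

section BraidPair

variable {R K : Type*} [CommRing R] [Field K]

theorem det_eq_det_of_braid {n : Type*} [Fintype n] [DecidableEq n]
    {A B : Matrix n n R} (hA : A ^ 2 = 1) (hB : B ^ 2 = 1) (h : A * B * A = B * A * B) :
    A.det = B.det := by
  have hA' : A.det ^ 2 = 1 := by rw [← Matrix.det_pow, hA, Matrix.det_one]
  have hB' : B.det ^ 2 = 1 := by rw [← Matrix.det_pow, hB, Matrix.det_one]
  have h' : A.det * B.det * A.det = B.det * A.det * B.det := by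
    simpa only [Matrix.det_mul] using congrArg Matrix.det h
  linear_combination B.det * hA' - A.det * hB' - h'

theorem mul_add_mul_add_one_eq_zero_of_braid [IsDomain R]
    {A B : Matrix (Fin 2) (Fin 2) R} (hA : A ^ 2 = 1) (hB : B ^ 2 = 1)
    (h : A * B * A = B * A * B) (hne : A ≠ B) : A * B + B * A + 1 = 0 := by
  have hdet : (A * B).det = 1 := by
    rw [Matrix.det_mul, ← det_eq_det_of_braid hA hB h, ← sq, ← Matrix.det_pow, hA, Matrix.det_one]
  have hAB : A * B ≠ 1 := fun hinv ↦ hne <|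
    calc A = A * B ^ 2 := by rw [hB, mul_one]
      _ = B := by rw [sq, ← mul_assoc, hinv, one_mul]
  have hsq : (A * B) ^ 2 = B * A :=
    calc (A * B) ^ 2 = A * (B * A * B) := by simp only [sq, mul_assoc]
      _ = A ^ 2 * (B * A) := by rw [← h]; simp only [sq, mul_assoc]
      _ = B * A := by rw [hA, one_mul]
  have hroot := sq_add_self_add_one_eq_zero_of_pow_three_eq_one
    (mul_pow_three_eq_one_of_braid hA hB h) hdet hAB
  rwa [hsq, add_comm (B * A)] at hroot

theorem exists_simultaneous_conj_of_braid [NeZero (3 : K)] {A B : Matrix (Fin 2) (Fin 2) K}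
    (hA : A ^ 2 = 1) (hB : B ^ 2 = 1) (h : A * B * A = B * A * B) (hne : A ≠ B) :
    ∃ P : GL (Fin 2) K, P⁻¹.val * A * P.val = !![1, 1; 0, -1] ∧
      P⁻¹.val * B * P.val = !![-1, 0; 1, 1] := by
  have hneg : A ≠ -1 := by
    rintro rfl
    exact hne (by simpa [← sq, hB] using h.symm)
  obtain ⟨v, hv, hAv⟩ := exists_mulVec_eq_self_of_sq_eq_one hA hneg
  obtain ⟨w, hw⟩ : ∃ w, w = v + B *ᵥ v := ⟨_, rfl⟩
  have hBv : B *ᵥ v = -v + w := by rw [hw, neg_add_cancel_left]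
  have hBw : B *ᵥ w = w := by
    rw [hw, Matrix.mulVec_add, Matrix.mulVec_mulVec, ← sq, hB, Matrix.one_mulVec, add_comm]
  have hAw : A *ᵥ w = v - w := by
    have hsum : A *ᵥ B *ᵥ v + B *ᵥ v + v = 0 := by
      simpa [Matrix.add_mulVec, ← Matrix.mulVec_mulVec, hAv] using
        congrArg (· *ᵥ v) (mul_add_mul_add_one_eq_zero_of_braid hA hB h hne)
    rw [hw, Matrix.mulVec_add, hAv]
    linear_combination (norm := module) hsum
  have hvw : LinearIndependent K ![v, w] := by
    refine (LinearIndependent.pair_iff' hv).2 fun a ha ↦ NeZero.ne (3 : K) ?_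
    have hAa : (2 * a - 1) • v = 0 := by
      rw [← ha, Matrix.mulVec_smul, hAv] at hAw
      linear_combination (norm := module) hAw
    have hBa : (a * (a - 2)) • v = 0 := by
      rw [← ha, Matrix.mulVec_smul, hBv, ← ha] at hBw
      linear_combination (norm := module) hBw
    have htwo := (smul_eq_zero.1 hAa).resolve_right hv
    have hquad := (smul_eq_zero.1 hBa).resolve_right hv
    linear_combination (2 * a - 3) * htwo - 4 * hquad
  obtain ⟨P, hP⟩ := exists_conj_eq_of_linearIndependent hvw
  refine ⟨P, hP A _ fun j ↦ ?_, hP B _ fun j ↦ ?_⟩ <;> fin_cases j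
  · simp [hAv]
  · simp [hAw, sub_eq_add_neg]
  · simp [hBv]
  · simp [hBw]

end BraidPair

theorem eq_of_braid_of_commute {K : Type*} [Field K] [NeZero (2 : K)]
    {A B C : Matrix (Fin 2) (Fin 2) K} (hA : A ^ 2 = 1) (hB : B ^ 2 = 1) (hC : C ^ 2 = 1)
    (hAB : A * B * A = B * A * B) (hBC : B * C * B = C * B * C) (hAC : Commute A C) :
    A = C := by
  have hsq : (A * C) ^ 2 = 1 := by rw [hAC.mul_pow, hA, hC, one_mul]
  have hdet : (A * C).det = 1 := by
    rw [Matrix.det_mul, ← det_eq_det_of_braid hB hC hBC, ← det_eq_det_of_braid hA hB hAB, ← sq,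
      ← Matrix.det_pow, hA, Matrix.det_one]
  have hCA : C = A * (A * C) := by rw [← mul_assoc, ← sq, hA, one_mul]
  rcases eq_one_or_eq_neg_one_of_sq_eq_one_of_det_eq_one hsq hdet with hone | hneg
  · rw [hCA, hone, mul_one]
  · have hCneg : C = -A := by rw [hCA, hneg, mul_neg_one]
    have hflip : -(B * A * B) = B * A * B := by simpa [hCneg, hAB] using hBC
    have hzero : (2 : K) • (B * A * B) = 0 := by
      rw [two_smul, ← neg_eq_iff_add_eq_zero, hflip]
    have hA' : IsUnit A := .of_pow_eq_one hA two_ne_zero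
    have hB' : IsUnit B := .of_pow_eq_one hB two_ne_zero
    exact absurd hzero (smul_ne_zero (NeZero.ne 2) ((hB'.mul hA').mul hB').ne_zero)

theorem stmt_5_general {K : Type*} [Field K] [NeZero (2 : K)] [NeZero (3 : K)]
    (L₁ L₂ L₃ U : GL (Fin 2) K)
    (h12 : L₁ * L₂ * L₁ = L₂ * L₁ * L₂)
    (h23 : L₂ * L₃ * L₂ = L₃ * L₂ * L₃)
    (h13 : L₁ * L₃ = L₃ * L₁)
    (h1U : L₁ * U = U * L₁)
    (h3U : L₃ * U * L₃ = U) :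
    L₁ ^ 2 = 1 ∧
    ∃ P : GL (Fin 2) K,
      ((∃ l : K, (l = 1 ∨ l = -1) ∧
          ((P⁻¹ * L₁ * P : GL (Fin 2) K) : Matrix (Fin 2) (Fin 2) K) = l • 1 ∧
          ((P⁻¹ * L₂ * P : GL (Fin 2) K) : Matrix (Fin 2) (Fin 2) K) = l • 1 ∧
          ((P⁻¹ * L₃ * P : GL (Fin 2) K) : Matrix (Fin 2) (Fin 2) K) = l • 1) ∨
      (((P⁻¹ * L₁ * P : GL (Fin 2) K) : Matrix (Fin 2) (Fin 2) K) = !![1, 0; 0, -1] ∧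
        ((P⁻¹ * L₂ * P : GL (Fin 2) K) : Matrix (Fin 2) (Fin 2) K) = !![1, 0; 0, -1] ∧
        ((P⁻¹ * L₃ * P : GL (Fin 2) K) : Matrix (Fin 2) (Fin 2) K) = !![1, 0; 0, -1]) ∨
      (((P⁻¹ * L₁ * P : GL (Fin 2) K) : Matrix (Fin 2) (Fin 2) K) = !![1, 1; 0, -1] ∧
        ((P⁻¹ * L₂ * P : GL (Fin 2) K) : Matrix (Fin 2) (Fin 2) K) = !![-1, 0; 1, 1] ∧
        ((P⁻¹ * L₃ * P : GL (Fin 2) K) : Matrix (Fin 2) (Fin 2) K) = !![1, 1; 0, -1])) := by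
  have hsq₃ : L₃ ^ 2 = 1 := sq_eq_one_of_isConj_of_commute
    ((isConj_of_braid h12).trans (isConj_of_braid h23)) h13 h1U h3U
  have hsq₂ : L₂ ^ 2 = 1 := isConj_one_left.1 (hsq₃ ▸ (isConj_of_braid h23).pow 2)
  have hsq₁ : L₁ ^ 2 = 1 := isConj_one_left.1 (hsq₂ ▸ (isConj_of_braid h12).pow 2)
  refine ⟨hsq₁, ?_⟩
  rw [Units.ext_iff] at hsq₁ hsq₂ hsq₃ h12 h23 h13
  obtain rfl : L₁ = L₃ := Units.ext (eq_of_braid_of_commute hsq₁ hsq₂ hsq₃ h12 h23 h13)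
  by_cases hne : L₁.val = L₂.val
  · obtain rfl : L₁ = L₂ := Units.ext hne
    by_cases hone : L₁.val = 1
    · exact ⟨1, .inl ⟨1, .inl rfl, by simp [hone]⟩⟩
    by_cases hneg : L₁.val = -1
    · exact ⟨1, .inl ⟨-1, .inr rfl, by simp [hneg]⟩⟩
    obtain ⟨P, hP⟩ := exists_conj_eq_diagonal_of_sq_eq_one hsq₁ hone hneg
    exact ⟨P, .inr (.inl ⟨hP, hP, hP⟩)⟩
  · obtain ⟨P, hP₁, hP₂⟩ := exists_simultaneous_conj_of_braid hsq₁ hsq₂ h12 hne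
    exact ⟨P, .inr (.inr ⟨hP₁, hP₂, hP₁⟩)⟩

/-- Lemma 5.1: if `L₁, L₂, L₃, U ∈ GL(2, ℂ)` satisfy the braid relations
`L₁L₂L₁ = L₂L₁L₂`, `L₂L₃L₂ = L₃L₂L₃`, the commutations `L₁L₃ = L₃L₁`,
`L₁U = UL₁`, the relation `L₃UL₃ = U`, and `L₁` is conjugate to `L₁⁻¹`, then
`L₁² = 1` and, up to a simultaneous conjugation, `(L₁, L₂, L₃)` is one of the
three explicit triples. -/
theorem stmt_5 (L₁ L₂ L₃ U : GL (Fin 2) ℂ)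
    (h12 : L₁ * L₂ * L₁ = L₂ * L₁ * L₂)
    (h23 : L₂ * L₃ * L₂ = L₃ * L₂ * L₃)
    (h13 : L₁ * L₃ = L₃ * L₁)
    (h1U : L₁ * U = U * L₁)
    (h3U : L₃ * U * L₃ = U)
    (hconj : ∃ R : GL (Fin 2) ℂ, R * L₁ * R⁻¹ = L₁⁻¹) :
    L₁ ^ 2 = 1 ∧
    ∃ P : GL (Fin 2) ℂ,
      ((∃ l : ℂ, (l = 1 ∨ l = -1) ∧
          ((P⁻¹ * L₁ * P : GL (Fin 2) ℂ) : Matrix (Fin 2) (Fin 2) ℂ) = l • 1 ∧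
          ((P⁻¹ * L₂ * P : GL (Fin 2) ℂ) : Matrix (Fin 2) (Fin 2) ℂ) = l • 1 ∧
          ((P⁻¹ * L₃ * P : GL (Fin 2) ℂ) : Matrix (Fin 2) (Fin 2) ℂ) = l • 1) ∨
      (((P⁻¹ * L₁ * P : GL (Fin 2) ℂ) : Matrix (Fin 2) (Fin 2) ℂ) = !![1, 0; 0, -1] ∧
        ((P⁻¹ * L₂ * P : GL (Fin 2) ℂ) : Matrix (Fin 2) (Fin 2) ℂ) = !![1, 0; 0, -1] ∧
        ((P⁻¹ * L₃ * P : GL (Fin 2) ℂ) : Matrix (Fin 2) (Fin 2) ℂ) = !![1, 0; 0, -1]) ∨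
      (((P⁻¹ * L₁ * P : GL (Fin 2) ℂ) : Matrix (Fin 2) (Fin 2) ℂ) = !![1, 1; 0, -1] ∧
        ((P⁻¹ * L₂ * P : GL (Fin 2) ℂ) : Matrix (Fin 2) (Fin 2) ℂ) = !![-1, 0; 1, 1] ∧
        ((P⁻¹ * L₃ * P : GL (Fin 2) ℂ) : Matrix (Fin 2) (Fin 2) ℂ) = !![1, 1; 0, -1])) :=
  stmt_5_general L₁ L₂ L₃ U h12 h23 h13 h1U h3U
end

section
/- Let r ≥ 1, n = 2r + 2, and let Iso(V_n) be the group of linear isometries of V_n = (ℤ/2)ⁿ with its standard bilinear form. Then Iso(V_n) is isomorphic to a semidirect product Sp(2r, ℤ/2) ⋉ (ℤ/2)^{2r+1}; precisely, there exist a normal subgroup N of Iso(V_n) and a subgroup H of Iso(V_n) such that N is isomorphic to the elementary abelian group (ℤ/2)^{2r+1}, H is isomorphic to the symplectic group Sp(2r, ℤ/2), N ∩ H is trivial, and every element of Iso(V_n) is a product of an element of N and an element of H. -/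
/-!
In characteristic 2, the all-ones vector `u` satisfies `⟨x, x⟩ = ⟨x, u⟩²`, and squaring is injective
over a reduced ring, so every isometry fixes `u`. Extend `u` to a basis consisting of a symplectic
basis, `u`, and a vector `e` with `⟨u, e⟩ = ⟨e, e⟩ = 1`. In these coordinates the isometries are
exactly the maps `x ↦ A x + b(x) u`, `u ↦ u`, `e ↦ c + a u + e` with `A` symplectic, `a` and `c`
arbitrary, and `b = A J c`.

Projecting to `A` is a homomorphism split by `b = c = 0`, `a = 0`. On its kernel the parameters
compose by `(c₁, a₁) (c₂, a₂) = (c₁ + c₂, a₁ + a₂ + ⟨c₁, J c₂⟩)`; the cocycle is the polar form of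
`h(x, y) = ∑ xᵢ yᵢ`, so `(c, a) ↦ (c, a + h(c))` is an isomorphism from a vector group onto the
kernel.
-/

open Matrix Subgroup

namespace IsometryGroupSplitting

section Splitting

variable {N E G : Type*} [Group N] [Group E] [Group G]

theorem isComplement'_range_inl_range_splitting (S : GroupExtension N E G) (s : S.Splitting) :
    S.inl.range.IsComplement' s.toMonoidHom.range := by
  refine isComplement'_of_disjoint_and_mul_eq_univ (disjoint_def.mpr ?_) ?_
  · rintro _ hker ⟨g, rfl⟩
    rw [S.range_inl_eq_ker_rightHom, MonoidHom.mem_ker] at hker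
    have hg : g = 1 := (s.rightHom_splitting g).symm.trans hker
    rw [hg, map_one]
  · refine Set.eq_univ_of_forall fun x ↦
      ⟨x * (s (S.rightHom x))⁻¹, ?_, s (S.rightHom x), ⟨_, rfl⟩, inv_mul_cancel_right _ _⟩
    rw [SetLike.mem_coe, S.range_inl_eq_ker_rightHom, MonoidHom.mem_ker, map_mul, map_inv,
      s.rightHom_splitting, mul_inv_cancel]

end Splitting

section GramIsometries

variable {m n R : Type*} [Fintype m] [Fintype n] [DecidableEq m] [DecidableEq n] [CommRing R]

/-- The matrices `X` with `X * G * Xᵀ = G`: if `G` is the Gram matrix of a basis, these are the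
isometries, the rows of `X` being the coordinates of the images of the basis vectors. -/
def gramIsometries (G : Matrix n n R) : Submonoid (Matrix n n R) where
  carrier := {X | X * G * Xᵀ = G}
  one_mem' := by simp
  mul_mem' {X Y} hX hY := by
    have hX : X * G * Xᵀ = G := hX
    have hY : Y * G * Yᵀ = G := hY
    calc X * Y * G * (X * Y)ᵀ = X * (Y * G * Yᵀ) * Xᵀ := by
          simp only [transpose_mul, Matrix.mul_assoc]
      _ = G := by rw [hY, hX]

theorem mem_gramIsometries_iff {G X : Matrix n n R} :
    X ∈ gramIsometries G ↔ X * G * Xᵀ = G :=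
  Iff.rfl

/-- Change of basis from the standard basis to the basis formed by the rows of `P`, whose Gram
matrix is `G`. -/
def orthogonalGroupEquivGramIsometries {G : Matrix m m R} (P : Matrix m n R) (Q : Matrix n m R)
    (hG : P * Pᵀ = G) (hPQ : P * Q = 1) (hQP : Q * P = 1) :
    orthogonalGroup n R ≃* gramIsometries G where
  toFun g := ⟨P * g.1 * Q, by
    have hg : g.1 * g.1ᵀ = 1 := (mem_orthogonalGroup_iff _ _).mp g.2
    calc P * g.1 * Q * G * (P * g.1 * Q)ᵀ
        = P * (g.1 * (Q * P) * (Q * P)ᵀ * g.1ᵀ) * Pᵀ := by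
          simp only [← hG, transpose_mul, Matrix.mul_assoc]
      _ = G := by rw [hQP, transpose_one, Matrix.mul_one, Matrix.mul_one, hg, Matrix.mul_one, hG]⟩
  invFun X := ⟨Q * X.1 * P, (mem_orthogonalGroup_iff _ _).mpr <| by
    calc Q * X.1 * P * (Q * X.1 * P)ᵀ = Q * (X.1 * (P * Pᵀ) * X.1ᵀ) * Qᵀ := by
          simp only [transpose_mul, Matrix.mul_assoc]
      _ = Q * P * (Q * P)ᵀ := by
          rw [hG, mem_gramIsometries_iff.mp X.2, ← hG]
          simp only [transpose_mul, Matrix.mul_assoc]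
      _ = 1 := by rw [hQP, transpose_one, Matrix.mul_one]⟩
  left_inv g := Subtype.ext <| by
    calc Q * (P * g.1 * Q) * P = Q * P * g.1 * (Q * P) := by simp only [Matrix.mul_assoc]
      _ = g.1 := by rw [hQP, Matrix.one_mul, Matrix.mul_one]
  right_inv X := Subtype.ext <| by
    calc P * (Q * X.1 * P) * Q = P * Q * X.1 * (P * Q) := by simp only [Matrix.mul_assoc]
      _ = X.1 := by rw [hPQ, Matrix.one_mul, Matrix.mul_one]
  map_mul' g h := Subtype.ext <| by
    calc P * (g.1 * h.1) * Q = P * g.1 * (Q * P) * h.1 * Q := by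
          simp only [hQP, Matrix.mul_one, Matrix.mul_assoc]
      _ = P * g.1 * Q * (P * h.1 * Q) := by simp only [Matrix.mul_assoc]

end GramIsometries

theorem pi_add_self {ι R : Type*} [Ring R] [CharP R 2] (x : ι → R) : x + x = 0 :=
  funext fun i ↦ CharTwo.add_self_eq_zero (x i)

section AdaptedGram

variable (l R : Type*) [DecidableEq l] [CommRing R]

/-- The Gram matrix of a symplectic basis together with an isotropic vector `u` (index `0`) and a
vector `e` (index `1`) with `⟨u, e⟩ = ⟨e, e⟩ = 1`, both orthogonal to the symplectic part. -/
def adaptedGram : Matrix ((l ⊕ l) ⊕ Fin 2) ((l ⊕ l) ⊕ Fin 2) R :=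
  fromBlocks (J l R) 0 0 !![0, 1; 1, 1]

variable {l R}

section CharTwo

variable [CharP R 2]

theorem J_eq_fromBlocks : J l R = fromBlocks 0 1 1 0 := by
  rw [J]
  congr 1
  ext i j
  exact CharTwo.neg_eq _

theorem J_isSymm : (J l R).IsSymm := by
  simp [IsSymm, J_eq_fromBlocks, fromBlocks_transpose]

theorem adaptedGram_mul_inverse [Fintype l] :
    adaptedGram l R * fromBlocks (J l R) 0 0 !![1, 1; 1, 0] = 1 := by
  have h_symplectic : J l R * J l R = 1 := by simp [J_eq_fromBlocks, fromBlocks_multiply]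
  have h_plane : (!![0, 1; 1, 1] * !![1, 1; 1, 0] : Matrix (Fin 2) (Fin 2) R) = 1 := by
    simp [CharTwo.add_self_eq_zero, one_fin_two]
  simp [adaptedGram, fromBlocks_multiply, h_symplectic, h_plane]

end CharTwo

variable [Fintype l]

theorem dotProduct_J_mulVec_self (x : l ⊕ l → R) : x ⬝ᵥ (J l R *ᵥ x) = 0 := by
  simp [J, fromBlocks_mulVec, dotProduct, Fintype.sum_sum_type, Function.comp_def, neg_mulVec,
    mul_comm]

end AdaptedGram

section HyperbolicForm

variable {l R : Type*} [Fintype l] [CommRing R]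

/-- The quadratic form `∑ xᵢ yᵢ`, whose polar form is the symplectic form `J`. -/
def hyperbolicForm (x : l ⊕ l → R) : R := ∑ i, x (Sum.inl i) * x (Sum.inr i)

theorem hyperbolicForm_zero : hyperbolicForm (0 : l ⊕ l → R) = 0 := by
  simp [hyperbolicForm]

theorem hyperbolicForm_add [DecidableEq l] [CharP R 2] (x y : l ⊕ l → R) :
    hyperbolicForm (x + y) = hyperbolicForm x + hyperbolicForm y + x ⬝ᵥ (J l R *ᵥ y) := by
  simp only [hyperbolicForm, J_eq_fromBlocks, dotProduct, fromBlocks_mulVec, zero_mulVec,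
    one_mulVec, Fintype.sum_sum_type, Sum.elim_inl, Sum.elim_inr, Pi.add_apply,
    zero_add, add_zero, Function.comp_apply, ← Finset.sum_add_distrib]
  exact Finset.sum_congr rfl fun i _ ↦ by ring

end HyperbolicForm

section Parabolic

variable {w R : Type*} [CommRing R]

/-- The matrix of the linear map `x ↦ A x + b(x) u`, `u ↦ u`, `e ↦ c + a u + e` in an adapted
basis. -/
def parabolic (A : Matrix w w R) (b c : w → R) (a : R) : Matrix (w ⊕ Fin 2) (w ⊕ Fin 2) R :=
  fromBlocks A (vecMulVec b ![1, 0]) (vecMulVec ![0, 1] c) !![1, 0; a, 1]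

theorem parabolic_one [DecidableEq w] : parabolic (1 : Matrix w w R) 0 0 0 = 1 := by
  have h_zero : vecMulVec ![0, 1] (0 : w → R) = 0 := ext fun _ _ ↦ mul_zero _
  rw [parabolic, zero_vecMulVec, h_zero, ← one_fin_two, fromBlocks_one]

theorem parabolic_inj {A A' : Matrix w w R} {b b' c c' : w → R} {a a' : R} :
    parabolic A b c a = parabolic A' b' c' a' ↔ A = A' ∧ b = b' ∧ c = c' ∧ a = a' := by
  refine ⟨fun h ↦ ?_, fun ⟨h_A, h_b, h_c, h_a⟩ ↦ by rw [h_A, h_b, h_c, h_a]⟩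
  obtain ⟨h_A, h_b, h_c, h_a⟩ := fromBlocks_inj.mp h
  refine ⟨h_A, funext fun i ↦ ?_, funext fun i ↦ ?_, ?_⟩
  · have h_i : b i * 1 = b' i * 1 := congr_fun₂ h_b i 0
    rwa [mul_one, mul_one] at h_i
  · have h_i : 1 * c i = 1 * c' i := congr_fun₂ h_c 1 i
    rwa [one_mul, one_mul] at h_i
  · exact congr_fun₂ h_a 1 0

theorem parabolic_mul [Fintype w] (A A' : Matrix w w R) (b c b' c' : w → R) (a a' : R) :
    parabolic A b c a * parabolic A' b' c' a' =
      parabolic (A * A') (A *ᵥ b' + b) (c ᵥ* A' + c') (c ⬝ᵥ b' + a + a') := by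
  have h_row : ![1, 0] ᵥ* !![1, 0; a', 1] = ![1, 0] := by simp
  have h_col : !![1, 0; a, 1] *ᵥ ![0, 1] = ![0, 1] := by
    ext i; fin_cases i <;> simp
  have h_dot : ![(1 : R), 0] ⬝ᵥ ![0, 1] = 0 := by simp
  have h_plane : vecMulVec ((c ⬝ᵥ b') • ![0, 1]) ![1, 0] + !![1, 0; a, 1] * !![1, 0; a', 1] =
      !![1, 0; c ⬝ᵥ b' + a + a', 1] := by
    ext i j; fin_cases i <;> fin_cases j <;> simp [add_assoc]
  simp only [parabolic, fromBlocks_multiply, mul_vecMulVec, vecMulVec_mul, vecMulVec_mulVec,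
    op_smul_eq_smul, h_row, h_col, h_dot, h_plane, zero_smul, zero_vecMulVec, add_zero,
    add_vecMulVec, vecMulVec_add]

variable {l : Type*} [Fintype l] [DecidableEq l] [CharP R 2]

theorem parabolic_mul_adaptedGram_mul_transpose (A : Matrix (l ⊕ l) (l ⊕ l) R)
    (b c : l ⊕ l → R) (a : R) :
    parabolic A b c a * adaptedGram l R * (parabolic A b c a)ᵀ =
      fromBlocks (A * J l R * Aᵀ) (vecMulVec (A *ᵥ J l R *ᵥ c + b) ![0, 1])
        (vecMulVec ![0, 1] (A *ᵥ J l R *ᵥ c + b)) !![0, 1; 1, 1] := by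
  have h_symm : c ᵥ* J l R = J l R *ᵥ c := by rw [← vecMul_transpose, J_isSymm]
  have h_alt : (J l R *ᵥ c) ⬝ᵥ c = 0 := by rw [dotProduct_comm, dotProduct_J_mulVec_self]
  have h_dot : ![(0 : R), 1] ⬝ᵥ ![1, 0] = 0 := by simp
  have h_row : ![(1 : R), 0] ᵥ* !![0, 1; 1, 1] = ![0, 1] := by simp
  have h_row' : ![0, 1] ᵥ* !![1, 0; a, 1]ᵀ = ![0, 1] := by
    ext i; fin_cases i <;> simp [vecMul_transpose]
  have h_col : (!![1, 0; a, 1] * !![0, 1; 1, 1]) *ᵥ ![1, 0] = ![0, 1] := by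
    ext i; fin_cases i <;> simp
  have h_plane : !![1, 0; a, 1] * !![0, 1; 1, 1] * !![1, 0; a, 1]ᵀ = !![0, 1; 1, 1] := by
    have h_cancel : a + (a + 1) = 1 := CharTwo.add_cancel_left a 1
    ext i j; fin_cases i <;> fin_cases j <;> simp [vecMul_transpose, h_cancel]
  simp only [parabolic, adaptedGram, fromBlocks_transpose, fromBlocks_multiply,
    transpose_vecMulVec, Matrix.mul_zero, zero_add, add_zero, mul_vecMulVec, vecMulVec_mul,
    vecMulVec_mulVec, op_smul_eq_smul, h_dot, h_row, h_row', h_col, h_plane, h_symm, h_alt,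
    vecMul_transpose, mulVec_mulVec, zero_smul, zero_vecMulVec, add_vecMulVec, vecMulVec_add]

theorem parabolic_mem_gramIsometries_iff {A : Matrix (l ⊕ l) (l ⊕ l) R}
    {b c : l ⊕ l → R} {a : R} :
    parabolic A b c a ∈ gramIsometries (adaptedGram l R) ↔
      A ∈ symplecticGroup l R ∧ b = A *ᵥ J l R *ᵥ c := by
  rw [mem_gramIsometries_iff, parabolic_mul_adaptedGram_mul_transpose, adaptedGram, fromBlocks_inj,
    SymplecticGroup.mem_iff]
  refine and_congr_right fun _ ↦ ⟨fun ⟨h, _⟩ ↦ funext fun i ↦ ?_, ?_⟩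
  · have h_i : ((A *ᵥ J l R *ᵥ c) i + b i) * 1 = 0 := congr_fun₂ h i 1
    rw [mul_one, CharTwo.add_eq_zero] at h_i
    exact h_i.symm
  · rintro rfl
    rw [pi_add_self, zero_vecMulVec]
    exact ⟨rfl, ext fun _ _ ↦ mul_zero _, rfl⟩

end Parabolic

section Rigidity

variable {l R : Type*} [Fintype l] [DecidableEq l] [CommRing R] [CharP R 2]

theorem dotProduct_adaptedGram_mulVec_self (x : (l ⊕ l) ⊕ Fin 2 → R) :
    x ⬝ᵥ (adaptedGram l R *ᵥ x) = x (Sum.inr 1) ^ 2 := by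
  have h_plane (y : Fin 2 → R) : y ⬝ᵥ (!![0, 1; 1, 1] *ᵥ y) = y 1 ^ 2 := by
    calc y ⬝ᵥ (!![0, 1; 1, 1] *ᵥ y) = y 0 * y 1 + (y 0 * y 1 + y 1 ^ 2) := by
          simp [dotProduct, mulVec, Fin.sum_univ_two, mul_add, sq, mul_comm (y 1) (y 0)]
      _ = y 1 ^ 2 := CharTwo.add_cancel_left _ _
  rw [adaptedGram, fromBlocks_mulVec, dotProduct_block]
  simp only [Sum.elim_comp_inl, Sum.elim_comp_inr, zero_mulVec, add_zero, zero_add,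
    dotProduct_J_mulVec_self, h_plane, Function.comp_apply]

variable [IsReduced R] {X : Matrix ((l ⊕ l) ⊕ Fin 2) ((l ⊕ l) ⊕ Fin 2) R}

theorem col_inr_one_of_mem_gramIsometries (hX : X ∈ gramIsometries (adaptedGram l R)) :
    X.col (Sum.inr 1) = Pi.single (Sum.inr 1) 1 := by
  funext i
  refine frobenius_inj R 2 ?_
  calc X i (Sum.inr 1) ^ 2 = (X * adaptedGram l R * Xᵀ) i i := by
        rw [Matrix.mul_mul_apply, ← dotProduct_adaptedGram_mulVec_self]; rfl
    _ = Pi.single i 1 ⬝ᵥ (adaptedGram l R *ᵥ Pi.single i 1) := by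
        rw [mem_gramIsometries_iff.mp hX, mulVec_single_one, single_one_dotProduct, col_apply]
    _ = (Pi.single (Sum.inr 1) 1 : (l ⊕ l) ⊕ Fin 2 → R) i ^ 2 := by
        rw [dotProduct_adaptedGram_mulVec_self, Pi.single_comm]

theorem row_inr_zero_of_mem_gramIsometries (hX : X ∈ gramIsometries (adaptedGram l R)) :
    X.row (Sum.inr 0) = Pi.single (Sum.inr 0) 1 := by
  have h_inv : X * adaptedGram l R * (Xᵀ * fromBlocks (J l R) 0 0 !![1, 1; 1, 0]) = 1 := by
    rw [← Matrix.mul_assoc, mem_gramIsometries_iff.mp hX, adaptedGram_mul_inverse]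
  have h_gram : adaptedGram l R *ᵥ Pi.single (Sum.inr 0) 1 = Pi.single (Sum.inr 1) 1 := by
    rw [mulVec_single_one]
    ext (i | i)
    · simp [adaptedGram]
    · fin_cases i <;> simp [adaptedGram]
  have h_fix : X *ᵥ Pi.single (Sum.inr 1) 1 = Pi.single (Sum.inr 1) 1 := by
    rw [mulVec_single_one, col_inr_one_of_mem_gramIsometries hX]
  refine mulVec_injective_of_isUnit (IsUnit.of_mul_eq_one _ h_inv) ?_
  calc (X * adaptedGram l R) *ᵥ X.row (Sum.inr 0)
      = (X * adaptedGram l R * Xᵀ) *ᵥ Pi.single (Sum.inr 0) 1 := by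
        rw [← mulVec_mulVec _ _ Xᵀ, mulVec_single_one, col_transpose]
    _ = Pi.single (Sum.inr 1) 1 := by rw [mem_gramIsometries_iff.mp hX, h_gram]
    _ = (X * adaptedGram l R) *ᵥ Pi.single (Sum.inr 0) 1 := by
        rw [← mulVec_mulVec, h_gram, h_fix]

theorem exists_eq_parabolic_of_mem_gramIsometries (hX : X ∈ gramIsometries (adaptedGram l R)) :
    ∃ A b c a, X = parabolic A b c a := by
  refine ⟨X.toBlocks₁₁, fun i ↦ X (Sum.inl i) (Sum.inr 0), fun i ↦ X (Sum.inr 1) (Sum.inl i),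
    X (Sum.inr 1) (Sum.inr 0), ?_⟩
  have h_col i : X i (Sum.inr 1) = Pi.single (M := fun _ ↦ R) (Sum.inr 1) 1 i :=
    congr_fun (col_inr_one_of_mem_gramIsometries hX) i
  have h_row i : X (Sum.inr 0) i = Pi.single (M := fun _ ↦ R) (Sum.inr 0) 1 i :=
    congr_fun (row_inr_zero_of_mem_gramIsometries hX) i
  refine (fromBlocks_toBlocks X).symm.trans (fromBlocks_inj.mpr ⟨rfl, ?_, ?_, ?_⟩) <;> ext i j
  · fin_cases j <;> simp [toBlocks₁₂, vecMulVec_apply, -vecMulVec_cons, h_col]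
  · fin_cases i <;> simp [toBlocks₂₁, vecMulVec_apply, -cons_vecMulVec, h_row]
  · fin_cases i <;> fin_cases j <;> simp [toBlocks₂₂, h_col, h_row]

theorem mem_gramIsometries_adaptedGram_iff :
    X ∈ gramIsometries (adaptedGram l R) ↔
      ∃ A ∈ symplecticGroup l R, ∃ c a, X = parabolic A (A *ᵥ J l R *ᵥ c) c a := by
  constructor
  · intro hX
    obtain ⟨A, b, c, a, rfl⟩ := exists_eq_parabolic_of_mem_gramIsometries hX
    obtain ⟨hA, rfl⟩ := parabolic_mem_gramIsometries_iff.mp hX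
    exact ⟨A, hA, c, a, rfl⟩
  · rintro ⟨A, hA, c, a, rfl⟩
    exact parabolic_mem_gramIsometries_iff.mpr ⟨hA, rfl⟩

end Rigidity

section SemidirectFactors

variable (l R : Type*) [Fintype l] [DecidableEq l] [CommRing R] [CharP R 2]

/-- The homomorphism `A ↦ parabolic A 0 0 0`, letting the symplectic group act on the symplectic
part of an adapted basis. -/
def symplecticInclusion : symplecticGroup l R →* gramIsometries (adaptedGram l R) where
  toFun A := ⟨parabolic A.1 0 0 0,
    parabolic_mem_gramIsometries_iff.mpr ⟨A.2, by rw [mulVec_zero, mulVec_zero]⟩⟩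
  map_one' := Subtype.ext parabolic_one
  map_mul' A B := Subtype.ext <| by
    simp only [Submonoid.coe_mul, parabolic_mul, mulVec_zero, zero_vecMul, dotProduct_zero,
      add_zero]

/-- The homomorphism from a vector group onto the isometries acting trivially on the symplectic
part modulo `u`. The summand `hyperbolicForm c` absorbs the cocycle `c₁ ⬝ᵥ (J *ᵥ c₂)` in their
composition law. -/
def translation :
    Multiplicative ((l ⊕ l → R) × R) →* gramIsometries (adaptedGram l R) where
  toFun v := ⟨parabolic 1 (J l R *ᵥ v.toAdd.1) v.toAdd.1 (v.toAdd.2 + hyperbolicForm v.toAdd.1),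
    parabolic_mem_gramIsometries_iff.mpr ⟨one_mem _, (one_mulVec _).symm⟩⟩
  map_one' := Subtype.ext <| by
    simp only [toAdd_one, Prod.fst_zero, Prod.snd_zero, mulVec_zero, hyperbolicForm_zero,
      add_zero, parabolic_one, Submonoid.coe_one]
  map_mul' v w := Subtype.ext <| by
    simp only [Submonoid.coe_mul, parabolic_mul, toAdd_mul, Prod.fst_add, Prod.snd_add,
      Matrix.mul_one, one_mulVec, vecMul_one, mulVec_add, hyperbolicForm_add]
    congr 1 <;> abel

variable {l R} in
theorem translation_injective : Function.Injective (translation l R) := by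
  intro v w h
  obtain ⟨-, -, h_fst, h_snd⟩ := parabolic_inj.mp (congr_arg Subtype.val h)
  rw [h_fst] at h_snd
  exact Multiplicative.toAdd.injective (Prod.ext h_fst (add_right_cancel h_snd))

variable [IsReduced R]

/-- The homomorphism sending an isometry to the symplectic matrix that it induces on the symplectic
part of an adapted basis. -/
def symplecticPart : gramIsometries (adaptedGram l R) →* symplecticGroup l R where
  toFun X := ⟨X.1.toBlocks₁₁, by
    obtain ⟨A, hA, c, a, hX⟩ := mem_gramIsometries_adaptedGram_iff.mp X.2
    rwa [hX, parabolic, toBlocks_fromBlocks₁₁]⟩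
  map_one' := Subtype.ext <| by
    simp only [Submonoid.coe_one, ← fromBlocks_one, toBlocks_fromBlocks₁₁]
  map_mul' X Y := Subtype.ext <| by
    obtain ⟨A, -, c, a, hX⟩ := mem_gramIsometries_adaptedGram_iff.mp X.2
    obtain ⟨A', -, c', a', hY⟩ := mem_gramIsometries_adaptedGram_iff.mp Y.2
    simp only [Submonoid.coe_mul, hX, hY, parabolic_mul]
    simp only [parabolic, toBlocks_fromBlocks₁₁]

variable {l R}

theorem symplecticPart_symplecticInclusion (A : symplecticGroup l R) :
    symplecticPart l R (symplecticInclusion l R A) = A :=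
  rfl

theorem symplecticPart_eq_one_iff {X : gramIsometries (adaptedGram l R)} :
    symplecticPart l R X = 1 ↔ ∃ v, translation l R v = X := by
  constructor
  · intro h_ker
    obtain ⟨A, -, c, a, hX⟩ := mem_gramIsometries_adaptedGram_iff.mp X.2
    have hA : A = 1 := by
      have h_part : X.1.toBlocks₁₁ = 1 := congr_arg Subtype.val h_ker
      rwa [hX] at h_part
    refine ⟨.ofAdd (c, a - hyperbolicForm c), Subtype.ext ?_⟩
    rw [hX, hA, one_mulVec]
    exact congr_arg (parabolic 1 (J l R *ᵥ c) c) (sub_add_cancel a _)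
  · rintro ⟨v, rfl⟩
    rfl

end SemidirectFactors

section AdaptedBasis

variable (l R : Type*) [LinearOrder l] [CommRing R]

/-- The matrix with ones above the diagonal and zeros elsewhere. -/
def strictUpperOnes : Matrix l l R := of fun i j ↦ if i < j then 1 else 0

/-- The coordinate matrix of the symplectic part of the basis `adaptedBasis`. -/
def symplecticRows : Matrix (l ⊕ l) (l ⊕ l) R :=
  fromBlocks 1 1 (strictUpperOnes l R) (1 + strictUpperOnes l R)

/-- Rows of an orthonormal basis, indexed by `(l ⊕ l) ⊕ Fin 2` and written `(fᵢ, gᵢ, x₀, x₁)`, are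
turned into `fᵢ + gᵢ`, `gᵢ + x₀ + ∑ k > i, (fₖ + gₖ)`, the sum of all basis vectors, and `x₁`. -/
def adaptedBasis : Matrix ((l ⊕ l) ⊕ Fin 2) ((l ⊕ l) ⊕ Fin 2) R :=
  fromBlocks (symplecticRows l R) (vecMulVec (Sum.elim 0 1) ![1, 0]) (vecMulVec ![1, 0] 1)
    !![1, 1; 0, 1]

variable {l R}

theorem one_add_strictUpperOnes_add_transpose :
    1 + strictUpperOnes l R + (strictUpperOnes l R)ᵀ = vecMulVec 1 1 := by
  ext i j
  rcases lt_trichotomy i j with h | rfl | h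
  · simp [strictUpperOnes, vecMulVec_apply, h, h.ne, h.not_gt]
  · simp [strictUpperOnes, vecMulVec_apply]
  · simp [strictUpperOnes, vecMulVec_apply, h, h.ne', h.not_gt]

variable [Fintype l] [CharP R 2]

theorem symplecticRows_mul_transpose :
    symplecticRows l R * (symplecticRows l R)ᵀ + vecMulVec (Sum.elim 0 1) (Sum.elim 0 1) =
      J l R := by
  have h_rank_one : vecMulVec (Sum.elim 0 1) (Sum.elim 0 1) =
      (fromBlocks 0 0 0 (vecMulVec 1 1) : Matrix (l ⊕ l) (l ⊕ l) R) := by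
    ext (i | i) (j | j) <;> simp [vecMulVec_apply]
  have h_self (M : Matrix l l R) : M + M = 0 := ext fun _ _ ↦ CharTwo.add_self_eq_zero _
  have h_cancel (M N : Matrix l l R) : M + (N + M) = N := by
    rw [add_left_comm, h_self, add_zero]
  rw [h_rank_one, J_eq_fromBlocks, symplecticRows, fromBlocks_transpose, fromBlocks_multiply,
    fromBlocks_add]
  simp only [transpose_add, transpose_one, Matrix.one_mul, Matrix.mul_one, add_zero, fromBlocks_inj]
  set T := strictUpperOnes l R
  refine ⟨h_self 1, h_cancel _ _, h_cancel _ _, ?_⟩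
  calc T * Tᵀ + (1 + T) * (1 + Tᵀ) + vecMulVec 1 1
      = T * Tᵀ + T * Tᵀ + (1 + T + Tᵀ + vecMulVec 1 1) := by
        rw [Matrix.add_mul, Matrix.mul_add, Matrix.mul_add, Matrix.one_mul, Matrix.one_mul,
          Matrix.mul_one]
        abel
    _ = 0 := by rw [one_add_strictUpperOnes_add_transpose, h_self, h_self, add_zero]

theorem symplecticRows_mulVec_one : symplecticRows l R *ᵥ 1 = (Sum.elim 0 1 : l ⊕ l → R) := by
  rw [symplecticRows, fromBlocks_mulVec, Pi.one_comp, Pi.one_comp, add_mulVec, one_mulVec,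
    add_left_comm, pi_add_self, pi_add_self, add_zero]

theorem adaptedBasis_mul_transpose :
    adaptedBasis l R * (adaptedBasis l R)ᵀ = adaptedGram l R := by
  have h_dot : ![(1 : R), 0] ⬝ᵥ ![1, 0] = 1 := by simp
  have h_col : !![(1 : R), 1; 0, 1] *ᵥ ![1, 0] = ![1, 0] := by
    ext i; fin_cases i <;> simp
  have h_plane : !![(1 : R), 1; 0, 1] * !![1, 1; 0, 1]ᵀ = !![0, 1; 1, 1] := by
    ext i j; fin_cases i <;> fin_cases j <;> simp [vecMul_transpose, CharTwo.add_self_eq_zero]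
  have h_card : (1 : l ⊕ l → R) ⬝ᵥ 1 = 0 := by simp [CharTwo.add_self_eq_zero]
  have h_vecMulVec (x : l ⊕ l → R) : vecMulVec (0 : Fin 2 → R) x = 0 := zero_vecMulVec _
  simp only [adaptedBasis, adaptedGram, fromBlocks_transpose, fromBlocks_multiply,
    transpose_vecMulVec, mul_vecMulVec, vecMulVec_mul, vecMulVec_mulVec, op_smul_eq_smul,
    vecMul_transpose, symplecticRows_mulVec_one, symplecticRows_mul_transpose,
    h_dot, h_col, h_plane, h_card, one_smul, zero_smul, zero_vecMulVec, zero_add,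
    ← add_vecMulVec, pi_add_self, h_vecMulVec]

end AdaptedBasis

section OrthogonalGroup

variable {n l R : Type*} [Fintype n] [DecidableEq n] [Fintype l] [LinearOrder l] [CommRing R]
  [CharP R 2]

/-- The coordinates of isometries in the adapted basis, the standard basis being indexed
through `e`. -/
def orthogonalGroupEquivAdapted (e : n ≃ (l ⊕ l) ⊕ Fin 2) :
    orthogonalGroup n R ≃* gramIsometries (adaptedGram l R) :=
  have h_gram : (adaptedBasis l R).submatrix id e * ((adaptedBasis l R).submatrix id e)ᵀ =
      adaptedGram l R := by
    rw [transpose_submatrix, submatrix_mul_equiv, adaptedBasis_mul_transpose, submatrix_id_id]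
  have h_inv : (adaptedBasis l R).submatrix id e * (((adaptedBasis l R).submatrix id e)ᵀ *
      fromBlocks (J l R) 0 0 !![1, 1; 1, 0]) = 1 := by
    rw [← Matrix.mul_assoc, h_gram, adaptedGram_mul_inverse]
  orthogonalGroupEquivGramIsometries _ _ h_gram h_inv ((mul_eq_one_comm_of_equiv e.symm).mp h_inv)

variable [IsReduced R]

/-- The orthogonal group as an extension of the symplectic group by a vector group. -/
def orthogonalGroupExtension (e : n ≃ (l ⊕ l) ⊕ Fin 2) :
    GroupExtension (Multiplicative ((l ⊕ l → R) × R)) (orthogonalGroup n R)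
      (symplecticGroup l R) where
  inl := (orthogonalGroupEquivAdapted e).symm.toMonoidHom.comp (translation l R)
  rightHom := (symplecticPart l R).comp (orthogonalGroupEquivAdapted e).toMonoidHom
  inl_injective := (orthogonalGroupEquivAdapted e).symm.injective.comp translation_injective
  range_inl_eq_ker_rightHom := by
    ext g
    rw [MonoidHom.mem_ker, MonoidHom.comp_apply, symplecticPart_eq_one_iff, MonoidHom.mem_range]
    exact exists_congr fun v ↦ (orthogonalGroupEquivAdapted e).symm_apply_eq
  rightHom_surjective A :=
    ⟨(orthogonalGroupEquivAdapted e).symm (symplecticInclusion l R A),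
      (congr_arg (symplecticPart l R) (MulEquiv.apply_symm_apply _ _)).trans
        (symplecticPart_symplecticInclusion A)⟩

/-- The splitting of `orthogonalGroupExtension` given by the symplectic matrices acting on the
symplectic part of the adapted basis. -/
def orthogonalGroupSplitting (e : n ≃ (l ⊕ l) ⊕ Fin 2) :
    (orthogonalGroupExtension (R := R) e).Splitting where
  toMonoidHom := (orthogonalGroupEquivAdapted e).symm.toMonoidHom.comp (symplecticInclusion l R)
  rightInverse_rightHom A :=
    (congr_arg (symplecticPart l R) (MulEquiv.apply_symm_apply _ _)).trans
      (symplecticPart_symplecticInclusion A)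

end OrthogonalGroup

end IsometryGroupSplitting

open IsometryGroupSplitting in
theorem stmt_6_general (R : Type*) [CommRing R] [CharP R 2] [IsReduced R] (r : ℕ) :
    ∃ (N H : Subgroup (orthogonalGroup (Fin (2 * r + 2)) R)),
      N.Normal ∧
      Nonempty (N ≃* Multiplicative (Fin (2 * r + 1) → R)) ∧
      Nonempty (H ≃* symplecticGroup (Fin r) R) ∧
      N ⊓ H = ⊥ ∧
      ∀ g : orthogonalGroup (Fin (2 * r + 2)) R, ∃ a ∈ N, ∃ b ∈ H, g = a * b := by
  have : Nontrivial R := CharP.nontrivial_of_char_ne_one (v := 2) (by decide)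
  have e : Fin (2 * r + 2) ≃ (Fin r ⊕ Fin r) ⊕ Fin 2 :=
    Fintype.equivOfCardEq (by simp [two_mul])
  let S := orthogonalGroupExtension (R := R) e
  let s : S.Splitting := orthogonalGroupSplitting e
  have h_compl : S.inl.range.IsComplement' s.toMonoidHom.range :=
    isComplement'_range_inl_range_splitting S s
  have φ : ((Fin r ⊕ Fin r → R) × R) ≃ₗ[R] (Fin (2 * r + 1) → R) :=
    LinearEquiv.ofFinrankEq _ _ (by simp [two_mul])
  refine ⟨S.inl.range, s.toMonoidHom.range, S.normal_inl_range,
    ⟨(MonoidHom.ofInjective S.inl_injective).symm.trans φ.toAddEquiv.toMultiplicative⟩,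
    ⟨(MonoidHom.ofInjective s.rightInverse_rightHom.injective).symm⟩,
    h_compl.disjoint.eq_bot, fun g ↦ ?_⟩
  obtain ⟨⟨a, b⟩, rfl⟩ := h_compl.2 g
  exact ⟨a, a.2, b, b.2, rfl⟩

/-- Lemma 8.1: for `n = 2r + 2`, the isometry group `Iso(V_n)` of
`V_n = (ℤ/2)ⁿ` with its standard bilinear form (i.e. the orthogonal group of
`n × n` matrices over `ℤ/2`) is a semidirect product
`Sp(2r, ℤ/2) ⋉ (ℤ/2)^{2r+1}`: there are a normal subgroup `N ≅ (ℤ/2)^{2r+1}`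
and a subgroup `H ≅ Sp(2r, ℤ/2)` with `N ∩ H = 1` and `Iso(V_n) = N H`. -/
theorem stmt_6 (r : ℕ) (hr : 1 ≤ r) :
    ∃ (N H : Subgroup (Matrix.orthogonalGroup (Fin (2 * r + 2)) (ZMod 2))),
      N.Normal ∧
      Nonempty (N ≃* Multiplicative (Fin (2 * r + 1) → ZMod 2)) ∧
      Nonempty (H ≃* Matrix.symplecticGroup (Fin r) (ZMod 2)) ∧
      N ⊓ H = ⊥ ∧
      ∀ g : Matrix.orthogonalGroup (Fin (2 * r + 2)) (ZMod 2),
        ∃ a ∈ N, ∃ b ∈ H, g = a * b :=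
  stmt_6_general (ZMod 2) r
end

section
/- Let r ≥ 1, n = 2r + 2, let c ∈ V_n be the last standard basis vector (c = e_n). Then the stabilizer of c in Iso(V_n), i.e., the subgroup {L ∈ Iso(V_n) : L(c) = c}, is isomorphic as a group to the symplectic group Sp(2r, ℤ/2). -/
/-!
In characteristic two an orthogonal matrix `L` satisfies
`⟨1, L x⟩² = ⟨L x, L x⟩ = ⟨x, x⟩ = ⟨1, x⟩²`, where `1` is the all-ones vector; over a reduced ring
this forces `L 1 = 1`. So an isometry fixing the basis vector `c` also fixes `1 - c`. In even
dimension, `c` and `1 - c` are orthonormal, and the form is alternating and nondegenerate on their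
orthogonal complement. If the columns of `U` are a symplectic basis of the complement and those of
`C` are `c` and `1 - c`, everything needed is contained in the completeness relation
`U J Uᵀ + C Cᵀ = 1`: the isometries fixing the columns of `C` are exactly the matrices
`1 + U (S - 1) J Uᵀ` with `S` symplectic.
-/

open Matrix

namespace OrthogonalStabilizer

section ExtendByIdentity

variable {m n R : Type*} [Fintype m] [Fintype n] [DecidableEq m] [DecidableEq n] [Ring R]

/-- When `V * U = 1`, the module `R ^ n` is the direct sum of the range of `U`, which is a copy of
`R ^ m`, and the kernel of `V`. The endomorphism `S` of `R ^ m` is transported to the range of `U`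
and extended by the identity on the kernel of `V`. -/
def extendByIdentity (U : Matrix n m R) (V : Matrix m n R) (hVU : V * U = 1) :
    Matrix m m R →* Matrix n n R where
  toFun S := 1 + U * (S - 1) * V
  map_one' := by simp
  map_mul' S S' := by
    have hcancel : U * (S - 1) * V * (U * (S' - 1) * V) = U * ((S - 1) * (S' - 1)) * V := by
      rw [← Matrix.mul_assoc, ← Matrix.mul_assoc, Matrix.mul_assoc _ V U, hVU]
      simp only [Matrix.mul_one, Matrix.mul_assoc]
    have hsplit : S * S' - 1 = (S - 1) + (S' - 1) + (S - 1) * (S' - 1) := by noncomm_ring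
    simp only [hsplit, mul_add, add_mul, Matrix.mul_add, Matrix.add_mul, hcancel, mul_one, one_mul]
    abel

variable {U : Matrix n m R} {V : Matrix m n R} (hVU : V * U = 1)

theorem extendByIdentity_apply (S : Matrix m m R) :
    extendByIdentity U V hVU S = 1 + U * (S - 1) * V :=
  rfl

theorem extendByIdentity_mul_self (S : Matrix m m R) : extendByIdentity U V hVU S * U = U * S := by
  rw [extendByIdentity_apply, Matrix.add_mul, Matrix.mul_assoc _ V U, hVU, Matrix.mul_one,
    Matrix.mul_sub, Matrix.one_mul, Matrix.mul_one, add_sub_cancel]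

theorem extendByIdentity_mul_of_mul_eq_zero {k : Type*} (S : Matrix m m R) {C : Matrix n k R}
    (hVC : V * C = 0) : extendByIdentity U V hVU S * C = C := by
  rw [extendByIdentity_apply, Matrix.add_mul, Matrix.mul_assoc _ V C, hVC, Matrix.mul_zero,
    Matrix.one_mul, add_zero]

theorem extendByIdentity_injective : Function.Injective (extendByIdentity U V hVU) := by
  have hleft : Function.LeftInverse (fun L ↦ V * (L * U)) (extendByIdentity U V hVU) := fun S ↦ by
    simp only [extendByIdentity_mul_self, ← Matrix.mul_assoc, hVU, Matrix.one_mul]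
  exact hleft.injective

theorem extendByIdentity_mul_mul_eq_self {k : Type*} [Fintype k] {C : Matrix n k R}
    {D : Matrix k n R} {L : Matrix n n R} (h : U * V + C * D = 1) (hLC : L * C = C)
    (hDL : D * L = D) :
    extendByIdentity U V hVU (V * L * U) = L := by
  have hUVL : U * V * L = L - C * D := by
    rw [eq_sub_of_add_eq h, Matrix.sub_mul, Matrix.one_mul, Matrix.mul_assoc, hDL]
  have hLUV : L * (U * V) = U * V * L := by
    rw [hUVL, eq_sub_of_add_eq h, Matrix.mul_sub, Matrix.mul_one, ← Matrix.mul_assoc, hLC]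
  calc extendByIdentity U V hVU (V * L * U)
      = 1 + (U * V * (L * (U * V)) - U * V) := by
        simp only [extendByIdentity_apply, Matrix.mul_sub, Matrix.sub_mul, Matrix.mul_one,
          Matrix.mul_assoc]
    _ = 1 + (U * (V * U) * V * L - U * V) := by rw [hLUV]; simp only [Matrix.mul_assoc]
    _ = 1 + (L - C * D - U * V) := by rw [hVU, Matrix.mul_one, hUVL]
    _ = L := by rw [← h]; abel

end ExtendByIdentity

section Gram

variable {m n k R : Type*} [Fintype m] [Fintype n] [Fintype k] [DecidableEq m] [DecidableEq n]
  [CommRing R] {U : Matrix n m R} {C : Matrix n k R} {H : Matrix m m R}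

theorem mul_eq_one_and_mul_eq_zero_of_add_eq_one {V : Matrix m n R} {D : Matrix k n R}
    (e : n ≃ m ⊕ k) (h : U * V + C * D = 1) : V * U = 1 ∧ V * C = 0 := by
  classical
  rw [← fromCols_mul_fromRows, fromCols_mul_fromRows_eq_one_comm e, fromRows_mul_fromCols,
    ← fromBlocks_one, fromBlocks_inj] at h
  exact ⟨h.1, h.2.1⟩

theorem extendByIdentity_mul_transpose_eq_one_iff (hVU : H * Uᵀ * U = 1)
    (hVC : H * Uᵀ * C = 0) (h : U * (H * Uᵀ) + C * Cᵀ = 1) (S : Matrix m m R) :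
    extendByIdentity U (H * Uᵀ) hVU S * (extendByIdentity U (H * Uᵀ) hVU S)ᵀ = 1 ↔
      S * H * Sᵀ = H := by
  set F := extendByIdentity U (H * Uᵀ) hVU S
  have hFU : F * U = U * S := extendByIdentity_mul_self hVU S
  have hFC : F * C = C := extendByIdentity_mul_of_mul_eq_zero hVU S hVC
  have hUV : Uᵀ * (H * Uᵀ)ᵀ = 1 := by rw [← transpose_mul, hVU, transpose_one]
  have hFF : F * Fᵀ = U * (S * H * Sᵀ) * Uᵀ + C * Cᵀ := by
    calc F * Fᵀ = F * (U * (H * Uᵀ) + C * Cᵀ) * Fᵀ := by rw [h, Matrix.mul_one]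
      _ = F * U * H * (F * U)ᵀ + F * C * (F * C)ᵀ := by
        simp only [transpose_mul, Matrix.mul_add, Matrix.add_mul, Matrix.mul_assoc]
      _ = U * (S * H * Sᵀ) * Uᵀ + C * Cᵀ := by
        simp only [hFU, hFC, transpose_mul, Matrix.mul_assoc]
  have hcompress (X : Matrix m m R) : (H * Uᵀ) * (U * X * Uᵀ) * (H * Uᵀ)ᵀ = X := by
    rw [Matrix.mul_assoc, Matrix.mul_assoc _ _ (H * Uᵀ)ᵀ, hUV, Matrix.mul_one,
      ← Matrix.mul_assoc, hVU, Matrix.one_mul]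
  rw [hFF, ← h, add_left_inj, ← Matrix.mul_assoc U H]
  refine ⟨fun hX ↦ ?_, fun hX ↦ by rw [hX]⟩
  rw [← hcompress (S * H * Sᵀ), hX, hcompress]

theorem exists_extendByIdentity_eq (hVU : H * Uᵀ * U = 1) (h : U * (H * Uᵀ) + C * Cᵀ = 1)
    {L : Matrix n n R} (hL : Lᵀ * L = 1) (hLC : L * C = C) :
    ∃ S, extendByIdentity U (H * Uᵀ) hVU S = L := by
  have hCL : Cᵀ * L = Cᵀ := by
    conv_lhs => rw [← hLC, transpose_mul, Matrix.mul_assoc, hL, Matrix.mul_one]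
  exact ⟨_, extendByIdentity_mul_mul_eq_self hVU h hLC hCL⟩

end Gram

section AllOnes

variable {n R : Type*} [Fintype n] [DecidableEq n] [CommRing R] [IsReduced R] [CharP R 2]

theorem mulVec_one_of_mem_orthogonalGroup {L : Matrix n n R} (hL : L ∈ orthogonalGroup n R) :
    L *ᵥ 1 = 1 := by
  have hLT : Lᵀ * L = 1 := (mem_orthogonalGroup_iff' n R).mp hL
  have hT : Lᵀ *ᵥ 1 = 1 := by
    ext j
    have hcol : ∑ i, L i j * L i j = 1 := by
      simpa [Matrix.mul_apply] using congr_fun₂ hLT j j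
    have hsum : ∑ i, L i j = 1 := frobenius_inj R 2 <| by
      rw [frobenius_def, CharTwo.sum_sq, map_one, ← hcol]
      simp only [sq]
    simpa [mulVec, dotProduct] using hsum
  calc L *ᵥ 1 = L *ᵥ (Lᵀ *ᵥ 1) := by rw [hT]
    _ = 1 := by rw [mulVec_mulVec, (mem_orthogonalGroup_iff n R).mp hL, one_mulVec]

end AllOnes

section FixedVectors

variable {n : Type*} (R : Type*) [DecidableEq n] [CommRing R]

/-- The matrix whose columns are the basis vector at `c` and its difference from the all-ones
vector. In characteristic two they are orthonormal when the size of `n` is even. -/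
def fixedCols (c : n) : Matrix n (Unit ⊕ Unit) R :=
  fromCols (replicateCol Unit (Pi.single c 1)) (replicateCol Unit (1 - Pi.single c 1))

variable {R}

theorem fixedCols_mul_transpose_apply (c x y : n) :
    (fixedCols R c * (fixedCols R c)ᵀ) x y = if x = c ↔ y = c then 1 else 0 := by
  by_cases hx : x = c <;> by_cases hy : y = c <;>
    simp [fixedCols, Matrix.mul_apply, hx, hy]

theorem mul_fixedCols_eq_iff_of_mem_orthogonalGroup [Fintype n] [IsReduced R] [CharP R 2]
    {L : Matrix n n R} (hL : L ∈ orthogonalGroup n R) (c : n) :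
    L * fixedCols R c = fixedCols R c ↔ L *ᵥ Pi.single c 1 = Pi.single c 1 := by
  rw [fixedCols, mul_fromCols, ← replicateCol_mulVec, ← replicateCol_mulVec, fromCols_inj.eq_iff]
  simp [mulVec_sub, mulVec_one_of_mem_orthogonalGroup hL]

end FixedVectors

section SymplecticBasis

theorem exists_add_transpose_add_one_eq_ones (l R : Type*) [Finite l] [DecidableEq l] [Semiring R] :
    ∃ T : Matrix l l R, T + Tᵀ + 1 = of fun _ _ ↦ 1 := by
  obtain ⟨N, ⟨f⟩⟩ := Finite.exists_equiv_fin l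
  refine ⟨of fun i j ↦ if f i < f j then 1 else 0, ?_⟩
  ext i j
  rcases lt_trichotomy (f i) (f j) with hij | hij | hij
  · have hne : i ≠ j := ne_of_apply_ne f hij.ne
    simp [hij, hij.not_gt, hne]
  · obtain rfl : i = j := f.injective hij
    simp
  · have hne : i ≠ j := ne_of_apply_ne f hij.ne'
    simp [hij, hij.not_gt, hne]

variable {l n R : Type*} [DecidableEq l] [CommRing R]

/-- The vectors `aⱼ = eⱼ + fⱼ` and `bⱼ = fⱼ + d + ∑ i, T i j • (eᵢ + fᵢ)`, as columns, where
`e`, `f` and `d`, `c` are the standard basis indexed by `(l ⊕ l) ⊕ (Unit ⊕ Unit)`. When `T + Tᵀ + 1`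
is the all-ones matrix and the characteristic is two, they form a symplectic basis of the orthogonal
complement of `c` and the all-ones vector. -/
def symplecticBasis (T : Matrix l l R) : Matrix ((l ⊕ l) ⊕ (Unit ⊕ Unit)) (l ⊕ l) R :=
  fromRows (fromBlocks 1 T 1 (T + 1)) (fromBlocks 0 (of fun _ _ ↦ 1) 0 0)

section Completeness

variable [Fintype l] [CharP R 2] {T : Matrix l l R} (hT : T + Tᵀ + 1 = of fun _ _ ↦ 1)
include hT

theorem symplecticBasis_mul_J_mul_transpose_apply (x y : (l ⊕ l) ⊕ (Unit ⊕ Unit)) :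
    (symplecticBasis T * (J l R * (symplecticBasis T)ᵀ)) x y =
      if x = y ∨ x = Sum.inr (Sum.inr ()) ∨ y = Sum.inr (Sum.inr ()) then 0 else 1 := by
  have hT_apply (i j : l) : T i j + T j i + (if i = j then 1 else 0) = 1 := by
    simpa [Matrix.one_apply] using congr_fun₂ hT i j
  -- The product is `∑ j, (bⱼ aⱼᵀ - aⱼ bⱼᵀ)`, and `aⱼ` is supported on `eⱼ` and `fⱼ`, so that no sum
  -- survives in any entry: what remains is `T x y`, `T y x` and Kronecker deltas.
  rcases x with (x | x) | (x | x) <;> rcases y with (y | y) | (y | y) <;>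
    simp [symplecticBasis, J, Matrix.mul_apply, Matrix.one_apply]
  all_goals grind

theorem symplecticBasis_mul_J_mul_transpose_add_fixedCols :
    symplecticBasis T * (J l R * (symplecticBasis T)ᵀ) +
      fixedCols R (Sum.inr (Sum.inr ())) * (fixedCols R (Sum.inr (Sum.inr ())))ᵀ = 1 := by
  ext x y
  rw [Matrix.add_apply, symplecticBasis_mul_J_mul_transpose_apply hT, fixedCols_mul_transpose_apply,
    Matrix.one_apply]
  grind

end Completeness

theorem exists_mul_J_mul_transpose_add_fixedCols [Fintype l] [Fintype n] [DecidableEq n] [CharP R 2]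
    (hn : Fintype.card n = 2 * Fintype.card l + 2) (c : n) :
    ∃ U : Matrix n (l ⊕ l) R, U * (J l R * Uᵀ) + fixedCols R c * (fixedCols R c)ᵀ = 1 := by
  obtain ⟨T, hT⟩ := exists_add_transpose_add_one_eq_ones l R
  obtain ⟨e, he⟩ : ∃ e : n ≃ (l ⊕ l) ⊕ (Unit ⊕ Unit), e c = Sum.inr (Sum.inr ()) :=
    ⟨(Fintype.equivOfCardEq (by simp [hn, two_mul])).setValue c _, Equiv.setValue_eq ..⟩
  have hC : fixedCols R c = (fixedCols R (Sum.inr (Sum.inr ()))).submatrix e id := by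
    ext x (j | j) <;> simp [fixedCols, ← he, Pi.single_apply]
  refine ⟨(symplecticBasis T).submatrix e id, ?_⟩
  rw [hC]
  exact (congrArg (·.submatrix e e) <| symplecticBasis_mul_J_mul_transpose_add_fixedCols hT).trans
    (submatrix_one_equiv e)

end SymplecticBasis

end OrthogonalStabilizer

open OrthogonalStabilizer in
theorem stmt_8_general {l n R : Type*} [Fintype l] [DecidableEq l] [Fintype n] [DecidableEq n]
    [CommRing R] [IsReduced R] [CharP R 2] (hn : Fintype.card n = 2 * Fintype.card l + 2) (c : n) :
    ∃ H : Subgroup (orthogonalGroup n R),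
      (H : Set (orthogonalGroup n R)) =
        {L : orthogonalGroup n R | (L : Matrix n n R) *ᵥ Pi.single c 1 = Pi.single c 1} ∧
      Nonempty (H ≃* symplecticGroup l R) := by
  obtain ⟨U, hU⟩ := exists_mul_J_mul_transpose_add_fixedCols (R := R) hn c
  obtain ⟨hVU, hVC⟩ := mul_eq_one_and_mul_eq_zero_of_add_eq_one
    (Fintype.equivOfCardEq (by simp [hn, two_mul])) hU
  have horth (S) : extendByIdentity U (J l R * Uᵀ) hVU S ∈ orthogonalGroup n R ↔
      S ∈ symplecticGroup l R := by
    rw [mem_orthogonalGroup_iff, SymplecticGroup.mem_iff,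
      extendByIdentity_mul_transpose_eq_one_iff hVU hVC hU]
  let φ : symplecticGroup l R →* orthogonalGroup n R :=
    ((extendByIdentity U (J l R * Uᵀ) hVU).comp (symplecticGroup l R).subtype).codRestrict _
      fun S ↦ (horth S).mpr S.2
  have hφ : Function.Injective φ := fun S S' h ↦
    Subtype.ext (extendByIdentity_injective hVU (congrArg Subtype.val h))
  refine ⟨φ.range, Set.ext fun L ↦ ?_, ⟨(MonoidHom.ofInjective hφ).symm⟩⟩
  rw [Set.mem_ofPred_eq, ← mul_fixedCols_eq_iff_of_mem_orthogonalGroup L.2]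
  constructor
  · rintro ⟨S, rfl⟩
    exact extendByIdentity_mul_of_mul_eq_zero hVU S.1 hVC
  · intro hLC
    obtain ⟨S, hS⟩ := exists_extendByIdentity_eq hVU hU ((mem_orthogonalGroup_iff' n R).mp L.2) hLC
    exact ⟨⟨S, (horth S).mp (hS ▸ L.2)⟩, Subtype.ext hS⟩

/-- For `n = 2r + 2`, the stabilizer of the last standard basis vector
`c = e_n` in the isometry group `Iso(V_n)` of `V_n = (ℤ/2)ⁿ` with its standard
bilinear form (the orthogonal group of `n × n` matrices over `ℤ/2`) is
isomorphic to the symplectic group `Sp(2r, ℤ/2)`. -/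
theorem stmt_8 (r : ℕ) (hr : 1 ≤ r)
    (c : Fin (2 * r + 2) → ZMod 2)
    (hc : c = fun i : Fin (2 * r + 2) => if (i : ℕ) = 2 * r + 1 then (1 : ZMod 2) else 0) :
    ∃ H : Subgroup (Matrix.orthogonalGroup (Fin (2 * r + 2)) (ZMod 2)),
      (H : Set (Matrix.orthogonalGroup (Fin (2 * r + 2)) (ZMod 2))) =
        {L : Matrix.orthogonalGroup (Fin (2 * r + 2)) (ZMod 2) |
          (L : Matrix (Fin (2 * r + 2)) (Fin (2 * r + 2)) (ZMod 2)).mulVec c = c} ∧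
      Nonempty (H ≃* Matrix.symplecticGroup (Fin r) (ZMod 2)) := by
  obtain rfl : c = Pi.single (Fin.last _) 1 := by
    ext i
    simp [hc, Pi.single_apply, Fin.ext_iff]
  exact stmt_8_general (by simp) (Fin.last _)
end

section
/- Let r ≥ 1 and m = 2r. Let U₁ = diag(I_{2r−2}, [[1,0],[1,−1]]) and U₂ = diag(I_{2r−2}, [[−1,0],[−1,1]]) in GL(2r, ℂ). Then there is no M ∈ GL(2r, ℂ) such that M commutes with A_i and B_i for all 1 ≤ i ≤ r, M commutes with C_j for all 1 ≤ j ≤ r − 1, and M U₂ M⁻¹ = U₁. -/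
/-- `U₁ = diag(I_{2r-2}, [[1,0],[1,-1]])` as a `2r × 2r` complex matrix. -/
def U1mat (r : ℕ) : Matrix (Fin (2 * r)) (Fin (2 * r)) ℂ :=
  Matrix.of fun p q =>
    if p = q then (if (p : ℕ) = 2 * r - 1 then -1 else 1)
    else if (p : ℕ) = 2 * r - 1 ∧ (q : ℕ) = 2 * r - 2 then 1 else 0

/-- `U₂ = diag(I_{2r-2}, [[-1,0],[-1,1]])` as a `2r × 2r` complex matrix. -/
def U2mat (r : ℕ) : Matrix (Fin (2 * r)) (Fin (2 * r)) ℂ :=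
  Matrix.of fun p q =>
    if p = q then (if (p : ℕ) = 2 * r - 2 then -1 else 1)
    else if (p : ℕ) = 2 * r - 1 ∧ (q : ℕ) = 2 * r - 2 then -1 else 0

/-!
The last basis vector `e` spans the image of `B_r - 1`, so every `M` commuting with `B_r` maps `e`
to a multiple of itself. Now `U₂` fixes `e` while `U₁` negates it, and `M U₂ = U₁ M` forces
`M e = -M e`; hence `M e = 0` and `M` is not invertible.
-/

open Matrix

section

variable {n R : Type*} [Fintype n] [CommRing R]

theorem mulVec_mulVec_eq_smul_of_semiconjBy {M A B : Matrix n n R} (h : SemiconjBy M A B)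
    {v : n → R} {μ : R} (hv : A *ᵥ v = μ • v) : B *ᵥ (M *ᵥ v) = μ • M *ᵥ v := by
  rw [mulVec_mulVec, ← h.eq, ← mulVec_mulVec, hv, mulVec_smul]

theorem mulVec_single_one_of_commute_transvection [DecidableEq n] [NoZeroDivisors R]
    {i j : n} {c : R} (hc : c ≠ 0) {M : Matrix n n R} (hM : Commute M (transvection i j c)) :
    M *ᵥ Pi.single i 1 = M i i • Pi.single i 1 := by
  have hsingle : M * single i j c = single i j c * M := by
    simpa only [transvection, mul_add, add_mul, mul_one, one_mul, add_right_inj] using hM.eq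
  have hcol : ∀ k, k ≠ i → M k i = 0 := fun k hk ↦ by
    have hentry := congr_fun₂ hsingle k j
    rw [mul_single_apply_same, single_mul_apply_of_ne _ _ _ _ _ hk] at hentry
    exact (mul_eq_zero.mp hentry).resolve_right hc
  ext k
  obtain rfl | hk := eq_or_ne k i
  · simp
  · simp [hk, hcol k hk]

end

theorem Bmat_eq_transvection_s10 {m k : ℕ} {p q : Fin m} (hp : (p : ℕ) + 1 = 2 * k)
    (hq : (q : ℕ) + 2 = 2 * k) : Bmat m k = transvection p q (-1) := by
  ext s t
  simp only [Bmat, of_apply, transvection, Matrix.add_apply, one_apply, single_apply, Fin.ext_iff]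
  grind

theorem U1mat_mulVec_single_last {r : ℕ} {p : Fin (2 * r)} (hp : (p : ℕ) + 1 = 2 * r) :
    U1mat r *ᵥ Pi.single p 1 = -Pi.single p 1 := by
  ext s
  simp only [mulVec_single_one, col_apply, U1mat, of_apply, Pi.neg_apply, Pi.single_apply,
    Fin.ext_iff]
  grind

theorem U2mat_mulVec_single_last {r : ℕ} {p : Fin (2 * r)} (hp : (p : ℕ) + 1 = 2 * r) :
    U2mat r *ᵥ Pi.single p 1 = Pi.single p 1 := by
  ext s
  simp only [mulVec_single_one, col_apply, U2mat, of_apply, Pi.single_apply, Fin.ext_iff]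
  grind

theorem stmt_10_general {r : ℕ} (hr : 1 ≤ r) {M : Matrix (Fin (2 * r)) (Fin (2 * r)) ℂ}
    (hM : IsUnit M) (hB : Commute M (Bmat (2 * r) r)) : M * U2mat r * M⁻¹ ≠ U1mat r := by
  intro hU
  let p : Fin (2 * r) := ⟨2 * r - 1, by omega⟩
  let q : Fin (2 * r) := ⟨2 * r - 2, by omega⟩
  have hp : (p : ℕ) + 1 = 2 * r := by grind
  have hq : (q : ℕ) + 2 = 2 * r := by grind
  let e : Fin (2 * r) → ℂ := Pi.single p 1
  have hMe : M *ᵥ e = M p p • e := by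
    rw [Bmat_eq_transvection_s10 hp hq] at hB
    exact mulVec_single_one_of_commute_transvection (by norm_num) hB
  have hfix : U1mat r *ᵥ (M *ᵥ e) = M *ᵥ e := by
    have hsemi : SemiconjBy M (U2mat r) (U1mat r) := by
      rw [SemiconjBy, ← hU, nonsing_inv_mul_cancel_right _ _ ((isUnit_iff_isUnit_det M).mp hM)]
    have heigen : U2mat r *ᵥ e = (1 : ℂ) • e := by rw [U2mat_mulVec_single_last hp, one_smul]
    rw [mulVec_mulVec_eq_smul_of_semiconjBy hsemi heigen, one_smul]
  have hneg : U1mat r *ᵥ (M *ᵥ e) = -(M *ᵥ e) := by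
    rw [hMe, mulVec_smul, U1mat_mulVec_single_last hp, smul_neg]
  have hzero : M *ᵥ e = 0 := self_eq_neg.mp (hfix.symm.trans hneg)
  have he : e = 0 := mulVec_injective_of_isUnit hM (hzero.trans (mulVec_zero M).symm)
  exact one_ne_zero (Pi.single_eq_zero_iff.mp he)

/-- There is no invertible `M` commuting with all `A_i, B_i` (`1 ≤ i ≤ r`) and
`C_j` (`1 ≤ j ≤ r-1`) with `M U₂ M⁻¹ = U₁`. -/
theorem stmt_10 (r : ℕ) (hr : 1 ≤ r) :
    ¬ ∃ M : Matrix (Fin (2 * r)) (Fin (2 * r)) ℂ, IsUnit M ∧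
      (∀ i, 1 ≤ i → i ≤ r →
        M * Amat (2 * r) i = Amat (2 * r) i * M ∧
        M * Bmat (2 * r) i = Bmat (2 * r) i * M) ∧
      (∀ j, 1 ≤ j → j ≤ r - 1 → M * Cmat (2 * r) j = Cmat (2 * r) j * M) ∧
      M * U2mat r * M⁻¹ = U1mat r := by
  rintro ⟨M, hM, hAB, -, hU⟩
  exact stmt_10_general hr hM (hAB r hr le_rfl).2 hU
end
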